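/- arXiv:2206.09918 — 5 statements merged into one kernel-verified Lean document; each statement's English description precedes it below -/
import Mathlib

section
/- Let n be a positive integer and let G be a distribution on [0,1] that is a mean-preserving contraction of F and whose support contains at most n points. Then there exist 0 = d₀ ≤ d₁ ≤ … ≤ d_m = 1 with m ≤ n such that for each i = 0,…,m−1, ∫₀ˣ G(s) ds ≤ ∫₀ˣ F(s) ds for all x ∈ [d_i, d_{i+1}], and the inequality holds with equality only at x = d_i and x = d_{i+1}. -/
open MeasureTheory Set

noncomputable section

namespace VerifiableDisclosure

/-- The measure on `[0,1]` induced by a density `f`. -/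
def densMeasure (f : ℝ → ℝ) : Measure ℝ :=
  (volume.restrict (Icc (0:ℝ) 1)).withDensity (fun x => ENNReal.ofReal (f x))

/-- `f` is a strictly positive density on `[0,1]` inducing a probability measure. -/
structure IsPrior (f : ℝ → ℝ) : Prop where
  meas : Measurable f
  pos : ∀ x ∈ Icc (0:ℝ) 1, 0 < f x
  prob : densMeasure f univ = 1

/-- The CDF of a measure on `ℝ`. -/
def mcdf (μ : Measure ℝ) (x : ℝ) : ℝ := (μ (Iic x)).toReal

/-- The support of a measure on `ℝ`: points all of whose neighborhoods have positive mass. -/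
def msupport (μ : Measure ℝ) : Set ℝ := {x | ∀ U ∈ nhds x, μ U ≠ 0}

/-- `G` is a distribution on `[0,1]` that is a mean-preserving contraction of `μ`. -/
def IsMPC (μ G : Measure ℝ) : Prop :=
  IsProbabilityMeasure G ∧ msupport G ⊆ Icc (0:ℝ) 1 ∧
    (∀ x ∈ Icc (0:ℝ) 1, (∫ s in (0:ℝ)..x, mcdf G s) ≤ ∫ s in (0:ℝ)..x, mcdf μ s) ∧
    (∫ s in (0:ℝ)..(1:ℝ), mcdf G s) = ∫ s in (0:ℝ)..(1:ℝ), mcdf μ s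

/-- Conditional mean of `μ` on the set `B`. -/
def condMean (μ : Measure ℝ) (B : Set ℝ) : ℝ := (∫ ω in B, ω ∂μ) / (μ B).toReal

/-- `G` is a bi-pooling distribution relative to the prior `μ`. -/
def IsBiPooling (μ G : Measure ℝ) : Prop :=
  IsMPC μ G ∧
    ∃ (ι : Type) (a b : ι → ℝ),
      (∀ i, (0:ℝ) ≤ a i ∧ a i ≤ b i ∧ b i ≤ 1) ∧
      (Pairwise fun i j => Disjoint (Icc (a i) (b i)) (Icc (a j) (b j))) ∧
      (∀ i, G (Icc (a i) (b i)) = μ (Icc (a i) (b i))) ∧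
      (∀ i, (msupport (G.restrict (Icc (a i) (b i)))).encard ≤ 2) ∧
      (∀ s : Set ℝ, MeasurableSet s → s ⊆ Icc (0:ℝ) 1 \ (⋃ i, Icc (a i) (b i)) → G s = μ s)

/-- `G` is a bi-pooling solution of the information design problem with value function `u`. -/
def IsBiPoolingSolution (μ G : Measure ℝ) (u : ℝ → ℝ) : Prop :=
  IsBiPooling μ G ∧ ∀ G' : Measure ℝ, IsMPC μ G' → (∫ x, u x ∂G') ≤ ∫ x, u x ∂G

/-- A deterministic representation: closed sets covering `[0,1]`, pairwise `μ`-null overlaps. -/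
def IsDetRep (μ : Measure ℝ) (n : ℕ) (B : ℕ → Set ℝ) : Prop :=
  (∀ i < n, IsClosed (B i) ∧ B i ⊆ Icc (0:ℝ) 1) ∧
    (⋃ i ∈ Finset.range n, B i) = Icc (0:ℝ) 1 ∧
    (∀ i < n, ∀ j < n, i ≠ j → μ (B i ∩ B j) = 0)

/-- Incentive compatibility of a deterministic representation. -/
def IsIC (n : ℕ) (γ : ℕ → ℝ) (B : ℕ → Set ℝ) : Prop :=
  ∀ i < n, Icc (γ i) (γ (i+1)) ⊆ ⋃ j ∈ Finset.Ico i n, B j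

/-- Obedience of a deterministic representation. -/
def IsObedient (μ : Measure ℝ) (n : ℕ) (γ : ℕ → ℝ) (B : ℕ → Set ℝ) : Prop :=
  ∀ i < n, μ (B i) ≠ 0 → condMean μ (B i) ∈ Icc (γ i) (γ (i+1))

/-- `B` is a deterministic representation of the distribution `G`:
`G` places mass `μ (B i)` on the conditional mean of `B i`. -/
def IsDetRepOf (μ : Measure ℝ) (n : ℕ) (B : ℕ → Set ℝ) (G : Measure ℝ) : Prop :=
  IsDetRep μ n B ∧
    G = ∑ i ∈ Finset.range n, (μ (B i)) • Measure.dirac (condMean μ (B i))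

/-- `{BL, BH}` is a nested intervals pair. -/
def IsNestedPair (BL BH : Set ℝ) : Prop :=
  ∃ w₁ b₁ b₂ w₂ : ℝ, w₁ < b₁ ∧ b₁ ≤ b₂ ∧ b₂ < w₂ ∧
    BL = Icc b₁ b₂ ∧ BH = Icc w₁ b₁ ∪ Icc b₂ w₂

/-- A canonical representation of `G`: a deterministic representation of `G` in which every
element with nonempty interior is either an interval, or the outer member of a nested
intervals pair whose inner member has a lower index. -/
def IsCanonicalRep (μ : Measure ℝ) (n : ℕ) (B : ℕ → Set ℝ) (G : Measure ℝ) : Prop :=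
  IsDetRepOf μ n B G ∧
    ∀ i < n, (interior (B i)).Nonempty →
      (∃ c d : ℝ, B i = Icc c d) ∨ ∃ L < i, IsNestedPair (B L) (B i)

/-- Index `i` is skipped: `B i` has empty interior. -/
def Skipped (B : ℕ → Set ℝ) (i : ℕ) : Prop := interior (B i) = ∅

/-- A skipped index `i` is harmlessly skipped if `A i ⊆ ⋃_{k > i} B k`. -/
def HarmlesslySkipped (n : ℕ) (γ : ℕ → ℝ) (B : ℕ → Set ℝ) (i : ℕ) : Prop :=
  Icc (γ i) (γ (i+1)) ⊆ ⋃ k ∈ Finset.Ioo i n, B k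

/-- Laminar representation property. -/
def IsLaminar (n : ℕ) (B : ℕ → Set ℝ) : Prop :=
  ∀ i < n, B i = closure ((convexHull ℝ (B i)) \ ⋃ j ∈ Finset.range i, convexHull ℝ (B j))

/-- Sender's ex ante payoff of a deterministic representation. -/
def payoff (μ : Measure ℝ) (n : ℕ) (v : ℕ → ℝ) (B : ℕ → Set ℝ) : ℝ :=
  ∑ i ∈ Finset.range n, v i * (μ (B i)).toReal

/-- Conditional CDF of the prior with density `f` on the interval `[w₁, w₂]`. -/
def condCDF' (f : ℝ → ℝ) (w₁ w₂ x : ℝ) : ℝ :=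
  (mcdf (densMeasure f) x - mcdf (densMeasure f) w₁) /
    (mcdf (densMeasure f) w₂ - mcdf (densMeasure f) w₁)

/-- `{zL, zH}` is a feasible bi-pooling support for the interval `[w₁, w₂]`. -/
def FeasibleSupport (f : ℝ → ℝ) (w₁ w₂ zL zH : ℝ) : Prop :=
  ∃ G : Measure ℝ, IsProbabilityMeasure G ∧ msupport G ⊆ {zL, zH} ∧
    (∀ x ∈ Icc w₁ w₂, (∫ s in w₁..x, mcdf G s) ≤ ∫ s in w₁..x, condCDF' f w₁ w₂ s) ∧
    (∫ s in w₁..w₂, mcdf G s) = ∫ s in w₁..w₂, condCDF' f w₁ w₂ s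


lemma mcdf_mono (μ : Measure ℝ) [IsFiniteMeasure μ] : Monotone (mcdf μ) := by
  intro a b hab
  exact ENNReal.toReal_mono (measure_ne_top μ _) (measure_mono (Iic_subset_Iic.2 hab))

lemma gap_null (G : Measure ℝ) (x y : ℝ) (h : ∀ s ∈ msupport G, s ∉ Ioo x y) :
    G (Ioo x y) = 0 := by
  apply measure_null_of_locally_null
  intro s hs
  have h1 : s ∉ msupport G := fun hh => h s hh hs
  simp only [msupport, mem_setOf_eq, not_forall, not_not] at h1
  obtain ⟨U, hU, hU0⟩ := h1
  exact ⟨U, mem_nhdsWithin_of_mem_nhds hU, hU0⟩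

lemma gap_const (G : Measure ℝ) (x y : ℝ) (h : G (Ioo x y) = 0) (s : ℝ) (hs : s ∈ Ico x y) :
    mcdf G s = mcdf G x := by
  unfold mcdf
  congr 1
  apply le_antisymm _ (measure_mono (Iic_subset_Iic.2 hs.1))
  have hsub : Iic s ⊆ Iic x ∪ Ioo x y := by
    intro t ht
    rcases le_or_gt t x with h1 | h1
    · exact Or.inl h1
    · exact Or.inr ⟨h1, lt_of_le_of_lt ht hs.2⟩
  calc G (Iic s) ≤ G (Iic x ∪ Ioo x y) := measure_mono hsub
    _ ≤ G (Iic x) + G (Ioo x y) := measure_union_le _ _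
    _ = G (Iic x) := by rw [h, add_zero]

lemma prior_strict (f : ℝ → ℝ) (hf : IsPrior f) (a b : ℝ) (ha : 0 ≤ a) (hab : a < b)
    (hb : b ≤ 1) : mcdf (densMeasure f) a < mcdf (densMeasure f) b := by
  haveI : IsProbabilityMeasure (densMeasure f) := ⟨hf.prob⟩
  unfold mcdf
  refine ENNReal.toReal_strict_mono (measure_ne_top _ _) ?_
  have hU : Iic b = Iic a ∪ Ioc a b := (Iic_union_Ioc_eq_Iic hab.le).symm
  rw [hU, measure_union (by
    rw [Set.disjoint_left]; intro t h1 h2; exact absurd h2.1 (not_lt.2 h1)) measurableSet_Ioc]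
  refine ENNReal.lt_add_right (measure_ne_top _ _) ?_
  intro h0
  unfold densMeasure at h0
  rw [withDensity_apply _ measurableSet_Ioc, lintegral_eq_zero_iff (by
    exact hf.meas.ennreal_ofReal), Measure.restrict_restrict measurableSet_Ioc] at h0
  have hI : Ioc a b ∩ Icc 0 1 = Ioc a b := by
    apply inter_eq_left.2
    intro t ht
    exact ⟨ha.trans ht.1.le, ht.2.trans hb⟩
  rw [hI] at h0
  have h1 := (ae_restrict_iff' measurableSet_Ioc).1 h0
  have h2 : volume (Ioc a b) = 0 := by
    refine measure_mono_null ?_ h1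
    intro t ht hh
    have h3 := hh ht
    have h4 := hf.pos t ⟨ha.trans ht.1.le, ht.2.trans hb⟩
    simp only [Pi.zero_apply, ENNReal.ofReal_eq_zero] at h3
    linarith
  rw [Real.volume_Ioc, ENNReal.ofReal_eq_zero] at h2
  linarith

lemma exists_support_between (f : ℝ → ℝ) (hf : IsPrior f)
    (G : Measure ℝ) (hG : IsMPC (densMeasure f) G) (x y : ℝ) (hx : 0 ≤ x) (hxy : x < y)
    (hy : y ≤ 1)
    (ex : (∫ s in (0:ℝ)..x, mcdf G s) = ∫ s in (0:ℝ)..x, mcdf (densMeasure f) s)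
    (ey : (∫ s in (0:ℝ)..y, mcdf G s) = ∫ s in (0:ℝ)..y, mcdf (densMeasure f) s) :
    ∃ s ∈ msupport G, s ∈ Ioo x y := by
  by_contra! hcon
  haveI : IsProbabilityMeasure (densMeasure f) := ⟨hf.prob⟩
  haveI := hG.1
  have hc := gap_const G x y (gap_null G x y hcon)
  have iF : ∀ a b, IntervalIntegrable (mcdf (densMeasure f)) volume a b :=
    fun a b => (mcdf_mono _).intervalIntegrable
  have iG : ∀ a b, IntervalIntegrable (mcdf G) volume a b :=
    fun a b => (mcdf_mono _).intervalIntegrable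
  obtain ⟨p, hp1, hp2⟩ := exists_between hxy
  have hp := hG.2.2.1 p ⟨by linarith, by linarith⟩
  have aG1 := intervalIntegral.integral_add_adjacent_intervals (iG 0 x) (iG x p)
  have aG2 := intervalIntegral.integral_add_adjacent_intervals (iG 0 p) (iG p y)
  have aF1 := intervalIntegral.integral_add_adjacent_intervals (iF 0 x) (iF x p)
  have aF2 := intervalIntegral.integral_add_adjacent_intervals (iF 0 p) (iF p y)
  rcases lt_or_ge (mcdf (densMeasure f) p) (mcdf G x) with h | h
  · have h1 : 0 < ∫ s in x..p, (mcdf G s - mcdf (densMeasure f) s) := by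
      refine intervalIntegral.intervalIntegral_pos_of_pos_on ((iG _ _).sub (iF _ _)) ?_ hp1
      intro s hs
      rw [hc s ⟨hs.1.le, hs.2.trans hp2⟩]
      have := mcdf_mono (densMeasure f) hs.2.le
      linarith
    rw [intervalIntegral.integral_sub (iG _ _) (iF _ _)] at h1
    linarith
  · have h1 : 0 < ∫ s in p..y, (mcdf (densMeasure f) s - mcdf G s) := by
      refine intervalIntegral.intervalIntegral_pos_of_pos_on ((iF _ _).sub (iG _ _)) ?_ hp2
      intro s hs
      rw [hc s ⟨(hp1.trans hs.1).le, hs.2⟩]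
      have := prior_strict f hf p s (by linarith) hs.1 (by linarith [hs.2])
      linarith
    rw [intervalIntegral.integral_sub (iF _ _) (iG _ _)] at h1
    linarith

lemma card_interlace (Z S : Set ℝ) (n : ℕ) (hS : S.encard ≤ (n : ℕ∞))
    (h : ∀ x ∈ Z, ∀ y ∈ Z, x < y → ∃ s ∈ S, s ∈ Ioo x y) :
    Z.encard ≤ ((n + 1 : ℕ) : ℕ∞) := by
  by_contra! hcon
  have h2 : ((n + 2 : ℕ) : ℕ∞) ≤ Z.encard := by
    have := Order.add_one_le_of_lt hcon
    exact_mod_cast this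
  obtain ⟨T, hTZ, hT⟩ := Set.exists_subset_encard_eq h2
  have hfin : T.Finite := Set.finite_of_encard_eq_coe hT
  have hcard : hfin.toFinset.card = n + 1 + 1 := by
    have := hfin.encard_eq_coe_toFinset_card
    rw [hT] at this
    exact_mod_cast this.symm
  let e := hfin.toFinset.orderEmbOfFin hcard
  have he : ∀ i, e i ∈ Z := fun i => hTZ (by
    have := Finset.orderEmbOfFin_mem hfin.toFinset hcard i
    exact hfin.mem_toFinset.1 this)
  have key : ∀ i : Fin (n+1), ∃ s ∈ S, s ∈ Ioo (e i.castSucc) (e i.succ) := fun i =>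
    h _ (he _) _ (he _) (e.strictMono (Fin.castSucc_lt_succ))
  choose s hsS hs using key
  have hmono : StrictMono s := by
    intro i j hij
    have h3 : e i.succ ≤ e j.castSucc := e.monotone (by
      rw [Fin.le_def]; simpa using hij)
    exact (hs i).2.trans_le (h3.trans (hs j).1.le)
  have hle : (range s).encard ≤ S.encard := encard_le_encard (range_subset_iff.2 hsS)
  have hr : (range s).encard = ((n+1 : ℕ) : ℕ∞) := by
    rw [← image_univ, hmono.injective.encard_image, encard_univ]; simp
  rw [hr] at hle
  have := hle.trans hS
  have h5 : n + 1 ≤ n := by exact_mod_cast this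
  omega

/-- an MPC of the prior with at most `n` support points partitions
`[0,1]` into at most `n` intervals on which the MPC constraint binds only at the
endpoints. -/
theorem mpc_partition_intervals
    (f : ℝ → ℝ) (hf : IsPrior f) (n : ℕ) (hn : 0 < n)
    (G : Measure ℝ) (hG : IsMPC (densMeasure f) G)
    (hsupp : (msupport G).encard ≤ (n : ℕ∞)) :
    ∃ m ≤ n, ∃ d : ℕ → ℝ, d 0 = 0 ∧ d m = 1 ∧ (∀ i < m, d i ≤ d (i+1)) ∧
      ∀ i < m,
        (∀ x ∈ Icc (d i) (d (i+1)),
          (∫ s in (0:ℝ)..x, mcdf G s) ≤ ∫ s in (0:ℝ)..x, mcdf (densMeasure f) s) ∧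
        (∀ x ∈ Icc (d i) (d (i+1)),
          (∫ s in (0:ℝ)..x, mcdf G s) = (∫ s in (0:ℝ)..x, mcdf (densMeasure f) s) →
            x = d i ∨ x = d (i+1)) := by
  set Z : Set ℝ := {x | x ∈ Icc (0:ℝ) 1 ∧
    (∫ s in (0:ℝ)..x, mcdf G s) = ∫ s in (0:ℝ)..x, mcdf (densMeasure f) s} with hZ
  have hZ0 : (0:ℝ) ∈ Z := ⟨by simp, by simp⟩
  have hZ1 : (1:ℝ) ∈ Z := ⟨by simp, hG.2.2.2⟩
  have hcard := card_interlace Z (msupport G) n hsupp (fun x hx y hy hxy =>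
    exists_support_between f hf G hG x y hx.1.1 hxy hy.1.2 hx.2 hy.2)
  have hfin : Z.Finite := Set.finite_of_encard_le_coe hcard
  have hcn : hfin.toFinset.card ≤ n + 1 := by
    rw [hfin.encard_eq_coe_toFinset_card] at hcard
    exact_mod_cast hcard
  have hpos : 0 < hfin.toFinset.card := Finset.card_pos.2 ⟨0, by simpa using hZ0⟩
  obtain ⟨m, hm⟩ : ∃ m, hfin.toFinset.card = m + 1 := ⟨_, (Nat.sub_add_cancel hpos).symm⟩
  let e := hfin.toFinset.orderEmbOfFin hm
  have he : ∀ i, e i ∈ Z := fun i => by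
    have := Finset.orderEmbOfFin_mem hfin.toFinset hm i
    exact hfin.mem_toFinset.1 this
  have hsurj : ∀ x ∈ Z, ∃ i, e i = x := by
    intro x hx
    have h1 := Finset.range_orderEmbOfFin hfin.toFinset hm
    have h2 : x ∈ Set.range e := by
      rw [h1]; simpa using hx
    exact h2
  let d : ℕ → ℝ := fun i => if h : i < m + 1 then e ⟨i, h⟩ else 0
  have hd : ∀ i (h : i < m + 1), d i = e ⟨i, h⟩ := fun i h => dif_pos h
  refine ⟨m, by omega, d, ?_, ?_, ?_, ?_⟩
  · rw [hd 0 (by omega)]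
    obtain ⟨i, hi⟩ := hsurj 0 hZ0
    apply le_antisymm _ (he _).1.1
    rw [← hi]
    exact e.monotone (Fin.le_def.2 (Nat.zero_le _))
  · rw [hd m (by omega)]
    obtain ⟨i, hi⟩ := hsurj 1 hZ1
    apply le_antisymm (he _).1.2
    rw [← hi]
    exact e.monotone (Fin.le_def.2 (Nat.le_of_lt_succ i.2))
  · intro i hi
    rw [hd i (by omega), hd (i+1) (by omega)]
    exact e.monotone (Fin.le_def.2 (Nat.le_succ _))
  · intro i hi
    rw [hd i (by omega), hd (i+1) (by omega)]
    have hmem : ∀ x ∈ Icc (e ⟨i, by omega⟩) (e ⟨i+1, by omega⟩), x ∈ Icc (0:ℝ) 1 :=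
      fun x hx => ⟨(he _).1.1.trans hx.1, hx.2.trans (he _).1.2⟩
    refine ⟨fun x hx => hG.2.2.1 x (hmem x hx), fun x hx hxe => ?_⟩
    obtain ⟨j, rfl⟩ := hsurj x ⟨hmem x hx, hxe⟩
    have h1 := Fin.le_def.1 (e.le_iff_le.1 hx.1)
    have h2 := Fin.le_def.1 (e.le_iff_le.1 hx.2)
    simp only at h1 h2
    rcases Nat.eq_or_lt_of_le h1 with h3 | h3
    · left; congr 1; exact Fin.ext h3.symm
    · right; congr 1; apply Fin.ext; simp only; omega

end VerifiableDisclosure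
end
end

section
/- Let G be a mean-preserving contraction of F with finite support {x₁ < x₂ < ⋯ < x_k}. Then there exist closed sets B₁,…,B_k ⊆ [0,1] with ∪_i B_i = [0,1] and μ_F(B_i ∩ B_j) = 0 for all i ≠ j, such that μ_F(B_i) = G({x_i}) and E[ω | ω ∈ B_i] = x_i for each i, and B_i = cl(conv(B_i) \ ∪_{j<i} conv(B_j)) for each i; that is, G induces a laminar representation. -/
open MeasureTheory Set

noncomputable section

namespace VerifiableDisclosure

lemma integrable_of_cont (ν : Measure ℝ) [IsFiniteMeasure ν] (hν : ∀ᵐ s ∂ν, s ∈ Icc (0:ℝ) 1)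
    (g : ℝ → ℝ) (hg : Continuous g) : Integrable g ν := by
  obtain ⟨C, hC⟩ := (isCompact_Icc (a := (0:ℝ)) (b := 1)).exists_bound_of_continuousOn
    hg.continuousOn
  refine Integrable.of_bound hg.aestronglyMeasurable C ?_
  filter_upwards [hν] with s hs using hC s hs

/-- Integrated cdf equals the integral of the positive part. -/
lemma integral_mcdf (ν : Measure ℝ) [IsFiniteMeasure ν] (hν : ∀ᵐ s ∂ν, s ∈ Icc (0:ℝ) 1)
    (t : ℝ) (ht : 0 ≤ t) : (∫ s in (0:ℝ)..t, mcdf ν s) = ∫ ω, max (t - ω) 0 ∂ν := by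
  have hmeas : MeasurableSet {p : ℝ × ℝ | p.2 ≤ p.1} :=
    measurableSet_le measurable_snd measurable_fst
  have h1 : ∀ s, mcdf ν s = ∫ ω, ({p : ℝ × ℝ | p.2 ≤ p.1}.indicator (fun _ => (1:ℝ)) (s, ω)) ∂ν := by
    intro s
    have : (fun ω => ({p : ℝ × ℝ | p.2 ≤ p.1}.indicator (fun _ => (1:ℝ)) (s, ω)))
        = (Iic s).indicator (fun _ => (1:ℝ)) := by
      ext ω; simp [indicator_apply]
    rw [this, integral_indicator measurableSet_Iic]
    simp [mcdf, Measure.real]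
  rw [intervalIntegral.integral_of_le ht]
  simp_rw [h1]
  rw [integral_integral_swap]
  · apply integral_congr_ae
    filter_upwards [hν] with ω hω
    have : (fun s => ({p : ℝ × ℝ | p.2 ≤ p.1}.indicator (fun _ => (1:ℝ)) (s, ω)))
        = (Ici ω).indicator (fun _ => (1:ℝ)) := by
      ext ω; simp [indicator_apply]
    show ∫ s in Ioc 0 t, ({p : ℝ × ℝ | p.2 ≤ p.1}.indicator (fun _ => (1:ℝ)) (s, ω)) = _
    rw [this, integral_indicator measurableSet_Ici, Measure.restrict_restrict measurableSet_Ici]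
    simp only [integral_const, smul_eq_mul, mul_one, measureReal_restrict_apply_univ]
    have h2 : (Ici ω ∩ Ioc 0 t : Set ℝ) =ᵐ[volume] Icc ω t := by
      have : (Ioc 0 t : Set ℝ) =ᵐ[volume] Icc 0 t := Ioc_ae_eq_Icc
      refine ((ae_eq_refl (Ici ω)).inter this).trans ?_
      have : Ici ω ∩ Icc 0 t = Icc ω t := by
        ext s; simp only [mem_inter_iff, mem_Ici, mem_Icc]
        constructor
        · rintro ⟨a, b, c⟩; exact ⟨a, c⟩
        · rintro ⟨a, b⟩; exact ⟨a, hω.1.trans a, b⟩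
      exact Filter.EventuallyEq.of_eq this
    rw [measureReal_congr h2, Real.volume_real_Icc]
  · apply Integrable.of_bound (C := 1)
    · exact (measurable_const.indicator hmeas).aestronglyMeasurable
    · refine Filter.Eventually.of_forall fun p => ?_
      simp only [Function.uncurry, indicator_apply]
      split_ifs <;> simp

/-- Finite convex-order domination of atoms `w j` at `y j` by `ν`. -/
def CX (ν : Measure ℝ) (s : Finset ℕ) (w y : ℕ → ℝ) : Prop :=
  ν.real univ = ∑ j ∈ s, w j ∧ (∫ ω, ω ∂ν) = ∑ j ∈ s, w j * y j ∧
    ∀ t ∈ Icc (0:ℝ) 1, ∑ j ∈ s, w j * max (t - y j) 0 ≤ ∫ ω, max (t - ω) 0 ∂ν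

lemma exists_interval (ν : Measure ℝ) [IsFiniteMeasure ν] [NullSingletonClass ν]
    (hν : ∀ᵐ s ∂ν, s ∈ Icc (0:ℝ) 1) (p x : ℝ) (hp : 0 < p) (hpM : p ≤ ν.real univ)
    (hlow : ∀ t ∈ Icc (0:ℝ) 1, p * max (t - x) 0 ≤ ∫ ω, max (t - ω) 0 ∂ν)
    (hhigh : ∀ t ∈ Icc (0:ℝ) 1, p * max (x - t) 0 ≤ ∫ ω, max (ω - t) 0 ∂ν) :
    ∃ a ∈ Icc (0:ℝ) 1, ∃ b ∈ Icc (0:ℝ) 1, a ≤ b ∧ ν.real (Icc a b) = p ∧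
      (∫ ω in Icc a b, ω ∂ν) = p * x := by
  set M := ν.real univ with hM
  have hint := integrable_of_cont ν hν
  have hid : Integrable (fun ω : ℝ => ω) ν := hint _ continuous_id
  -- cdf facts
  let N : ℝ → ℝ := fun t => ν.real (Iic t)
  let K : ℝ → ℝ := fun t => ∫ ω in Iic t, ω ∂ν
  have hIoc : ∀ a b : ℝ, a ≤ b → Iic b \ Iic a = Ioc a b := by
    intro a b _; ext z; simp [and_comm]
  have hNd : ∀ a b, a ≤ b → N b - N a = ν.real (Ioc a b) := by
    intro a b hab
    have := measureReal_diff (μ := ν) (Iic_subset_Iic.2 hab) measurableSet_Iic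
    rw [hIoc a b hab] at this; exact this.symm
  have hKd : ∀ a b, a ≤ b → K b - K a = ∫ ω in Ioc a b, ω ∂ν := by
    intro a b hab
    have := setIntegral_diff (μ := ν) measurableSet_Iic hid.integrableOn (Iic_subset_Iic.2 hab)
    rw [hIoc a b hab] at this; exact this.symm
  have hNmono : Monotone N := fun a b hab => measureReal_mono (Iic_subset_Iic.2 hab)
  have hN0 : N 0 = 0 := by
    have : ν (Iic 0) = 0 := by
      have h1 : ν (Iio 0) = 0 := by
        refine measure_mono_null ?_ hν
        intro s hs; simp only [mem_compl_iff, mem_setOf_eq, mem_Icc]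
        intro h; exact absurd h.1 (not_le.2 hs)
      rw [← Iio_union_right]
      exact measure_union_null h1 (measure_singleton _)
    simp [N, Measure.real, this]
  have hN1 : N 1 = M := by
    have : ν (Iic 1) = ν univ := by
      apply measure_congr
      filter_upwards [hν] with s hs
      exact propext ⟨fun _ => trivial, fun _ => hs.2⟩
    simp [N, hM, Measure.real, this]
  have hNcont : Continuous N := by
    have h1 : N = fun t => N 0 + ∫ ω in (0:ℝ)..t, (1:ℝ) ∂ν := by
      ext t
      rw [← intervalIntegral.integral_Iic_sub_Iic (integrable_const _).integrableOn
        (integrable_const _).integrableOn]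
      simp [N]
    rw [h1]
    exact continuous_const.add ((integrable_const (1:ℝ)).continuous_primitive 0)
  have hKlip : ∀ a b, a ≤ b → 0 ≤ K b - K a ∧ K b - K a ≤ N b - N a := by
    intro a b hab
    rw [hKd a b hab, hNd a b hab]
    constructor
    · apply integral_nonneg_of_ae
      filter_upwards [ae_restrict_of_ae hν] with s hs using hs.1
    · have : ν.real (Ioc a b) = ∫ ω in Ioc a b, (1:ℝ) ∂ν := by simp
      rw [this]
      apply integral_mono_ae hid.restrict (integrable_const _)
      filter_upwards [ae_restrict_of_ae hν] with s hs using hs.2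
  have hq : ∀ u : ℝ, ∃ t ∈ Icc (0:ℝ) 1, u ∈ Icc 0 M → N t = u := by
    intro u
    by_cases hu : u ∈ Icc 0 M
    · have := intermediate_value_Icc (zero_le_one' ℝ) hNcont.continuousOn
      rw [hN0, hN1] at this
      obtain ⟨t, ht, h⟩ := this hu
      exact ⟨t, ht, fun _ => h⟩
    · exact ⟨0, by simp, fun h => absurd h hu⟩
  choose q hq01 hqN using hq
  have hlip : ∀ u ∈ Icc 0 M, ∀ v ∈ Icc 0 M, |K (q u) - K (q v)| ≤ |u - v| := by
    intro u hu v hv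
    rcases le_total (q u) (q v) with h | h
    · have := hKlip _ _ h
      rw [hqN u hu, hqN v hv] at this
      rw [abs_sub_comm, abs_sub_comm u, abs_of_nonneg this.1]
      exact this.2.trans (le_abs_self _)
    · have := hKlip _ _ h
      rw [hqN u hu, hqN v hv] at this
      rw [abs_of_nonneg this.1]
      exact this.2.trans (le_abs_self _)
  have hcontK : ContinuousOn (fun u => K (q u)) (Icc 0 M) := by
    have : LipschitzOnWith 1 (fun u => K (q u)) (Icc 0 M) := by
      apply LipschitzOnWith.of_dist_le_mul
      intro u hu v hv
      simpa [Real.dist_eq] using hlip u hu v hv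
    exact this.continuousOn
  have hcont2 : ContinuousOn (fun u => K (q (u + p)) - K (q u)) (Icc 0 (M - p)) := by
    apply ContinuousOn.sub
    · refine hcontK.comp (f := fun u => u + p) (by fun_prop) ?_
      intro u hu; exact ⟨by linarith [hu.1], by linarith [hu.2]⟩
    · exact hcontK.mono (Icc_subset_Icc_right (by linarith))
  have hMp : 0 ≤ M - p := by linarith
  -- values at zero-mass / full-mass points
  have hKzero : ∀ t, N t = 0 → K t = 0 := by
    intro t h
    have : ν (Iic t) = 0 := by
      have := (measureReal_eq_zero_iff (μ := ν) (s := Iic t)).1 h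
      exact this
    simp only [K]
    rw [Measure.restrict_eq_zero.2 this]; simp
  have hKfull : ∀ t, N t = M → K t = ∫ ω, ω ∂ν := by
    intro t h
    have h1 : ν (Iic t)ᶜ = 0 := by
      have h2 := measureReal_compl (μ := ν) (measurableSet_Iic (a := t))
      have h3 : ν.real (Iic t)ᶜ = 0 := by rw [h2]; simp only [N] at h; linarith
      exact (measureReal_eq_zero_iff).1 h3
    have := integral_add_compl (μ := ν) (measurableSet_Iic (a := t)) hid
    rw [Measure.restrict_eq_zero.2 h1] at this
    simpa [K] using this
  have hposIic : ∀ t, (∫ ω, max (t - ω) 0 ∂ν) = t * N t - K t := by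
    intro t
    have : (fun ω : ℝ => max (t - ω) 0) = (Iic t).indicator (fun ω => t - ω) := by
      ext ω; by_cases h : ω ≤ t
      · simp [h]
      · simp [h]; linarith
    rw [this, integral_indicator measurableSet_Iic, integral_sub (integrable_const _) hid.restrict]
    simp [N, K, mul_comm]
  have hposIoi : ∀ t, (∫ ω, max (ω - t) 0 ∂ν) = (∫ ω, ω ∂ν) - K t - t * (M - N t) := by
    intro t
    have : (fun ω : ℝ => max (ω - t) 0) = (fun ω => max (t - ω) 0 + (ω - t)) := by
      ext ω; rcases le_total ω t with h | h
      · rw [max_eq_right (by linarith), max_eq_left (by linarith)]; ring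
      · rw [max_eq_left (by linarith), max_eq_right (by linarith)]; ring
    rw [this, integral_add (hint _ (by fun_prop)) (hint _ (by fun_prop)), hposIic,
      integral_sub hid (integrable_const _)]
    simp [hM]; ring
  have h0 : K (q (0 + p)) - K (q 0) ≤ p * x := by
    have hb := hqN (0 + p) ⟨by linarith, by linarith⟩
    have ha := hqN 0 ⟨le_rfl, by linarith⟩
    have h1 := hlow _ (hq01 (0 + p))
    rw [hposIic, hb] at h1
    rw [hKzero _ ha]
    nlinarith [mul_le_mul_of_nonneg_left (le_max_left (q (0 + p) - x) 0) hp.le]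
  have h1 : p * x ≤ K (q (M - p + p)) - K (q (M - p)) := by
    have hb := hqN (M - p + p) ⟨by linarith, by linarith⟩
    have ha := hqN (M - p) ⟨by linarith, by linarith⟩
    have h1 := hhigh _ (hq01 (M - p))
    rw [hposIoi, ha] at h1
    rw [hKfull _ (by rw [hb]; ring)]
    nlinarith [mul_le_mul_of_nonneg_left (le_max_left (x - q (M - p)) 0) hp.le]
  obtain ⟨u, hu, hux⟩ := intermediate_value_Icc hMp hcont2 ⟨h0, h1⟩
  have hNa := hqN u ⟨hu.1, by linarith [hu.2]⟩
  have hNb := hqN (u + p) ⟨by linarith [hu.1], by linarith [hu.2]⟩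
  have hab : q u ≤ q (u + p) := by
    by_contra h
    have := hNmono (not_le.1 h).le
    linarith
  refine ⟨q u, hq01 u, q (u + p), hq01 _, hab, ?_, ?_⟩
  · rw [← measureReal_congr (Ioc_ae_eq_Icc (μ := ν)), ← hNd _ _ hab]; linarith
  · rw [← setIntegral_congr_set (Ioc_ae_eq_Icc (μ := ν)), ← hKd _ _ hab]; exact hux

lemma cx_step (ν : Measure ℝ) [IsFiniteMeasure ν] [NullSingletonClass ν]
    (hν : ∀ᵐ s ∂ν, s ∈ Icc (0:ℝ) 1) (i : ℕ) (s : Finset ℕ) (hi : i ∉ s) (w y : ℕ → ℝ)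
    (hwi : 0 < w i) (hw : ∀ j ∈ s, 0 ≤ w j)
    (h : CX ν (insert i s) w y) :
    ∃ a ∈ Icc (0:ℝ) 1, ∃ b ∈ Icc (0:ℝ) 1, a ≤ b ∧ ν.real (Icc a b) = w i ∧
      (∫ ω in Icc a b, ω ∂ν) = w i * y i ∧ CX (ν.restrict (Icc a b)ᶜ) s w y := by
  obtain ⟨hmass, hmean, hpot⟩ := h
  have hint := integrable_of_cont ν hν
  have hid : Integrable (fun ω : ℝ => ω) ν := hint _ continuous_id
  rw [Finset.sum_insert hi] at hmass hmean
  have hpm : ∀ t z : ℝ, max (z - t) 0 = max (t - z) 0 + (z - t) := by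
    intro t z; rcases le_total z t with h | h
    · rw [max_eq_right (by linarith), max_eq_left (by linarith)]; ring
    · rw [max_eq_left (by linarith), max_eq_right (by linarith)]; ring
  obtain ⟨a, ha, b, hb, hab, hIm, hIx⟩ := exists_interval ν hν (w i) (y i) hwi
    (by rw [hmass]; linarith [Finset.sum_nonneg hw]) (by
      intro t ht
      refine le_trans ?_ (hpot t ht)
      rw [Finset.sum_insert hi]
      have : 0 ≤ ∑ j ∈ s, w j * max (t - y j) 0 :=
        Finset.sum_nonneg fun j hj => mul_nonneg (hw j hj) (le_max_right _ _)
      linarith) (by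
      intro t ht
      have h1 := hpot t ht
      rw [Finset.sum_insert hi] at h1
      simp_rw [hpm t]
      rw [integral_add (hint _ (by fun_prop)) (hint _ (by fun_prop)),
        integral_sub hid (integrable_const _), hmean]
      simp only [integral_const, smul_eq_mul]
      rw [hmass]
      have : 0 ≤ ∑ j ∈ s, w j * max (y j - t) 0 :=
        Finset.sum_nonneg fun j hj => mul_nonneg (hw j hj) (le_max_right _ _)
      simp_rw [hpm t, mul_add, Finset.sum_add_distrib, mul_sub, Finset.sum_sub_distrib,
        ← Finset.sum_mul] at this
      linarith)
  have hsplit : ∀ g : ℝ → ℝ, Continuous g →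
      (∫ ω in (Icc a b)ᶜ, g ω ∂ν) = (∫ ω, g ω ∂ν) - ∫ ω in Icc a b, g ω ∂ν := by
    intro g hg
    rw [← integral_add_compl (μ := ν) (measurableSet_Icc (a := a) (b := b)) (hint g hg)]; ring
  have hax : a ≤ y i := by
    have : (∫ ω in Icc a b, a ∂ν) ≤ ∫ ω in Icc a b, ω ∂ν :=
      setIntegral_mono_on (integrable_const _) hid.restrict measurableSet_Icc fun s hs => hs.1
    rw [hIx] at this; simp [hIm] at this
    exact le_of_mul_le_mul_left this hwi
  have hxb : y i ≤ b := by
    have : (∫ ω in Icc a b, ω ∂ν) ≤ ∫ ω in Icc a b, b ∂ν :=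
      setIntegral_mono_on hid.restrict (integrable_const _) measurableSet_Icc fun s hs => hs.2
    rw [hIx] at this; simp [hIm] at this
    exact le_of_mul_le_mul_left this hwi
  have hA : ∀ t ∈ Icc (0:ℝ) 1, t ≤ a →
      ∑ j ∈ s, w j * max (t - y j) 0 ≤ ∫ ω in (Icc a b)ᶜ, max (t - ω) 0 ∂ν := by
    intro t ht hta
    have h1 := hpot t ht
    rw [Finset.sum_insert hi, max_eq_right (by linarith)] at h1
    rw [hsplit _ (by fun_prop)]
    have : (∫ ω in Icc a b, max (t - ω) 0 ∂ν) = ∫ ω in Icc a b, 0 ∂ν :=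
      setIntegral_congr_fun measurableSet_Icc fun z hz =>
        max_eq_right (by linarith [hz.1])
    rw [this]; simp; linarith
  have hB : ∀ t ∈ Icc (0:ℝ) 1, b ≤ t →
      ∑ j ∈ s, w j * max (t - y j) 0 ≤ ∫ ω in (Icc a b)ᶜ, max (t - ω) 0 ∂ν := by
    intro t ht hta
    have h1 := hpot t ht
    rw [Finset.sum_insert hi, max_eq_left (by linarith)] at h1
    rw [hsplit _ (by fun_prop)]
    have : (∫ ω in Icc a b, max (t - ω) 0 ∂ν) = ∫ ω in Icc a b, (t - ω) ∂ν :=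
      setIntegral_congr_fun measurableSet_Icc fun z hz =>
        max_eq_left (by linarith [hz.2])
    rw [this, integral_sub (integrable_const _) hid.restrict, hIx]
    simp [hIm]; linarith
  refine ⟨a, ha, b, hb, hab, hIm, hIx, ?_, ?_, ?_⟩
  · rw [measureReal_restrict_apply_univ, measureReal_compl measurableSet_Icc, hIm, hmass]; ring
  · rw [hsplit (fun z => z) continuous_id, hIx, hmean]; ring
  · intro t ht
    rcases le_total t a with h1 | h1
    · exact hA t ht h1
    rcases le_total b t with h2 | h2
    · exact hB t ht h2
    rcases eq_or_lt_of_le hab with h3 | h3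
    · exact hA t ht (by linarith)
    -- strictly between: convex versus affine
    obtain ⟨θ, hθ0, hθ1, hθ⟩ : ∃ θ : ℝ, 0 ≤ θ ∧ θ ≤ 1 ∧ t = θ * a + (1 - θ) * b := by
      refine ⟨(b - t) / (b - a), div_nonneg (by linarith) (by linarith),
        (div_le_one (by linarith)).2 (by linarith), ?_⟩
      have : b - a ≠ 0 := by linarith
      field_simp; ring
    have hθ1' : 0 ≤ 1 - θ := by linarith
    have e1 : ∑ j ∈ s, w j * max (t - y j) 0 ≤
        θ * ∑ j ∈ s, w j * max (a - y j) 0 + (1 - θ) * ∑ j ∈ s, w j * max (b - y j) 0 := by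
      rw [Finset.mul_sum, Finset.mul_sum, ← Finset.sum_add_distrib]
      apply Finset.sum_le_sum
      intro j hj
      have : max (t - y j) 0 ≤ θ * max (a - y j) 0 + (1 - θ) * max (b - y j) 0 := by
        have p1 := mul_le_mul_of_nonneg_left (le_max_left (a - y j) 0) hθ0
        have p2 := mul_le_mul_of_nonneg_left (le_max_left (b - y j) 0) hθ1'
        have p3 := mul_nonneg hθ0 (le_max_right (a - y j) 0)
        have p4 := mul_nonneg hθ1' (le_max_right (b - y j) 0)
        apply max_le _ (by linarith)
        rw [hθ]; linarith
      nlinarith [mul_le_mul_of_nonneg_left this (hw j hj)]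
    have e2 : (∫ ω in (Icc a b)ᶜ, max (t - ω) 0 ∂ν) =
        θ * (∫ ω in (Icc a b)ᶜ, max (a - ω) 0 ∂ν)
          + (1 - θ) * ∫ ω in (Icc a b)ᶜ, max (b - ω) 0 ∂ν := by
      rw [← integral_const_mul, ← integral_const_mul, ← integral_add]
      · apply setIntegral_congr_fun measurableSet_Icc.compl
        intro z hz
        simp only [mem_compl_iff, mem_Icc, not_and_or, not_le] at hz
        dsimp only
        rcases hz with hz | hz
        · rw [max_eq_left (by linarith), max_eq_left (by linarith), max_eq_left (by linarith), hθ]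
          ring
        · rw [max_eq_right (by linarith), max_eq_right (by linarith), max_eq_right (by linarith)]
          ring
      · exact ((hint (fun z => max (a - z) 0) (by fun_prop)).const_mul _).restrict
      · exact ((hint (fun z => max (b - z) 0) (by fun_prop)).const_mul _).restrict
    rw [e2]
    refine e1.trans (add_le_add ?_ ?_)
    · exact mul_le_mul_of_nonneg_left (hA a ha le_rfl) hθ0
    · exact mul_le_mul_of_nonneg_left (hB b hb le_rfl) hθ1'

lemma finite_support_facts (G : Measure ℝ) [IsProbabilityMeasure G] (k : ℕ) (x : ℕ → ℝ)
    (hxmono : ∀ i, i + 1 < k → x i < x (i+1)) (hsupp : msupport G = x '' {i | i < k}) :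
    (∀ᵐ s ∂G, s ∈ x '' {i | i < k}) ∧ (∀ i < k, 0 < G.real {x i}) ∧
    ∀ g : ℝ → ℝ, (∫ ω, g ω ∂G) = ∑ j ∈ Finset.range k, G.real {x j} * g (x j) := by
  have hlt : ∀ d i, i + d + 1 < k → x i < x (i + d + 1) := by
    intro d; induction d with
    | zero => intro i hi; exact hxmono i hi
    | succ d ih => intro i hi; exact (ih i (by omega)).trans (hxmono _ hi)
  have hinj : Set.InjOn x (Finset.range k : Set ℕ) := by
    intro i hi j hj hij
    simp only [Finset.coe_range, mem_Iio] at hi hj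
    rcases lt_trichotomy i j with h | h | h
    · have := hlt (j - i - 1) i (by omega)
      rw [show i + (j - i - 1) + 1 = j by omega] at this; linarith
    · exact h
    · have := hlt (i - j - 1) j (by omega)
      rw [show j + (i - j - 1) + 1 = i by omega] at this; linarith
  have hms : msupport G = G.support := by
    ext z; simp [msupport, Measure.mem_support_iff_forall, pos_iff_ne_zero]
  have hae : ∀ᵐ s ∂G, s ∈ x '' {i | i < k} := by
    rw [← hsupp, hms]; exact Measure.support_mem_ae
  classical
  set S : Finset ℝ := (Finset.range k).image x with hS
  have hSc : (S : Set ℝ) = x '' {i | i < k} := by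
    ext z; simp [hS]
  refine ⟨hae, ?_, ?_⟩
  · intro i hi
    rw [measureReal_def, ENNReal.toReal_pos_iff]
    refine ⟨pos_iff_ne_zero.2 ?_, measure_lt_top _ _⟩
    intro h0
    have hmem : x i ∈ msupport G := by rw [hsupp]; exact ⟨i, hi, rfl⟩
    have hop : IsOpen ((S.erase (x i) : Finset ℝ) : Set ℝ)ᶜ :=
      (Finset.finite_toSet _).isClosed.isOpen_compl
    refine hmem _ (hop.mem_nhds (by simp)) ?_
    refine measure_mono_null (t := {x i} ∪ (x '' {i | i < k})ᶜ) ?_ (measure_union_null h0 hae)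
    intro z hz
    rw [← hSc]
    by_cases h : z = x i
    · left; exact h
    · right; intro hzS; apply hz; simp only [Finset.coe_erase]; exact ⟨hzS, h⟩
  · intro g
    have h1 : G.restrict (S : Set ℝ) = G := by
      apply Measure.restrict_eq_self_of_ae_mem; rw [hSc]; exact hae
    rw [← h1, setIntegral_finset, h1, hS, Finset.sum_image hinj]
    · simp
    · exact IntegrableOn.finset

lemma laminar_of_intervals (k : ℕ) (I : ℕ → Set ℝ) (hI : ∀ n, ∃ a b : ℝ, I n = Icc a b)
    (B : ℕ → Set ℝ) (hB : ∀ n, B n = closure (I n \ ⋃ j ∈ Finset.range n, I j)) :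
    (∀ n, B n ⊆ I n) ∧
    (∀ n, (⋃ j ∈ Finset.range n, B j) = ⋃ j ∈ Finset.range n, I j) ∧
    ∀ i, B i = closure ((convexHull ℝ (B i)) \ ⋃ j ∈ Finset.range i, convexHull ℝ (B j)) := by
  have hsub : ∀ n, B n ⊆ I n := by
    intro n; rw [hB]
    obtain ⟨a, b, h⟩ := hI n
    exact closure_minimal diff_subset (h ▸ isClosed_Icc)
  have hconv : ∀ n, convexHull ℝ (B n) ⊆ I n := by
    intro n
    obtain ⟨a, b, h⟩ := hI n
    exact convexHull_min (hsub n) (h ▸ convex_Icc a b)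
  have hun : ∀ n, (⋃ j ∈ Finset.range n, B j) = ⋃ j ∈ Finset.range n, I j := by
    intro n
    induction n with
    | zero => simp
    | succ n ih =>
      rw [Finset.range_add_one, Finset.set_biUnion_insert, Finset.set_biUnion_insert, ih]
      apply Subset.antisymm
      · exact union_subset_union_left _ (hsub n)
      · intro z hz
        by_cases h : z ∈ ⋃ j ∈ Finset.range n, I j
        · right; exact h
        · left; rw [hB]; exact subset_closure ⟨hz.resolve_right h, h⟩
  have hunc : ∀ n, (⋃ j ∈ Finset.range n, convexHull ℝ (B j)) = ⋃ j ∈ Finset.range n, I j := by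
    intro n
    apply Subset.antisymm
    · exact iUnion₂_mono fun j _ => hconv j
    · rw [← hun]; exact iUnion₂_mono fun j _ => subset_convexHull ℝ _
  refine ⟨hsub, hun, fun i => ?_⟩
  rw [hunc]
  apply Subset.antisymm
  · conv_lhs => rw [hB]
    apply closure_mono
    intro z hz
    refine ⟨subset_convexHull ℝ _ ?_, hz.2⟩
    rw [hB]; exact subset_closure hz
  · conv_rhs => rw [hB]
    exact closure_mono (diff_subset_diff_left (hconv i))

lemma frontier_biUnion_finite (n : ℕ) (I : ℕ → Set ℝ) (hI : ∀ n, ∃ a b : ℝ, I n = Icc a b) :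
    (frontier (⋃ j ∈ Finset.range n, I j)).Finite := by
  induction n with
  | zero => simp
  | succ n ih =>
    rw [Finset.range_add_one, Finset.set_biUnion_insert]
    have h1 : (frontier (I n)).Finite := by
      obtain ⟨a, b, h⟩ := hI n
      rw [h]
      rcases le_or_gt a b with hab | hab
      · rw [frontier_Icc hab]; exact toFinite _
      · rw [Icc_eq_empty (not_le.2 hab)]; simp
    refine (h1.union ih).subset ?_
    refine (frontier_union_subset _ _).trans ?_
    exact union_subset_union inter_subset_left inter_subset_right

/-- a finitely supported MPC of the prior induces a laminar
representation. -/
theorem mpc_induces_laminar_representation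
    (f : ℝ → ℝ) (hf : IsPrior f)
    (G : Measure ℝ) (hG : IsMPC (densMeasure f) G)
    (k : ℕ) (hk : 0 < k) (x : ℕ → ℝ)
    (hxmono : ∀ i, i + 1 < k → x i < x (i+1))
    (hsupp : msupport G = x '' {i | i < k}) :
    ∃ B : ℕ → Set ℝ,
      (∀ i < k, IsClosed (B i) ∧ B i ⊆ Icc (0:ℝ) 1) ∧
      (⋃ i ∈ Finset.range k, B i) = Icc (0:ℝ) 1 ∧
      (∀ i < k, ∀ j < k, i ≠ j → densMeasure f (B i ∩ B j) = 0) ∧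
      (∀ i < k, densMeasure f (B i) = G {x i} ∧
        condMean (densMeasure f) (B i) = x i) ∧
      (∀ i < k,
        B i = closure ((convexHull ℝ (B i)) \ ⋃ j ∈ Finset.range i, convexHull ℝ (B j))) := by
  obtain ⟨hGp, hGs, hpot, hmean⟩ := hG
  obtain ⟨hGae, hwpos, hGint⟩ := finite_support_facts G k x hxmono hsupp
  have hac : densMeasure f ≪ volume.restrict (Icc (0:ℝ) 1) := withDensity_absolutelyContinuous _ _
  have hac' : volume.restrict (Icc (0:ℝ) 1) ≪ densMeasure f := by
    apply withDensity_absolutelyContinuous' hf.meas.ennreal_ofReal.aemeasurable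
    filter_upwards [ae_restrict_mem measurableSet_Icc] with z hz
    simpa using hf.pos z hz
  set μ := densMeasure f with hμdef
  haveI : IsProbabilityMeasure μ := ⟨hf.prob⟩
  haveI : NullSingletonClass μ := ⟨fun z => hac (measure_singleton z)⟩
  have hμ : ∀ᵐ s ∂μ, s ∈ Icc (0:ℝ) 1 := hac.ae_le (ae_restrict_mem measurableSet_Icc)
  have hG01 : ∀ᵐ s ∂G, s ∈ Icc (0:ℝ) 1 := by
    filter_upwards [hGae] with s hs
    exact hGs (hsupp ▸ hs)
  have hint := integrable_of_cont μ hμ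
  have hid : Integrable (fun ω : ℝ => ω) μ := hint _ continuous_id
  set w : ℕ → ℝ := fun j => G.real {x j} with hw
  have hw1 : ∑ j ∈ Finset.range k, w j = 1 := by
    have := hGint (fun _ => 1)
    simpa using this.symm
  have hcx0 : CX μ (Finset.range k) w x := by
    have hmn : (∫ ω, ω ∂G) = ∫ ω, ω ∂μ := by
      rw [integral_mcdf G hG01 1 zero_le_one, integral_mcdf μ hμ 1 zero_le_one] at hmean
      have e : ∀ ν : Measure ℝ, IsProbabilityMeasure ν → (∀ᵐ s ∂ν, s ∈ Icc (0:ℝ) 1) →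
          (∫ ω, max (1 - ω) 0 ∂ν) = 1 - ∫ ω, ω ∂ν := by
        intro ν _ hν
        have h1 : (∫ ω, max (1 - ω) 0 ∂ν) = ∫ ω, (1 - ω) ∂ν := by
          apply integral_congr_ae
          filter_upwards [hν] with s hs
          exact max_eq_left (by linarith [hs.2])
        rw [h1, integral_sub (integrable_const _) (integrable_of_cont ν hν (fun z => z) continuous_id)]
        simp
      rw [e G hGp hG01, e μ inferInstance hμ] at hmean
      linarith
    refine ⟨by rw [hw1]; simp, ?_, ?_⟩
    · rw [← hmn, hGint]
    · intro t ht
      have := hpot t ht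
      rwa [integral_mcdf G hG01 t ht.1, integral_mcdf μ hμ t ht.1, hGint] at this
  have hstep : ∀ (n : ℕ) (U : Set ℝ), ∃ a b : ℝ, n < k → MeasurableSet U →
      CX (μ.restrict Uᶜ) (Finset.Ico n k) w x →
      a ∈ Icc (0:ℝ) 1 ∧ b ∈ Icc (0:ℝ) 1 ∧ μ.real (Icc a b \ U) = w n ∧
      (∫ ω in Icc a b \ U, ω ∂μ) = w n * x n ∧
      CX (μ.restrict (U ∪ Icc a b)ᶜ) (Finset.Ico (n + 1) k) w x := by
    intro n U
    by_cases h : n < k ∧ MeasurableSet U ∧ CX (μ.restrict Uᶜ) (Finset.Ico n k) w x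
    · obtain ⟨hn, hU, hc⟩ := h
      rw [← Finset.insert_Ico_add_one_left_eq_Ico hn] at hc
      obtain ⟨a, ha, b, hb, hab, h1, h2, h3⟩ := cx_step (μ.restrict Uᶜ) (ae_restrict_of_ae hμ) n
        (Finset.Ico (n + 1) k) (by simp) w x (hwpos n hn) (fun j _ => measureReal_nonneg) hc
      refine ⟨a, b, fun _ _ _ => ⟨ha, hb, ?_, ?_, ?_⟩⟩
      · rw [measureReal_restrict_apply measurableSet_Icc] at h1
        exact h1
      · rw [Measure.restrict_restrict measurableSet_Icc] at h2
        exact h2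
      · rw [Measure.restrict_restrict measurableSet_Icc.compl] at h3
        rw [compl_union, inter_comm]; exact h3
    · exact ⟨0, 0, fun h1 h2 h3 => absurd ⟨h1, h2, h3⟩ h⟩
  choose a b hab using hstep
  let U : ℕ → Set ℝ := fun n => Nat.rec ∅ (fun n U => U ∪ Icc (a n U) (b n U)) n
  let I : ℕ → Set ℝ := fun n => Icc (a n (U n)) (b n (U n))
  have hU0 : U 0 = ∅ := rfl
  have hUs : ∀ n, U (n + 1) = U n ∪ I n := fun n => rfl
  have hII : ∀ n, ∃ a b : ℝ, I n = Icc a b := fun n => ⟨_, _, rfl⟩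
  have hUeq : ∀ n, U n = ⋃ j ∈ Finset.range n, I j := by
    intro n; induction n with
    | zero => simp [hU0]
    | succ n ih => rw [hUs, Finset.range_add_one, Finset.set_biUnion_insert, ih, union_comm]
  have hUm : ∀ n, MeasurableSet (U n) := by
    intro n; induction n with
    | zero => simp [hU0]
    | succ n ih => rw [hUs]; exact ih.union measurableSet_Icc
  have hcx : ∀ n ≤ k, CX (μ.restrict (U n)ᶜ) (Finset.Ico n k) w x := by
    intro n; induction n with
    | zero => intro _; rw [hU0, compl_empty, Measure.restrict_univ, ← Finset.range_eq_Ico]; exact hcx0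
    | succ n ih => intro hn; exact (hab n (U n) hn (hUm n) (ih (by omega))).2.2.2.2
  have hall := fun n (hn : n < k) => hab n (U n) hn (hUm n) (hcx n hn.le)
  let B : ℕ → Set ℝ := fun n => closure (I n \ ⋃ j ∈ Finset.range n, I j)
  have hBcl : ∀ n, IsClosed (B n) := fun n => isClosed_closure
  obtain ⟨hBI, hBU, hlam⟩ := laminar_of_intervals k I hII B (fun n => rfl)
  have hB01 : ∀ n < k, B n ⊆ Icc 0 1 := fun n hn => (hBI n).trans
    (Icc_subset_Icc (hall n hn).1.1 (hall n hn).2.1.2)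
  have hBae : ∀ n, B n =ᵐ[μ] (I n \ U n : Set ℝ) := by
    intro n
    have hfin := frontier_biUnion_finite n I hII
    rw [← hUeq] at hfin
    apply Filter.EventuallyLE.antisymm
    · rw [ae_le_set]
      refine measure_mono_null (t := frontier (U n)) ?_ (hfin.measure_zero μ)
      rintro z ⟨hz, hz'⟩
      have hzU : z ∈ U n := by
        apply Classical.byContradiction; intro h; exact hz' ⟨hBI n hz, h⟩
      rw [frontier_eq_closure_inter_closure]
      refine ⟨subset_closure hzU, ?_⟩
      have : B n ⊆ closure (U n)ᶜ := by
        simp only [B]; rw [← hUeq]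
        exact closure_mono fun y hy => hy.2
      exact this hz
    · apply HasSubset.Subset.eventuallyLE
      rw [hUeq]; exact subset_closure
  have hover : ∀ i j, j < i → μ (B i ∩ B j) = 0 := by
    intro i j hji
    have h1 : μ (I j ∩ (I i \ U i)) = 0 := by
      have : I j ∩ (I i \ U i) = ∅ := by
        ext z; simp only [mem_inter_iff, mem_diff, mem_empty_iff_false, iff_false]
        rintro ⟨h1, h2, h3⟩
        apply h3; rw [hUeq]
        exact mem_biUnion (Finset.mem_coe.2 (Finset.mem_range.2 hji)) h1
      rw [this]; simp
    refine measure_mono_null (t := I j ∩ B i) (fun z hz => ⟨hBI j hz.2, hz.1⟩) ?_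
    rw [← h1]
    exact measure_congr ((ae_eq_refl (I j)).inter (hBae i))
  refine ⟨B, fun i hi => ⟨hBcl i, hB01 i hi⟩, ?_, ?_, ?_, fun i _ => hlam i⟩
  · apply Subset.antisymm
    · exact iUnion₂_subset fun i hi => hB01 i (Finset.mem_range.1 hi)
    · have hnull : μ (U k)ᶜ = 0 := by
        have := (hcx k le_rfl).1
        rw [measureReal_restrict_apply_univ] at this
        simp only [Finset.Ico_self, Finset.sum_empty] at this
        exact (measureReal_eq_zero_iff).1 this
      rw [hBU, ← hUeq]
      have hUcl : IsClosed (U k) := by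
        rw [hUeq, ← hBU]
        exact isClosed_biUnion_finset fun i _ => hBcl i
      have h2 : volume ((U k)ᶜ ∩ Ioo 0 1) = 0 := by
        have h3 := hac' hnull
        rw [Measure.restrict_apply (hUm k).compl] at h3
        exact measure_mono_null (inter_subset_inter_right _ Ioo_subset_Icc_self) h3
      have h4 := (hUcl.isOpen_compl.inter isOpen_Ioo).measure_eq_zero_iff volume |>.1 h2
      have h5 : Ioo (0:ℝ) 1 ⊆ U k := by
        intro z hz; apply Classical.byContradiction; intro h
        have : z ∈ (U k)ᶜ ∩ Ioo 0 1 := ⟨h, hz⟩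
        rw [h4] at this; exact this
      rw [← closure_Ioo (zero_ne_one' ℝ)]
      exact closure_minimal h5 hUcl
  · intro i _ j _ hij
    rcases lt_or_gt_of_ne hij with h | h
    · rw [inter_comm]; exact hover j i h
    · exact hover i j h
  · intro i hi
    obtain ⟨_, _, h1, h2, _⟩ := hall i hi
    have hm : μ.real (B i) = w i := by rw [measureReal_congr (hBae i)]; exact h1
    refine ⟨?_, ?_⟩
    · exact (measureReal_eq_measureReal_iff (measure_ne_top _ _) (measure_ne_top _ _)).1 hm
    · unfold condMean
      rw [setIntegral_congr_set (hBae i)]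
      change _ / μ.real (B i) = _
      rw [hm, h2, mul_div_cancel_left₀ _ (hwpos i hi).ne']

end VerifiableDisclosure
end
end

section
/- Let {B_i}_{i=0}^{n−1} be an obedient and incentive compatible deterministic representation whose Sender's ex ante payoff is maximal among all obedient and incentive compatible deterministic representations, and let j = min{i : B_i has nonempty interior}. Then E[ω | ω ∈ B_j] ∈ [γ_j, γ_{j+1}), and E[ω | ω ∈ B_k] = γ_k for every k > j such that B_k has nonempty interior. -/
open MeasureTheory Set

noncomputable section

namespace VerifiableDisclosure

theorem aux_cover (γ : ℕ → ℝ) (a : ℕ) (ω : ℝ) (ha : γ a ≤ ω) :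
    ∀ m, a < m → ω ≤ γ m → ∃ l, a ≤ l ∧ l < m ∧ ω ∈ Icc (γ l) (γ (l+1)) := by
  intro m
  induction m with
  | zero => intro h; omega
  | succ m ih =>
    intro h hω
    by_cases h1 : γ m ≤ ω
    · exact ⟨m, by omega, by omega, h1, hω⟩
    · have h2 : a ≠ m := by rintro rfl; exact h1 ha
      obtain ⟨l, h3, h4, h5⟩ := ih (by omega) (le_of_lt (not_le.mp h1))
      exact ⟨l, h3, by omega, h5⟩

theorem aux_null (μ : Measure ℝ) (n : ℕ) (γ : ℕ → ℝ) (hγn : γ n = 1) (B : ℕ → Set ℝ)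
    (hdet : IsDetRep μ n B) (hic : IsIC n γ B) (i : ℕ) (hi : i < n) :
    μ (B i ∩ Ioi (γ (i+1))) = 0 := by
  obtain ⟨h1, h2, h3⟩ := hdet
  have hsub : B i ∩ Ioi (γ (i+1)) ⊆ ⋃ m ∈ Finset.Ioo i n, (B i ∩ B m) := by
    rintro ω ⟨hB, hω⟩
    have hω1 := ((h1 i hi).2 hB).2
    have hin : i + 1 ≠ n := by
      intro h
      rw [h, hγn] at hω
      exact absurd hω1 (not_le.mpr hω)
    obtain ⟨l, hl1, hl2, hl3⟩ := aux_cover γ (i+1) ω (le_of_lt hω) n (by omega) (by rw [hγn]; exact hω1)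
    have := hic l hl2 hl3
    simp only [mem_iUnion, Finset.mem_Ico, exists_prop] at this
    obtain ⟨m, hm, hmB⟩ := this
    simp only [mem_iUnion, Finset.mem_Ioo, exists_prop]
    exact ⟨m, ⟨by omega, hm.2⟩, hB, hmB⟩
  refine measure_mono_null hsub ?_
  refine (measure_biUnion_null_iff (Finset.Ioo i n).countable_toSet).mpr ?_
  intro m hm
  simp only [Finset.coe_Ioo, mem_Ioo] at hm
  exact h3 i hi m hm.2 (by omega)

theorem aux_int (μ : Measure ℝ) [IsFiniteMeasure μ] (S : Set ℝ) (hS : MeasurableSet S)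
    (hS1 : S ⊆ Icc (0:ℝ) 1) : IntegrableOn (fun ω : ℝ => ω) S μ := by
  have : IntegrableOn (fun ω : ℝ => ω) (Icc 0 1) μ :=
    continuous_id.continuousOn.integrableOn_compact isCompact_Icc
  exact this.mono_set hS1

theorem aux_const (μ : Measure ℝ) [IsFiniteMeasure μ] (S : Set ℝ) (hS : MeasurableSet S)
    (hS1 : S ⊆ Icc (0:ℝ) 1) (c : ℝ) :
    ∫ ω in S, (ω - c) ∂μ = (∫ ω in S, ω ∂μ) - c * (μ S).toReal := by
  rw [integral_sub (aux_int μ S hS hS1) (integrable_const c)]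
  simp [Measure.real, mul_comm]

theorem aux_upper (μ : Measure ℝ) [IsFiniteMeasure μ] [NullSingletonClass μ]
    (n : ℕ) (γ : ℕ → ℝ) (hγn : γ n = 1) (B : ℕ → Set ℝ)
    (hdet : IsDetRep μ n B) (hic : IsIC n γ B) (i : ℕ) (hi : i < n) (h0 : μ (B i) ≠ 0) :
    ∫ ω in B i, ω ∂μ < γ (i+1) * (μ (B i)).toReal := by
  have hnull := aux_null μ n γ hγn B hdet hic i hi
  have hcl := (hdet.1 i hi).1.measurableSet
  have hsub := (hdet.1 i hi).2
  have hc := aux_const μ (B i) hcl hsub (γ (i+1))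
  have hInt : IntegrableOn (fun ω : ℝ => γ (i+1) - ω) (B i) μ :=
    (integrable_const _).sub (aux_int μ _ hcl hsub)
  have hpos : 0 < ∫ ω in B i, (γ (i+1) - ω) ∂μ := by
    rw [setIntegral_pos_iff_support_of_nonneg_ae _ hInt]
    · rw [pos_iff_ne_zero]
      intro h
      apply h0
      have : B i ⊆ (Function.support (fun ω : ℝ => γ (i+1) - ω) ∩ B i) ∪ {γ (i+1)} := by
        intro x hx
        by_cases hxx : x = γ (i+1)
        · right; exact hxx
        · left
          refine ⟨?_, hx⟩
          simp only [Function.mem_support]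
          intro h'
          exact hxx (by linarith)
      exact measure_mono_null this (measure_union_null h (measure_singleton _))
    · rw [Filter.EventuallyLE, ae_restrict_iff' hcl]
      have : ∀ᵐ x ∂μ, x ∉ B i ∩ Ioi (γ (i+1)) := measure_eq_zero_iff_ae_notMem.mp hnull
      filter_upwards [this] with x hx hxB
      have : ¬ (γ (i+1) < x) := fun h => hx ⟨hxB, h⟩
      simp only [Pi.zero_apply]
      linarith
  have hneg : ∫ ω in B i, (γ (i+1) - ω) ∂μ = - ∫ ω in B i, (ω - γ (i+1)) ∂μ := by
    rw [← integral_neg]; simp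
  rw [hneg, hc] at hpos
  linarith

/-- cutting a small amount of mass from the bottom of a set -/
theorem aux_cut (μ : Measure ℝ) [IsFiniteMeasure μ] [NullSingletonClass μ] (S : Set ℝ)
    (hS : MeasurableSet S) (hS1 : S ⊆ Icc (0:ℝ) 1) (h0 : μ S ≠ 0) (c : ℝ) (hc : 0 < c) :
    ∃ t, 0 < (μ (S ∩ Iic t)).toReal ∧ (μ (S ∩ Iic t)).toReal < c := by
  have key : ∀ t, 0 ≤ t → ∫ x in (0:ℝ)..t, (1:ℝ) ∂(μ.restrict S) = (μ (S ∩ Iic t)).toReal := by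
    intro t ht
    rw [intervalIntegral.integral_of_le ht]
    simp only [integral_const, smul_eq_mul, mul_one, Measure.real, MeasurableSet.univ,
      Measure.restrict_apply, univ_inter, measurableSet_Ioc]
    congr 1
    apply measure_congr
    have h1 : ∀ᵐ x ∂μ, x ∉ ({0} : Set ℝ) := measure_eq_zero_iff_ae_notMem.mp (measure_singleton _)
    filter_upwards [h1] with x hx
    apply propext
    change (x ∈ Ioc 0 t ∩ S ↔ x ∈ S ∩ Iic t)
    constructor
    · rintro ⟨h, h'⟩; exact ⟨h', h.2⟩
    · rintro ⟨h, h'⟩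
      exact ⟨⟨lt_of_le_of_ne (hS1 h).1 (fun h => hx h.symm), h'⟩, h⟩
  have hcont : Continuous fun b => ∫ x in (0:ℝ)..b, (1:ℝ) ∂(μ.restrict S) :=
    intervalIntegral.continuous_primitive (fun a b => intervalIntegrable_const) 0
  have hM : 0 < (μ S).toReal := ENNReal.toReal_pos h0 (measure_ne_top _ _)
  have h1 : ∫ x in (0:ℝ)..1, (1:ℝ) ∂(μ.restrict S) = (μ S).toReal := by
    rw [key 1 zero_le_one, inter_eq_left.mpr (show S ⊆ Iic 1 from fun x hx => (hS1 hx).2)]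
  have := intermediate_value_Icc (zero_le_one (α := ℝ)) hcont.continuousOn
  simp only [h1, intervalIntegral.integral_same] at this
  have hmin : 0 < min (μ S).toReal (c/2) := lt_min hM (by linarith)
  obtain ⟨t, ht, hte⟩ := this ⟨hmin.le, min_le_left _ (c/2)⟩
  simp only [key t ht.1] at hte
  refine ⟨t, by rw [hte]; exact hmin, ?_⟩
  rw [hte]
  linarith [min_le_right (μ S).toReal (c/2)]

theorem aux_main (μ : Measure ℝ) [IsFiniteMeasure μ] [NullSingletonClass μ]
    (n : ℕ) (γ : ℕ → ℝ) (hγk : ∀ i ≤ n, γ i ≤ 1) (hγn : γ n = 1)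
    (v : ℕ → ℝ)
    (B : ℕ → Set ℝ)
    (hdet : IsDetRep μ n B) (hob : IsObedient μ n γ B) (hic : IsIC n γ B)
    (hmax : ∀ B' : ℕ → Set ℝ, IsDetRep μ n B' →
      IsObedient μ n γ B' → IsIC n γ B' → payoff μ n v B' ≤ payoff μ n v B)
    (j k : ℕ) (hjk : j < k) (hk : k < n) (hvjk : v j < v k)
    (hj0 : μ (B j) ≠ 0) (hk0 : μ (B k) ≠ 0) : condMean μ (B k) = γ k := by
  have hjn : j < n := by omega
  have hMk : 0 < (μ (B k)).toReal := ENNReal.toReal_pos hk0 (measure_ne_top _ _)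
  have hMj : 0 < (μ (B j)).toReal := ENNReal.toReal_pos hj0 (measure_ne_top _ _)
  by_contra hne
  have hgt : γ k < condMean μ (B k) := lt_of_le_of_ne (hob k hk hk0).1 (Ne.symm hne)
  have hobj := (hob j hjn hj0).1
  rw [condMean, lt_div_iff₀ hMk] at hgt
  rw [condMean, le_div_iff₀ hMj] at hobj
  have cj := (hdet.1 j hjn).1
  have ck := (hdet.1 k hk).1
  have sj := (hdet.1 j hjn).2
  have sk := (hdet.1 k hk).2
  obtain ⟨t, ht0, htc⟩ := aux_cut μ (B j) cj.measurableSet sj hj0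
    ((∫ ω in B k, ω ∂μ) - γ k * (μ (B k)).toReal) (by linarith)
  set L := B j ∩ Iic t with hL
  set H := B j ∩ Ici t with hH
  have cL : IsClosed L := cj.inter isClosed_Iic
  have cH : IsClosed H := cj.inter isClosed_Ici
  have sL : L ⊆ Icc (0:ℝ) 1 := inter_subset_left.trans sj
  have sH : H ⊆ Icc (0:ℝ) 1 := inter_subset_left.trans sj
  have hLH : L ∪ H = B j := by
    rw [hL, hH, ← inter_union_distrib_left]
    simp
  have dLH : AEDisjoint μ L H := by
    refine measure_mono_null (t := {t}) ?_ (measure_singleton _)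
    rintro x ⟨hx, hx'⟩
    exact le_antisymm hx.2 hx'.2
  have dkL : AEDisjoint μ (B k) L :=
    measure_mono_null (inter_subset_inter_right _ inter_subset_left)
      (hdet.2.2 k hk j hjn (by omega))
  have mLH : (μ (B j)).toReal = (μ L).toReal + (μ H).toReal := by
    rw [← hLH, measure_union₀ cH.nullMeasurableSet dLH,
      ENNReal.toReal_add (measure_ne_top _ _) (measure_ne_top _ _)]
  have mkL : (μ (B k ∪ L)).toReal = (μ (B k)).toReal + (μ L).toReal := by
    rw [measure_union₀ cL.nullMeasurableSet dkL,
      ENNReal.toReal_add (measure_ne_top _ _) (measure_ne_top _ _)]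
  have iLH : ∫ ω in B j, ω ∂μ = (∫ ω in L, ω ∂μ) + ∫ ω in H, ω ∂μ := by
    rw [← hLH, integral_union_ae dLH cH.nullMeasurableSet (aux_int μ L cL.measurableSet sL)
      (aux_int μ H cH.measurableSet sH)]
  have ikL : ∫ ω in B k ∪ L, ω ∂μ = (∫ ω in B k, ω ∂μ) + ∫ ω in L, ω ∂μ := by
    rw [integral_union_ae dkL cL.nullMeasurableSet (aux_int μ _ ck.measurableSet sk)
      (aux_int μ L cL.measurableSet sL)]
  have iL0 : 0 ≤ ∫ ω in L, ω ∂μ :=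
    setIntegral_nonneg cL.measurableSet (fun x hx => (sL hx).1)
  have lowH : γ j * (μ H).toReal ≤ ∫ ω in H, ω ∂μ := by
    by_cases htj : t ≤ γ j
    · have : ∫ ω in L, (ω - γ j) ∂μ ≤ 0 :=
        setIntegral_nonpos cL.measurableSet (fun x hx => by
          have : x ≤ t := hx.2
          linarith)
      rw [aux_const μ L cL.measurableSet sL] at this
      rw [mLH, iLH] at hobj
      nlinarith
    · have : 0 ≤ ∫ ω in H, (ω - γ j) ∂μ :=
        setIntegral_nonneg cH.measurableSet (fun x hx => by
          have : t ≤ x := hx.2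
          linarith [not_le.mp htj])
      rw [aux_const μ H cH.measurableSet sH] at this
      linarith
  set B' : ℕ → Set ℝ := fun i => if i = j then H else if i = k then B k ∪ L else B i with hB'
  have Bj : B' j = H := by simp [hB']
  have Bk : B' k = B k ∪ L := by simp [hB', hjk.ne']
  have Bo : ∀ i, i ≠ j → i ≠ k → B' i = B i := by
    intro i h1 h2
    simp [hB', h1, h2]
  have Bsub : ∀ i, i ≠ j → B i ⊆ B' i := by
    intro i h1
    by_cases h2 : i = k
    · rw [h2, Bk]; exact subset_union_left
    · rw [Bo i h1 h2]
  -- points of `B i` lie in a set of `B'` with a weakly higher index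
  have Bup : ∀ i < n, ∀ x ∈ B i, ∃ m, i ≤ m ∧ m < n ∧ x ∈ B' m := by
    intro i hi x hx
    by_cases h1 : i = j
    · subst h1
      rw [← hLH] at hx
      rcases hx with hx | hx
      · exact ⟨k, hjk.le, hk, by rw [Bk]; exact Or.inr hx⟩
      · exact ⟨i, le_rfl, hi, by rw [Bj]; exact hx⟩
    · exact ⟨i, le_rfl, hi, Bsub i h1 hx⟩
  have Bprop : ∀ i < n, IsClosed (B' i) ∧ B' i ⊆ Icc (0:ℝ) 1 := by
    intro i hi
    by_cases h1 : i = j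
    · rw [h1, Bj]; exact ⟨cH, sH⟩
    · by_cases h2 : i = k
      · rw [h2, Bk]; exact ⟨ck.union cL, union_subset sk sL⟩
      · rw [Bo i h1 h2]; exact hdet.1 i hi
  have hdet' : IsDetRep μ n B' := by
    refine ⟨Bprop, ?_, ?_⟩
    · apply Subset.antisymm
      · intro x hx
        simp only [mem_iUnion, Finset.mem_range, exists_prop] at hx
        obtain ⟨i, hi, hx⟩ := hx
        exact (Bprop i hi).2 hx
      · intro x hx
        rw [← hdet.2.1] at hx
        simp only [mem_iUnion, Finset.mem_range, exists_prop] at hx ⊢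
        obtain ⟨i, hi, hx⟩ := hx
        obtain ⟨m, _, hm, hxm⟩ := Bup i hi x hx
        exact ⟨m, hm, hxm⟩
    · have hd := hdet.2.2
      have Hsub : H ⊆ B j := inter_subset_left
      have Lsub : L ⊆ B j := inter_subset_left
      have hjo : ∀ i < n, i ≠ j → μ (H ∩ B' i) = 0 := by
        intro i hi h1
        by_cases h2 : i = k
        · rw [h2, Bk, inter_union_distrib_left]
          refine measure_union_null ?_ ?_
          · exact measure_mono_null (inter_subset_inter_left _ Hsub) (hd j hjn k hk (by omega))
          · rw [inter_comm]; exact dLH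
        · rw [Bo i h1 h2]
          exact measure_mono_null (inter_subset_inter_left _ Hsub) (hd j hjn i hi (Ne.symm h1))
      have hko : ∀ i < n, i ≠ j → i ≠ k → μ ((B k ∪ L) ∩ B i) = 0 := by
        intro i hi h1 h2
        rw [union_inter_distrib_right]
        exact measure_union_null (hd k hk i hi (Ne.symm h2))
          (measure_mono_null (inter_subset_inter_left _ Lsub) (hd j hjn i hi (Ne.symm h1)))
      intro a ha b hb hab
      by_cases a1 : a = j
      · rw [a1, Bj]; exact hjo b hb (by omega)
      by_cases b1 : b = j
      · rw [b1, Bj, inter_comm]; exact hjo a ha (by omega)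
      by_cases a2 : a = k
      · rw [a2, Bk, Bo b b1 (by omega)]; exact hko b hb b1 (by omega)
      by_cases b2 : b = k
      · rw [b2, Bk, Bo a a1 a2, inter_comm]; exact hko a ha a1 a2
      rw [Bo a a1 a2, Bo b b1 b2]
      exact hd a ha b hb hab
  have hic' : IsIC n γ B' := by
    intro i hi x hx
    have := hic i hi hx
    simp only [mem_iUnion, Finset.mem_Ico, exists_prop] at this ⊢
    obtain ⟨l, hl, hxl⟩ := this
    obtain ⟨m, hlm, hm, hxm⟩ := Bup l hl.2 x hxl
    exact ⟨m, ⟨by omega, hm⟩, hxm⟩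
  have hob' : IsObedient μ n γ B' := by
    intro i hi h0
    have hM : 0 < (μ (B' i)).toReal := ENNReal.toReal_pos h0 (measure_ne_top _ _)
    constructor
    · rw [condMean, le_div_iff₀ hM]
      by_cases h1 : i = j
      · rw [h1, Bj]; exact lowH
      · by_cases h2 : i = k
        · rw [h2, Bk, mkL, ikL]
          nlinarith [hγk k hk.le]
        · rw [Bo i h1 h2] at h0 hM ⊢
          have := (hob i hi h0).1
          rwa [condMean, le_div_iff₀ hM] at this
    · rw [condMean, div_le_iff₀ hM]
      exact (aux_upper μ n γ hγn B' hdet' hic' i hi h0).le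
  have hfin := hmax B' hdet' hob' hic'
  have hdiff : payoff μ n v B' - payoff μ n v B = (v k - v j) * (μ L).toReal := by
    unfold payoff
    rw [← Finset.sum_sub_distrib,
      Finset.sum_eq_add_of_mem j k (Finset.mem_range.mpr hjn) (Finset.mem_range.mpr hk) hjk.ne]
    · rw [Bj, Bk, mkL, mLH]; ring
    · rintro c _ ⟨h1, h2⟩
      rw [Bo c h1 h2]; ring
  nlinarith [mul_pos (sub_pos.mpr hvjk) ht0]

theorem aux_pos (f : ℝ → ℝ) (hf : IsPrior f) (S : Set ℝ) (hS : S ⊆ Icc (0:ℝ) 1)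
    (hi : (interior S).Nonempty) : densMeasure f S ≠ 0 := by
  intro h
  have h1 : densMeasure f (interior S) = 0 := measure_mono_null interior_subset h
  rw [densMeasure, withDensity_apply_eq_zero' (by have := hf.meas; fun_prop),
    Measure.restrict_apply₀'] at h1
  · have h2 : {x | ENNReal.ofReal (f x) ≠ 0} ∩ interior S ∩ Icc 0 1 = interior S := by
      apply Subset.antisymm
      · rintro x hx; exact hx.1.2
      · intro x hx
        have hx1 := hS (interior_subset hx)
        refine ⟨⟨?_, hx⟩, hx1⟩
        simpa using hf.pos x hx1
    rw [h2] at h1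
    exact (isOpen_interior.measure_pos volume hi).ne' h1
  · exact measurableSet_Icc.nullMeasurableSet

/-- in a Sender-optimal obedient and IC deterministic representation,
the lowest recommended element has conditional mean in `[γ_j, γ_{j+1})`, and every
higher recommended element has conditional mean exactly at its cutoff. -/
theorem optimal_representation_means
    (f : ℝ → ℝ) (hf : IsPrior f)
    (n : ℕ) (hn : 2 ≤ n)
    (γ : ℕ → ℝ) (hγ0 : γ 0 = 0) (hγn : γ n = 1)
    (hγ : ∀ i < n, γ i < γ (i+1))
    (v : ℕ → ℝ) (hv0 : v 0 = 0) (hv : ∀ i, i + 1 < n → v i < v (i+1))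
    (B : ℕ → Set ℝ)
    (hdet : IsDetRep (densMeasure f) n B)
    (hob : IsObedient (densMeasure f) n γ B)
    (hic : IsIC n γ B)
    (hmax : ∀ B' : ℕ → Set ℝ, IsDetRep (densMeasure f) n B' →
      IsObedient (densMeasure f) n γ B' → IsIC n γ B' →
      payoff (densMeasure f) n v B' ≤ payoff (densMeasure f) n v B)
    (j : ℕ) (hjn : j < n) (hj : (interior (B j)).Nonempty)
    (hjmin : ∀ i < j, interior (B i) = ∅) :
    condMean (densMeasure f) (B j) ∈ Ico (γ j) (γ (j+1)) ∧
    ∀ k, j < k → k < n → (interior (B k)).Nonempty →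
      condMean (densMeasure f) (B k) = γ k := by
  haveI : IsProbabilityMeasure (densMeasure f) := ⟨hf.prob⟩
  haveI : NullSingletonClass (densMeasure f) := by unfold densMeasure; infer_instance
  have hj0 := aux_pos f hf (B j) (hdet.1 j hjn).2 hj
  have hM : 0 < (densMeasure f (B j)).toReal := ENNReal.toReal_pos hj0 (measure_ne_top _ _)
  refine ⟨⟨(hob j hjn hj0).1, ?_⟩, ?_⟩
  · rw [condMean, div_lt_iff₀ hM]
    exact aux_upper _ n γ hγn B hdet hic j hjn hj0
  · intro k hjk hk hki
    have hk0 := aux_pos f hf (B k) (hdet.1 k hk).2 hki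
    have hγ1 : ∀ i ≤ n, γ i ≤ 1 := by
      intro i hi
      induction hi using Nat.decreasingInduction with
      | self => exact hγn.le
      | of_succ m hm ih => exact (hγ m hm).le.trans ih
    have hvlt : ∀ m, j < m → m < n → v j < v m := by
      intro m hm
      induction m, hm using Nat.le_induction with
      | base => intro h; exact hv j h
      | succ m hm ih => intro h; exact (ih (by omega)).trans (hv m h)
    exact aux_main _ n γ hγ1 hγn v B hdet hob hic hmax j k hjk hk (hvlt k hjk hk) hj0 hk0

end VerifiableDisclosure
end
end

section
/- Let {B_i}_{i=0}^{n−1} be an obedient and incentive compatible deterministic representation whose Sender's ex ante payoff is maximal among all obedient and incentive compatible deterministic representations. Then there exists a laminar representation {B_i^L}_{i=0}^{n−1} that is obedient and incentive compatible and satisfies μ_F(B_i^L) = μ_F(B_i) and E[ω | ω ∈ B_i^L] = E[ω | ω ∈ B_i] for every i with μ_F(B_i) > 0; in particular {B_i^L} attains the same maximal Sender's ex ante payoff. -/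
open MeasureTheory Set

noncomputable section

namespace VerifiableDisclosure

/-- integrability of bounded functions on the unit interval -/
lemma integ01 {ρ : Measure ℝ} [IsFiniteMeasure ρ] {g : ℝ → ℝ} (hg : Measurable g)
    (h01 : ∀ᵐ x ∂ρ, 0 ≤ g x ∧ g x ≤ 1) : Integrable g ρ := by
  refine Integrable.of_bound hg.aestronglyMeasurable 1 ?_
  filter_upwards [h01] with x hx
  rw [Real.norm_eq_abs, abs_le]; constructor <;> linarith [hx.1, hx.2]

lemma integx01 {ρ : Measure ℝ} [IsFiniteMeasure ρ] {g : ℝ → ℝ} (hg : Measurable g)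
    (hs : ∀ᵐ x ∂ρ, x ∈ Icc (0:ℝ) 1)
    (h01 : ∀ᵐ x ∂ρ, 0 ≤ g x ∧ g x ≤ 1) : Integrable (fun x => x * g x) ρ := by
  refine Integrable.of_bound (measurable_id.mul hg).aestronglyMeasurable 1 ?_
  filter_upwards [h01, hs] with x hx hx'
  rw [Real.norm_eq_abs, abs_mul, abs_of_nonneg hx.1, abs_of_nonneg hx'.1]
  nlinarith [hx.1, hx.2, hx'.1, hx'.2]

lemma integid {ρ : Measure ℝ} [IsFiniteMeasure ρ] 
    (hs : ∀ᵐ x ∂ρ, x ∈ Icc (0:ℝ) 1) : Integrable (fun x : ℝ => x) ρ := by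
  have := integx01 (ρ := ρ) (g := fun _ => 1) measurable_const hs (by simp)
  simpa using this

/-- Bathtub principle in a general form. -/
lemma bathtub {ρ : Measure ℝ} [IsFiniteMeasure ρ] (hs : ∀ᵐ x ∂ρ, x ∈ Icc (0:ℝ) 1)
    {g : ℝ → ℝ} (hg : Measurable g) (h01 : ∀ᵐ x ∂ρ, 0 ≤ g x ∧ g x ≤ 1)
    {S : Set ℝ} (hS : MeasurableSet S) (hm : ρ.real S = ∫ x, g x ∂ρ) (b : ℝ) (e : ℝ)
    (h1 : ∀ x ∈ S, e * x ≤ e * b) (h2 : ∀ x, x ∉ S → e * b ≤ e * x) :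
    e * ∫ x in S, x ∂ρ ≤ e * ∫ x, x * g x ∂ρ := by
  have i1 := integ01 hg h01
  have i2 := integx01 hg hs h01
  have i3 := (integid hs).indicator hS
  have i4 : Integrable (S.indicator (fun _ => (1:ℝ))) ρ := (integrable_const 1).indicator hS
  have e3 : ∫ x, S.indicator (fun x => x) x ∂ρ = ∫ x in S, x ∂ρ := integral_indicator hS
  have e4 : ∫ x, S.indicator (fun _ => (1:ℝ)) x ∂ρ = ρ.real S := by
    rw [integral_indicator hS]; simp
  have key : 0 ≤ ∫ x, (e * (x * g x - S.indicator (fun x => x) x)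
      - e * b * (g x - S.indicator (fun _ => (1:ℝ)) x)) ∂ρ := by
    apply integral_nonneg_of_ae
    filter_upwards [h01] with x hx
    simp only [Pi.zero_apply]
    by_cases hxS : x ∈ S
    · simp only [indicator_of_mem hxS]
      nlinarith [mul_nonneg (sub_nonneg.2 (h1 x hxS)) (sub_nonneg.2 hx.2)]
    · simp only [indicator_of_notMem hxS]
      nlinarith [mul_nonneg (sub_nonneg.2 (h2 x hxS)) hx.1]
  have j1 : Integrable (fun x => e * (x * g x - S.indicator (fun x => x) x)) ρ :=
    (i2.sub i3).const_mul e
  have j2 : Integrable (fun x => e * b * (g x - S.indicator (fun _ => (1:ℝ)) x)) ρ :=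
    (i1.sub i4).const_mul _
  rw [integral_sub j1 j2, integral_const_mul,
    integral_const_mul, integral_sub i2 i3, integral_sub i1 i4, e3, e4, hm] at key
  linarith

lemma exists_interval_s16 {ρ : Measure ℝ} [IsFiniteMeasure ρ] [NullSingletonClass ρ]
    (hs : ∀ᵐ x ∂ρ, x ∈ Icc (0:ℝ) 1)
    {g : ℝ → ℝ} (hg : Measurable g) (h01 : ∀ᵐ x ∂ρ, 0 ≤ g x ∧ g x ≤ 1) :
    ∃ a b : ℝ, (a ≤ b ∧ 0 ≤ a ∧ b ≤ 1) ∧ ρ.real (Icc a b) = ∫ x, g x ∂ρ ∧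
      ∫ x in Icc a b, x ∂ρ = ∫ x, x * g x ∂ρ := by
  set F : ℝ → ℝ := fun x => ρ.real (Iic x) with hF
  set M := ρ.real univ with hM
  set m := ∫ x, g x ∂ρ with hm
  have i1 := integ01 hg h01
  have iid := integid hs
  have m0 : 0 ≤ m := integral_nonneg_of_ae (h01.mono fun x hx => hx.1)
  have mM : m ≤ M := by
    have : m ≤ ∫ x, (1:ℝ) ∂ρ := integral_mono_ae i1 (integrable_const 1) (h01.mono fun x hx => hx.2)
    simpa using this
  have hdiff : ∀ x y, x ≤ y → F y - F x = ρ.real (Ioc x y) := by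
    intro x y hxy
    have : Iic y = Iic x ∪ Ioc x y := by rw [Iic_union_Ioc_eq_Iic hxy]
    simp only [hF]
    rw [this, measureReal_union (by
      rw [Set.disjoint_left]; intro z hz hz'; exact absurd hz'.1 (not_lt.2 hz)) measurableSet_Ioc]
    ring
  have hmono : Monotone F := fun x y hxy => measureReal_mono (Iic_subset_Iic.2 hxy)
  have hF0 : F 0 = 0 := by
    have : ρ (Iic (0:ℝ)) = 0 := by
      have h0 : ρ (Iic (0:ℝ)) ≤ ρ ({0} ∪ (Icc (0:ℝ) 1)ᶜ) := by
        apply measure_mono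
        intro x hx
        by_cases h : x = 0
        · left; exact h
        · right; intro h'; exact h (le_antisymm hx h'.1)
      have h2 : ρ ((Icc (0:ℝ) 1)ᶜ) = 0 := hs
      have h1 : ρ ({0} ∪ (Icc (0:ℝ) 1)ᶜ) = 0 := by
        rw [measure_union_null_iff]; exact ⟨measure_singleton _, h2⟩
      exact le_antisymm (h0.trans h1.le) bot_le
    simp [hF, measureReal_def, this]
  have hF1 : F 1 = M := by
    simp only [hF, hM, measureReal_def]
    congr 1
    apply measure_congr
    filter_upwards [hs] with x hx
    simp only [eq_iff_iff]
    exact ⟨fun _ => trivial, fun _ => hx.2⟩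
  have hcont : Continuous F := by
    have h1 : Continuous fun x => ∫ t in (0:ℝ)..x, (1:ℝ) ∂ρ :=
      intervalIntegral.continuous_primitive (fun a b => by simp) 0
    have : F = fun x => (∫ t in (0:ℝ)..x, (1:ℝ) ∂ρ) := by
      funext x
      rcases le_total 0 x with hx | hx
      · rw [intervalIntegral.integral_of_le hx]
        have := hdiff 0 x hx
        simp [← this, hF0]
      · rw [intervalIntegral.integral_of_ge hx]
        have := hdiff x 0 hx
        simp [← this, hF0]
    rw [this]; exact h1
  have hq : ∀ s ∈ Icc 0 M, ∃ x ∈ Icc (0:ℝ) 1, F x = s := by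
    intro s hs'
    have := intermediate_value_Icc (zero_le_one (α := ℝ)) hcont.continuousOn
    rw [hF0, hF1] at this
    obtain ⟨x, hx, h⟩ := this hs'
    exact ⟨x, hx, h⟩
  choose! q hq01 hqF using hq
  set P : ℝ → ℝ := fun x => ∫ t in Iic x, t ∂ρ with hP
  have hPdiff : ∀ x y, x ≤ y → P y - P x = ∫ t in Ioc x y, t ∂ρ := by
    intro x y hxy
    have : Iic y = Iic x ∪ Ioc x y := by rw [Iic_union_Ioc_eq_Iic hxy]
    simp only [hP]
    rw [this, setIntegral_union (by
      rw [Set.disjoint_left]; intro z hz hz'; exact absurd hz'.1 (not_lt.2 hz)) measurableSet_Ioc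
      iid.integrableOn iid.integrableOn]
    ring
  have hLip0 : ∀ x y, x ≤ y → |P y - P x| ≤ F y - F x := by
    intro x y hxy
    rw [hPdiff x y hxy, hdiff x y hxy]
    have := norm_setIntegral_le_of_norm_le_const_ae' (μ := ρ) (s := Ioc x y) (f := fun t => t) (C := 1)
      (measure_lt_top _ _) (by
        filter_upwards [hs] with t ht _
        rw [Real.norm_eq_abs, abs_of_nonneg ht.1]; exact ht.2)
    simpa using this
  have hLip : ∀ x y, |P y - P x| ≤ |F y - F x| := by
    intro x y
    rcases le_total x y with h | h
    · exact (hLip0 x y h).trans (le_abs_self _)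
    · rw [abs_sub_comm, abs_sub_comm (F y)]
      exact (hLip0 y x h).trans (le_abs_self _)
  have hHc : ContinuousOn (fun s => P (q s)) (Icc 0 M) := by
    have : LipschitzOnWith 1 (fun s => P (q s)) (Icc 0 M) := by
      apply LipschitzOnWith.of_dist_le_mul
      intro s hs t ht
      rw [Real.dist_eq, Real.dist_eq]
      have := hLip (q t) (q s)
      rw [hqF s hs, hqF t ht] at this
      simpa using this
    exact this.continuousOn
  have hW : ContinuousOn (fun s => P (q (s + m)) - P (q s)) (Icc 0 (M - m)) := by
    apply ContinuousOn.sub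
    · exact hHc.comp (f := fun s => s + m) (by fun_prop)
        (fun s hs => ⟨by linarith [hs.1], by linarith [hs.2]⟩)
    · exact hHc.mono (fun s hs => ⟨hs.1, by linarith [hs.2]⟩)
  have hqle : ∀ s ∈ Icc 0 (M - m), 0 < m → q s ≤ q (s+m) := by
    intro s hs hm'
    by_contra hlt
    have := hmono (not_le.1 hlt).le
    rw [hqF s ⟨hs.1, by linarith [hs.2]⟩, hqF (s+m) ⟨by linarith [hs.1], by linarith [hs.2]⟩] at this
    linarith
  rcases m0.eq_or_lt with hm0 | hm0
  · -- null case
    refine ⟨0, 0, ⟨le_rfl, le_rfl, zero_le_one⟩, by simp [← hm0, measureReal_def], ?_⟩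
    have hz : g =ᵐ[ρ] 0 := (integral_eq_zero_iff_of_nonneg_ae (h01.mono fun x hx => hx.1) i1).1 hm0.symm
    have : ∫ x, x * g x ∂ρ = 0 := by
      apply integral_eq_zero_of_ae
      filter_upwards [hz] with x hx
      simp [hx]
    rw [this]; simp
  have hMm : 0 ≤ M - m := by linarith
  have Wl : P (q (0 + m)) - P (q 0) ≤ ∫ x, x * g x ∂ρ := by
    have hle := hqle 0 ⟨le_rfl, hMm⟩ hm0
    have hP0 : P (q 0) = 0 := by
      have h0 : F (q 0) = 0 := hqF 0 ⟨le_rfl, by linarith⟩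
      have := hLip 0 (q 0)
      rw [h0, hF0, sub_self, abs_zero] at this
      have h3 : P 0 = 0 := by
        simp only [hP]
        apply setIntegral_measure_zero
        exact (measureReal_eq_zero_iff).1 hF0
      have := abs_nonpos_iff.1 this
      linarith
    rw [hP0, sub_zero]
    have := bathtub hs hg h01 (S := Iic (q (0+m))) measurableSet_Iic
      (by have := hqF (0+m) ⟨by linarith, by linarith⟩; simp only [hF] at this; rw [this]; simp [hm])
      (q (0+m)) 1 (fun x hx => by simpa using hx) (fun x hx => by have := not_le.1 (mt mem_Iic.2 hx); linarith)
    simpa [hP] using this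
  have Wr : ∫ x, x * g x ∂ρ ≤ P (q (M - m + m)) - P (q (M - m)) := by
    have hle := hqle (M-m) ⟨hMm, le_rfl⟩ hm0
    have hFM : F (q (M - m + m)) = M := by
      have := hqF (M-m+m) ⟨by linarith, by linarith⟩
      rw [this]; ring
    have hFm : F (q (M-m)) = M - m := hqF (M-m) ⟨by linarith, by linarith⟩
    have hPM : P (q (M-m+m)) = ∫ x, x ∂ρ := by
      have := hLip 1 (q (M-m+m))
      rw [hFM, hF1, sub_self, abs_zero] at this
      have := abs_nonpos_iff.1 this
      have h3 : P 1 = ∫ x, x ∂ρ := by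
        simp only [hP]
        have : ρ.restrict (Iic 1) = ρ := Measure.restrict_eq_self_of_ae_mem (hs.mono fun x hx => hx.2)
        rw [this]
      linarith
    have hcomp : (∫ x in Ioi (q (M-m)), x ∂ρ) = P (q (M - m + m)) - P (q (M - m)) := by
      have := integral_add_compl (μ := ρ) (f := fun x => x) (measurableSet_Iic (a := q (M-m))) iid
      rw [compl_Iic] at this
      rw [hPM, ← this]; simp only [hP]; ring
    have hmass : ρ.real (Ioi (q (M-m))) = m := by
      have := measureReal_add_measureReal_compl (μ := ρ) (measurableSet_Iic (a := q (M-m)))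
      rw [compl_Iic] at this
      simp only [hF] at hFm
      linarith
    have := bathtub hs hg h01 (S := Ioi (q (M-m))) measurableSet_Ioi hmass (q (M-m)) (-1)
      (fun x hx => by have := mem_Ioi.1 hx; linarith) (fun x hx => by have := not_lt.1 (mt mem_Ioi.2 hx); linarith)
    rw [hcomp] at this; linarith
  obtain ⟨s, hs', hsW⟩ := intermediate_value_Icc hMm hW ⟨Wl, Wr⟩
  have hle := hqle s hs' hm0
  have hae : Ioc (q s) (q (s+m)) =ᵐ[ρ] Icc (q s) (q (s+m)) := Ioc_ae_eq_Icc
  refine ⟨q s, q (s+m), ⟨hle, (hq01 s ⟨hs'.1, by linarith [hs'.2]⟩).1,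
    (hq01 (s+m) ⟨by linarith [hs'.1], by linarith [hs'.2]⟩).2⟩, ?_, ?_⟩
  · rw [← measureReal_congr hae, ← hdiff _ _ hle, hqF s ⟨hs'.1, by linarith [hs'.2]⟩,
      hqF (s+m) ⟨by linarith [hs'.1], by linarith [hs'.2]⟩]; ring
  · rw [← setIntegral_congr_set hae, ← hPdiff _ _ hle, ← hsW]

lemma side {ρ : Measure ℝ} [IsFiniteMeasure ρ] (hs : ∀ᵐ x ∂ρ, x ∈ Icc (0:ℝ) 1)
    {h : ℝ → ℝ} (hm : Measurable h) (h01 : ∀ᵐ x ∂ρ, 0 ≤ h x ∧ h x ≤ 1)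
    {T : Set ℝ} (hT : MeasurableSet T) (b e : ℝ) (hTb : ∀ x ∈ T, e * b < e * x) :
    0 ≤ ∫ x in T, h x ∂ρ ∧
    ((∫ x in T, h x ∂ρ) = 0 → (∀ᵐ x ∂ρ, x ∈ T → h x = 0) ∧ ∫ x in T, x * h x ∂ρ = 0) ∧
    ((∫ x in T, h x ∂ρ) ≠ 0 → e * (b * ∫ x in T, h x ∂ρ) < e * ∫ x in T, x * h x ∂ρ) := by
  have i1 := (integ01 hm h01).integrableOn (s := T)
  have i2 := (integx01 hm hs h01).integrableOn (s := T)
  have hnn : 0 ≤ᵐ[ρ.restrict T] h := ae_restrict_of_ae (h01.mono fun x hx => hx.1)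
  refine ⟨integral_nonneg_of_ae hnn, ?_, ?_⟩
  · intro h0
    have h1 := (integral_eq_zero_iff_of_nonneg_ae hnn i1).1 h0
    refine ⟨(ae_restrict_iff' hT).1 h1, integral_eq_zero_of_ae ?_⟩
    filter_upwards [h1] with x hx
    simp [hx]
  · intro hne
    have i3 : Integrable (fun x => e * (x * h x) - e * b * h x) (ρ.restrict T) :=
      (i2.const_mul e).sub (i1.const_mul _)
    have hTm : ∀ᵐ x ∂ρ.restrict T, x ∈ T := ae_restrict_mem hT
    have hnn2 : 0 ≤ᵐ[ρ.restrict T] (fun x => e * (x * h x) - e * b * h x) := by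
      filter_upwards [hnn, hTm] with x hx hxT
      have := hTb x hxT
      simp only [Pi.zero_apply] at hx ⊢
      nlinarith [mul_nonneg hx (sub_nonneg.2 this.le)]
    have hge := integral_nonneg_of_ae hnn2
    have heq : ∫ x in T, (e * (x * h x) - e * b * h x) ∂ρ =
        e * ∫ x in T, x * h x ∂ρ - e * (b * ∫ x in T, h x ∂ρ) := by
      have j1 : Integrable (fun x => e * (x * h x)) (ρ.restrict T) := i2.const_mul e
      have j2 : Integrable (fun x => e * b * h x) (ρ.restrict T) := i1.const_mul _
      rw [integral_sub j1 j2, integral_const_mul, integral_const_mul]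
      ring
    rcases hge.eq_or_lt with h0 | h0
    · exfalso
      apply hne
      have h1 := (integral_eq_zero_iff_of_nonneg_ae hnn2 i3).1 h0.symm
      apply integral_eq_zero_of_ae
      filter_upwards [h1, hTm] with x hx hxT
      have := hTb x hxT
      simp only [Pi.zero_apply] at hx ⊢
      have h2 : (e * x - e * b) * h x = 0 := by linarith
      rcases mul_eq_zero.1 h2 with h3 | h3
      · linarith
      · exact h3
    · linarith

/-- The purely algebraic part of the redistribution step. -/
lemma redistribute (N : ℕ) (a b l r lx rx : ℝ) (d e : ℕ → ℝ) (hab : a ≤ b)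
    (hl : 0 ≤ l) (hr : 0 ≤ r) (hl0 : l = 0 → lx = 0) (hr0 : r = 0 → rx = 0)
    (hl1 : l ≠ 0 → lx < a * l) (hr1 : r ≠ 0 → b * r < rx)
    (hd : ∀ i < N, 0 ≤ d i)
    (hea : ∀ i < N, a * d i ≤ e i) (heb : ∀ i < N, e i ≤ b * d i)
    (hsd : ∑ i ∈ Finset.range N, d i = l + r) (hse : ∑ i ∈ Finset.range N, e i = lx + rx) :
    (r = 0 → l = 0) ∧ ∃ A B : ℕ → ℝ, (∀ i < N, 0 ≤ A i ∧ 0 ≤ B i ∧ A i * l + B i * r = d i ∧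
      A i * lx + B i * rx = e i) ∧ (l = 0 ∨ ∑ i ∈ Finset.range N, A i = 1) ∧
      (r = 0 ∨ ∑ i ∈ Finset.range N, B i = 1) := by
  have s1 : a * (l + r) ≤ lx + rx := by
    rw [← hsd, ← hse, Finset.mul_sum]
    exact Finset.sum_le_sum fun i hi => hea i (Finset.mem_range.1 hi)
  have s2 : lx + rx ≤ b * (l + r) := by
    rw [← hsd, ← hse, Finset.mul_sum]
    exact Finset.sum_le_sum fun i hi => heb i (Finset.mem_range.1 hi)
  have hrl : r = 0 → l = 0 := by
    intro h; by_contra h'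
    have := hl1 h'
    rw [h, hr0 h] at s1; linarith
  have hlr : l = 0 → r = 0 := by
    intro h; by_contra h'
    have := hr1 h'
    rw [h, hl0 h] at s2; linarith
  refine ⟨hrl, ?_⟩
  by_cases h : l = 0
  · have hr' := hlr h
    refine ⟨0, 0, ?_, Or.inl h, Or.inl hr'⟩
    intro i hi
    have hz : d i = 0 := by
      rw [h, hr', add_zero] at hsd
      exact (Finset.sum_eq_zero_iff_of_nonneg
        (fun i hi => hd i (Finset.mem_range.1 hi))).1 hsd i (Finset.mem_range.2 hi)
    have := hea i hi
    have := heb i hi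
    rw [hz] at *
    refine ⟨le_rfl, le_rfl, by simp, ?_⟩
    simp; linarith
  · have hr' : r ≠ 0 := fun h' => h (hrl h')
    have hlp : 0 < l := lt_of_le_of_ne hl (Ne.symm h)
    have hrp : 0 < r := lt_of_le_of_ne hr (Ne.symm hr')
    have hlx := hl1 h
    have hrx := hr1 hr'
    have hΔ : 0 < l * rx - lx * r := by
      nlinarith [mul_pos hlp hrp, mul_lt_mul_of_pos_left hrx hlp, mul_lt_mul_of_pos_right hlx hrp,
        mul_nonneg (mul_pos hlp hrp).le (sub_nonneg.2 hab)]
    refine ⟨fun i => (d i * rx - e i * r) / (l * rx - lx * r),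
      fun i => (l * e i - lx * d i) / (l * rx - lx * r), ?_, Or.inr ?_, Or.inr ?_⟩
    · intro i hi
      have h1 := hd i hi
      have h2 := hea i hi
      have h3 := heb i hi
      refine ⟨div_nonneg ?_ hΔ.le, div_nonneg ?_ hΔ.le, ?_, ?_⟩
      · nlinarith [mul_le_mul_of_nonneg_left hrx.le h1, mul_le_mul_of_nonneg_right h3 hr]
      · nlinarith [mul_le_mul_of_nonneg_right hlx.le h1, mul_le_mul_of_nonneg_left h2 hl]
      · rw [div_mul_eq_mul_div, div_mul_eq_mul_div, ← add_div, div_eq_iff hΔ.ne']; ring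
      · rw [div_mul_eq_mul_div, div_mul_eq_mul_div, ← add_div, div_eq_iff hΔ.ne']; ring
    · rw [← Finset.sum_div, Finset.sum_sub_distrib, ← Finset.sum_mul, ← Finset.sum_mul, hsd, hse,
        div_eq_one_iff_eq hΔ.ne']
      ring
    · rw [← Finset.sum_div, Finset.sum_sub_distrib, ← Finset.mul_sum, ← Finset.mul_sum, hsd, hse,
        div_eq_one_iff_eq hΔ.ne']
      ring

lemma step {ρ : Measure ℝ} [IsFiniteMeasure ρ] [NullSingletonClass ρ]
    (hs : ∀ᵐ x ∂ρ, x ∈ Icc (0:ℝ) 1) (N : ℕ) (c : ℕ → ℝ) (g : ℕ → ℝ → ℝ)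
    (hgm : ∀ i, Measurable (g i)) (h0 : ∀ᵐ x ∂ρ, ∀ i < N + 1, 0 ≤ g i x)
    (hc : ∀ᵐ x ∂ρ, ∀ i < N + 1, c i < x → g i x = 0)
    (hsum : ∀ᵐ x ∂ρ, ∑ i ∈ Finset.range (N + 1), g i x = 1)
    (hcm : ∀ i < N + 1, c 0 ≤ c i) :
    ∃ a b : ℝ, (a ≤ b ∧ 0 ≤ a ∧ b ≤ 1) ∧ ρ.real (Icc a b) = ∫ x, g 0 x ∂ρ ∧
      ∫ x in Icc a b, x ∂ρ = ∫ x, x * g 0 x ∂ρ ∧ ρ (Icc a b ∩ Ioi (c 0)) = 0 ∧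
      ∃ g' : ℕ → ℝ → ℝ, (∀ i, Measurable (g' i)) ∧
        (∀ᵐ x ∂(ρ.restrict (Icc a b)ᶜ), ∀ i < N, 0 ≤ g' i x) ∧
        (∀ᵐ x ∂(ρ.restrict (Icc a b)ᶜ), ∀ i < N, c (i+1) < x → g' i x = 0) ∧
        (∀ᵐ x ∂(ρ.restrict (Icc a b)ᶜ), ∑ i ∈ Finset.range N, g' i x = 1) ∧
        (∀ i < N, ∫ x in (Icc a b)ᶜ, g' i x ∂ρ = ∫ x, g (i+1) x ∂ρ) ∧
        (∀ i < N, ∫ x in (Icc a b)ᶜ, x * g' i x ∂ρ = ∫ x, x * g (i+1) x ∂ρ) := by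
  have h01 : ∀ i < N + 1, ∀ᵐ x ∂ρ, 0 ≤ g i x ∧ g i x ≤ 1 := by
    intro i hi
    filter_upwards [h0, hsum] with x hx hx1
    refine ⟨hx i hi, ?_⟩
    rw [← hx1]
    exact Finset.single_le_sum (f := fun i => g i x) (fun j hj => hx j (Finset.mem_range.1 hj))
      (Finset.mem_range.2 hi)
  have I1 : ∀ i < N + 1, Integrable (g i) ρ := fun i hi => integ01 (hgm i) (h01 i hi)
  have I2 : ∀ i < N + 1, Integrable (fun x => x * g i x) ρ :=
    fun i hi => integx01 (hgm i) hs (h01 i hi)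
  obtain ⟨a, b, ⟨hab, ha0, hb1⟩, hmass, hmom⟩ := exists_interval_s16 hs (hgm 0) (h01 0 (by omega))
  set D := Icc a b with hD
  have hDm : MeasurableSet D := measurableSet_Icc
  set L := Iio a with hL
  set T := Ioi b with hT
  have hLm : MeasurableSet L := measurableSet_Iio
  have hTm : MeasurableSet T := measurableSet_Ioi
  have hDc : Dᶜ = L ∪ T := by
    ext x; simp only [hD, hL, hT, mem_compl_iff, mem_Icc, mem_union, mem_Iio, mem_Ioi]
    rw [not_and_or, not_le, not_le]
  have hLT : Disjoint L T := by
    rw [Set.disjoint_left]; intro x hx hx'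
    have h1 := mem_Iio.1 hx
    have h2 := mem_Ioi.1 hx'
    linarith
  have split : ∀ φ : ℝ → ℝ, Integrable φ ρ →
      ∫ x in Dᶜ, φ x ∂ρ = ∫ x in L, φ x ∂ρ + ∫ x in T, φ x ∂ρ := by
    intro φ hφ
    rw [hDc]; exact setIntegral_union hLT hTm hφ.integrableOn hφ.integrableOn
  have split2 : ∀ φ : ℝ → ℝ, Integrable φ ρ →
      ∫ x, φ x ∂ρ = ∫ x in D, φ x ∂ρ + ∫ x in Dᶜ, φ x ∂ρ := by
    intro φ hφ
    exact (integral_add_compl hDm hφ).symm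
  obtain ⟨hl, hl0, hl1⟩ := side hs (hgm 0) (h01 0 (by omega)) hLm a (-1)
    (fun x hx => by have := mem_Iio.1 hx; linarith)
  obtain ⟨hr, hr0, hr1⟩ := side hs (hgm 0) (h01 0 (by omega)) hTm b 1
    (fun x hx => by have := mem_Ioi.1 hx; linarith)
  have sumD : ∑ i ∈ Finset.range N, ∫ x in D, g (i+1) x ∂ρ =
      ∫ x in L, g 0 x ∂ρ + ∫ x in T, g 0 x ∂ρ := by
    have e1 : ρ.real D = ∫ x in D, ∑ i ∈ Finset.range (N+1), g i x ∂ρ := by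
      have : ∫ x in D, ∑ i ∈ Finset.range (N+1), g i x ∂ρ = ∫ x in D, (1:ℝ) ∂ρ :=
        integral_congr_ae (ae_restrict_of_ae hsum)
      rw [this]; simp
    rw [integral_finsetSum _ (fun i hi => (I1 i (Finset.mem_range.1 hi)).integrableOn),
      Finset.sum_range_succ', hmass, split2 _ (I1 0 (by omega)), split _ (I1 0 (by omega))] at e1
    linarith
  have sumE : ∑ i ∈ Finset.range N, ∫ x in D, x * g (i+1) x ∂ρ =
      ∫ x in L, x * g 0 x ∂ρ + ∫ x in T, x * g 0 x ∂ρ := by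
    have e1 : ∫ x in D, x ∂ρ = ∫ x in D, ∑ i ∈ Finset.range (N+1), x * g i x ∂ρ := by
      apply integral_congr_ae
      apply ae_restrict_of_ae
      filter_upwards [hsum] with x hx
      rw [← Finset.mul_sum, hx, mul_one]
    rw [integral_finsetSum _ (fun i hi => (I2 i (Finset.mem_range.1 hi)).integrableOn),
      Finset.sum_range_succ', hmom, split2 _ (I2 0 (by omega)), split _ (I2 0 (by omega))] at e1
    linarith
  have nnD : ∀ i < N, 0 ≤ᵐ[ρ.restrict D] g (i+1) := fun i hi =>
    ae_restrict_of_ae ((h01 (i+1) (by omega)).mono fun x hx => hx.1)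
  obtain ⟨hrl, A, B, hAB, hA1, hB1⟩ := redistribute N a b _ _ _ _
    (fun i => ∫ x in D, g (i+1) x ∂ρ) (fun i => ∫ x in D, x * g (i+1) x ∂ρ) hab hl hr
    (fun h => (hl0 h).2) (fun h => (hr0 h).2) (fun h => by have := hl1 h; linarith)
    (fun h => by have := hr1 h; linarith)
    (fun i hi => integral_nonneg_of_ae (nnD i hi))
    (fun i hi => by
      rw [← integral_const_mul]
      apply integral_mono_ae ((I1 (i+1) (by omega)).integrableOn.const_mul _)
        (I2 (i+1) (by omega)).integrableOn
      filter_upwards [nnD i hi, ae_restrict_mem hDm] with x hx hxD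
      exact mul_le_mul_of_nonneg_right hxD.1 hx)
    (fun i hi => by
      rw [← integral_const_mul]
      apply integral_mono_ae (I2 (i+1) (by omega)).integrableOn
        ((I1 (i+1) (by omega)).integrableOn.const_mul _)
      filter_upwards [nnD i hi, ae_restrict_mem hDm] with x hx hxD
      exact mul_le_mul_of_nonneg_right hxD.2 hx) sumD sumE
  refine ⟨a, b, ⟨hab, ha0, hb1⟩, hmass, hmom, ?_, ?_⟩
  · by_cases hr' : ∫ x in T, g 0 x ∂ρ = 0
    · have hl' := hrl hr'
      have e1 : ∫ x in D, (1 - g 0 x) ∂ρ = 0 := by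
        rw [integral_sub (integrable_const _) (I1 0 (by omega)).integrableOn]
        have := split2 _ (I1 0 (by omega))
        rw [split _ (I1 0 (by omega)), hl', hr', ← hmass] at this
        simp; linarith
      have i3 : Integrable (fun x => 1 - g 0 x) (ρ.restrict D) :=
        (integrable_const _).sub (I1 0 (by omega)).integrableOn
      have e2 := (integral_eq_zero_iff_of_nonneg_ae (ae_restrict_of_ae
        ((h01 0 (by omega)).mono fun x hx => by
          simp only [Pi.zero_apply]; linarith [hx.2])) i3).1 e1
      have e3 := (ae_restrict_iff' hDm).1 e2
      have : ∀ᵐ x ∂ρ, x ∉ D ∩ Ioi (c 0) := by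
        filter_upwards [e3, hc] with x hx hx2 hx3
        have h1 := hx hx3.1
        have h2 := hx2 0 (by omega) hx3.2
        simp [h2] at h1
      exact measure_eq_zero_iff_ae_notMem.2 this
    · have hbc : b < c 0 := by
        by_contra hcb
        apply hr'
        apply integral_eq_zero_of_ae
        filter_upwards [ae_restrict_of_ae hc, ae_restrict_mem hTm] with x hx hxT
        exact hx 0 (by omega) (lt_of_le_of_lt (not_lt.1 hcb) hxT)
      have : D ∩ Ioi (c 0) = ∅ := by
        ext x
        simp only [mem_inter_iff, mem_Ioi, mem_empty_iff_false, iff_false, not_and, not_lt]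
        intro hx
        exact hx.2.trans hbc.le
      rw [this]; simp
  · have Jl : Integrable (L.indicator (g 0)) ρ := (I1 0 (by omega)).indicator hLm
    have Jt : Integrable (T.indicator (g 0)) ρ := (I1 0 (by omega)).indicator hTm
    have Jl2 : Integrable (L.indicator (fun x => x * g 0 x)) ρ := (I2 0 (by omega)).indicator hLm
    have Jt2 : Integrable (T.indicator (fun x => x * g 0 x)) ρ := (I2 0 (by omega)).indicator hTm
    have LD : L ∩ Dᶜ = L := by rw [hDc]; simp
    have TD : T ∩ Dᶜ = T := by rw [hDc]; simp
    have indL : ∀ φ : ℝ → ℝ, ∫ x in Dᶜ, L.indicator φ x ∂ρ = ∫ x in L, φ x ∂ρ := by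
      intro φ
      rw [setIntegral_indicator hLm, inter_comm, LD]
    have indT : ∀ φ : ℝ → ℝ, ∫ x in Dᶜ, T.indicator φ x ∂ρ = ∫ x in T, φ x ∂ρ := by
      intro φ
      rw [setIntegral_indicator hTm, inter_comm, TD]
    refine ⟨fun i x => g (i+1) x + A i * L.indicator (g 0) x + B i * T.indicator (g 0) x,
      ?_, ?_, ?_, ?_, ?_, ?_⟩
    · intro i
      exact ((hgm _).add (((hgm 0).indicator hLm).const_mul _)).add
        (((hgm 0).indicator hTm).const_mul _)
    · apply ae_restrict_of_ae
      filter_upwards [h0] with x hx i hi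
      have h1 := hx (i+1) (by omega)
      have h2 : 0 ≤ L.indicator (g 0) x := by
        by_cases h : x ∈ L
        · rw [indicator_of_mem h]; exact hx 0 (by omega)
        · rw [indicator_of_notMem h]
      have h3 : 0 ≤ T.indicator (g 0) x := by
        by_cases h : x ∈ T
        · rw [indicator_of_mem h]; exact hx 0 (by omega)
        · rw [indicator_of_notMem h]
      have := hAB i hi
      have := mul_nonneg this.1 h2
      have := mul_nonneg (hAB i hi).2.1 h3
      linarith
    · apply ae_restrict_of_ae
      filter_upwards [hc] with x hx i hi hci
      have h1 := hx (i+1) (by omega) hci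
      have h2 := hx 0 (by omega) (lt_of_le_of_lt (hcm (i+1) (by omega)) hci)
      simp [h1, indicator_apply, h2]
    · rw [ae_restrict_iff' hDm.compl]
      have hLz : ∀ᵐ x ∂ρ, x ∈ L → (∑ i ∈ Finset.range N, A i) * g 0 x = g 0 x := by
        rcases hA1 with h | h
        · filter_upwards [(hl0 h).1] with x hx hxL
          rw [hx hxL, mul_zero]
        · filter_upwards with x _
          rw [h, one_mul]
      have hTz : ∀ᵐ x ∂ρ, x ∈ T → (∑ i ∈ Finset.range N, B i) * g 0 x = g 0 x := by
        rcases hB1 with h | h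
        · filter_upwards [(hr0 h).1] with x hx hxL
          rw [hx hxL, mul_zero]
        · filter_upwards with x _
          rw [h, one_mul]
      filter_upwards [hsum, hLz, hTz] with x hx hxL hxT hxD
      rw [Finset.sum_range_succ'] at hx
      rw [Finset.sum_add_distrib, Finset.sum_add_distrib, ← Finset.sum_mul, ← Finset.sum_mul]
      rw [hDc] at hxD
      rcases hxD with h | h
      · have h' : x ∉ T := fun h' => Set.disjoint_left.1 hLT h h'
        rw [indicator_of_mem h, indicator_of_notMem h', hxL h]; linarith
      · have h' : x ∉ L := fun h' => Set.disjoint_left.1 hLT h' h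
        rw [indicator_of_mem h, indicator_of_notMem h', hxT h]; linarith
    · intro i hi
      have j1 : Integrable (g (i+1)) (ρ.restrict Dᶜ) := (I1 (i+1) (by omega)).integrableOn
      have j2 : Integrable (fun x => A i * L.indicator (g 0) x) (ρ.restrict Dᶜ) :=
        Jl.integrableOn.const_mul _
      have j3 : Integrable (fun x => B i * T.indicator (g 0) x) (ρ.restrict Dᶜ) :=
        Jt.integrableOn.const_mul _
      have j4 : Integrable (fun x => g (i+1) x + A i * L.indicator (g 0) x) (ρ.restrict Dᶜ) :=
        j1.add j2
      rw [integral_add j4 j3, integral_add j1 j2, integral_const_mul, integral_const_mul,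
        indL, indT, split2 _ (I1 (i+1) (by omega)), ← (hAB i hi).2.2.1]
      ring
    · intro i hi
      have j1 : Integrable (fun x => x * g (i+1) x) (ρ.restrict Dᶜ) :=
        (I2 (i+1) (by omega)).integrableOn
      have j2 : Integrable (fun x => A i * L.indicator (fun x => x * g 0 x) x) (ρ.restrict Dᶜ) :=
        Jl2.integrableOn.const_mul _
      have j3 : Integrable (fun x => B i * T.indicator (fun x => x * g 0 x) x) (ρ.restrict Dᶜ) :=
        Jt2.integrableOn.const_mul _
      have j4 : Integrable (fun x => x * g (i+1) x + A i * L.indicator (fun x => x * g 0 x) x)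
        (ρ.restrict Dᶜ) := j1.add j2
      have e1 : (fun x => x * (g (i+1) x + A i * L.indicator (g 0) x + B i * T.indicator (g 0) x))
          = fun x => x * g (i+1) x + A i * L.indicator (fun x => x * g 0 x) x +
            B i * T.indicator (fun x => x * g 0 x) x := by
        funext x
        simp only [indicator_apply]
        split_ifs <;> ring
      rw [e1, integral_add j4 j3, integral_add j1 j2, integral_const_mul, integral_const_mul,
        indL, indT, split2 _ (I2 (i+1) (by omega)), ← (hAB i hi).2.2.2]
      ring

lemma main_induction (N : ℕ) : ∀ (ρ : Measure ℝ) [IsFiniteMeasure ρ] [NullSingletonClass ρ]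
    (_ : ∀ᵐ x ∂ρ, x ∈ Icc (0:ℝ) 1) (c : ℕ → ℝ) (g : ℕ → ℝ → ℝ)
    (_ : ∀ i, Measurable (g i)) (_ : ∀ᵐ x ∂ρ, ∀ i < N, 0 ≤ g i x)
    (_ : ∀ᵐ x ∂ρ, ∀ i < N, c i < x → g i x = 0)
    (_ : ∀ᵐ x ∂ρ, ∑ i ∈ Finset.range N, g i x = 1)
    (_ : ∀ i j, i ≤ j → j < N → c i ≤ c j),
    ∃ I : ℕ → Set ℝ, ∀ i < N, (∃ a b : ℝ, I i = Icc a b ∧ 0 ≤ a ∧ b ≤ 1) ∧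
      ρ.real (I i \ ⋃ j ∈ Finset.range i, I j) = ∫ x, g i x ∂ρ ∧
      ∫ x in (I i \ ⋃ j ∈ Finset.range i, I j), x ∂ρ = ∫ x, x * g i x ∂ρ ∧
      ρ ((I i \ ⋃ j ∈ Finset.range i, I j) ∩ Ioi (c i)) = 0 := by
  induction N with
  | zero => intros; exact ⟨fun _ => ∅, fun i hi => absurd hi (by omega)⟩
  | succ N ih =>
    intro ρ _ _ hs c g hgm h0 hc hsum hcm
    obtain ⟨a, b, hab, hmass, hmom, hnull, g', hgm', h0', hc', hsum', hmass', hmom'⟩ :=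
      step hs N c g hgm h0 hc hsum (fun i hi => hcm 0 i (by omega) hi)
    have : NullSingletonClass (ρ.restrict (Icc a b)ᶜ) := inferInstance
    obtain ⟨I, hI⟩ := ih (ρ.restrict (Icc a b)ᶜ) (ae_restrict_of_ae hs) (fun i => c (i+1)) g'
      hgm' h0' hc' hsum' (fun i j hij hj => hcm (i+1) (j+1) (by omega) (by omega))
    refine ⟨fun i => Nat.casesOn i (Icc a b) I, ?_⟩
    intro i hi
    cases i with
    | zero => 
      simp only [Finset.range_zero, Finset.notMem_empty, iUnion_of_empty, iUnion_empty, sdiff_empty]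
      exact ⟨⟨a, b, rfl, hab.2⟩, hmass, hmom, hnull⟩
    | succ i =>
      obtain ⟨h1, h2, h3, h4⟩ := hI i (by omega)
      have hmeas : MeasurableSet (I i \ ⋃ j ∈ Finset.range i, I j) := by
        obtain ⟨p, q, hpq, -⟩ := h1
        rw [hpq]
        refine measurableSet_Icc.diff (Finset.measurableSet_biUnion _ fun j hj => ?_)
        obtain ⟨⟨p, q, hpq, -⟩, -⟩ := hI j (by have := Finset.mem_range.1 hj; omega)
        rw [hpq]; exact measurableSet_Icc
      have hset : (I i \ ⋃ j ∈ Finset.range (i+1), (Nat.casesOn j (Icc a b) I : Set ℝ)) =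
          (I i \ ⋃ j ∈ Finset.range i, I j) ∩ (Icc a b)ᶜ := by
        ext x
        simp only [mem_sdiff, mem_iUnion, Finset.mem_range, exists_prop, not_exists, not_and,
          mem_inter_iff, mem_compl_iff]
        constructor
        · rintro ⟨hx, h⟩
          exact ⟨⟨hx, fun j hj => h (j+1) (by omega)⟩, h 0 (by omega)⟩
        · rintro ⟨⟨hx, h⟩, h'⟩
          refine ⟨hx, fun j hj => ?_⟩
          cases j with
          | zero => exact h'
          | succ j => exact h j (by omega)
      refine ⟨h1, ?_, ?_, ?_⟩
      · show ρ.real (I i \ _) = _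
        rw [hset, ← hmass' i (by omega), ← h2, measureReal_restrict_apply hmeas]
      · show ∫ x in (I i \ _), x ∂ρ = _
        rw [hset, ← hmom' i (by omega), ← h3, Measure.restrict_restrict hmeas]
      · show ρ ((I i \ _) ∩ _) = _
        rw [hset]
        rw [Measure.restrict_apply (hmeas.inter measurableSet_Ioi)] at h4
        rw [← h4]; congr 1; ext x; simp only [mem_inter_iff]; tauto

lemma laminar_of_intervals_s16 (n : ℕ) (I : ℕ → Set ℝ)
    (hI : ∀ i < n, IsClosed (I i) ∧ Convex ℝ (I i)) :
    IsLaminar n (fun i => closure (I i \ ⋃ j ∈ Finset.range i, I j)) := by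
  have hsub : ∀ i < n, convexHull ℝ (closure (I i \ ⋃ j ∈ Finset.range i, I j)) ⊆ I i := by
    intro i hi
    apply convexHull_min _ (hI i hi).2
    exact closure_minimal sdiff_subset (hI i hi).1
  have hsup : ∀ i, I i \ (⋃ j ∈ Finset.range i, I j) ⊆
      convexHull ℝ (closure (I i \ ⋃ j ∈ Finset.range i, I j)) := fun i =>
    subset_closure.trans (subset_convexHull ℝ _)
  have hU : ∀ i ≤ n, (⋃ j ∈ Finset.range i, convexHull ℝ
      (closure (I j \ ⋃ k ∈ Finset.range j, I k))) = ⋃ j ∈ Finset.range i, I j := by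
    intro i hi
    apply Subset.antisymm
    · apply iUnion₂_mono
      intro j hj
      have := Finset.mem_range.1 hj
      exact hsub j (by omega)
    · intro x hx
      have hex : ∃ j, x ∈ I j ∧ j < i := by
        simp only [mem_iUnion, Finset.mem_range, exists_prop] at hx
        obtain ⟨j, h1, h2⟩ := hx
        exact ⟨j, h2, h1⟩
      classical
      have hs := Nat.find_spec hex
      have hmin := fun m => Nat.find_min hex (m := m)
      set j := Nat.find hex
      refine mem_iUnion₂.2 ⟨j, Finset.mem_range.2 hs.2, hsup j ⟨hs.1, ?_⟩⟩
      simp only [mem_iUnion, Finset.mem_range, exists_prop, not_exists, not_and]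
      intro k hk hxk
      exact hmin k hk ⟨hxk, by omega⟩
  intro i hi
  show closure _ = closure _
  rw [hU i hi.le]
  congr 1
  apply Subset.antisymm
  · intro x hx
    exact ⟨hsup i hx, hx.2⟩
  · intro x hx
    exact ⟨hsub i hi hx.1, hx.2⟩

lemma densMeasure_ac (f : ℝ → ℝ) : densMeasure f ≪ volume.restrict (Icc (0:ℝ) 1) :=
  withDensity_absolutelyContinuous _ _

lemma densMeasure_mem (f : ℝ → ℝ) : ∀ᵐ x ∂(densMeasure f), x ∈ Icc (0:ℝ) 1 :=
  (densMeasure_ac f).ae_le (ae_restrict_mem measurableSet_Icc)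

lemma densMeasure_null (f : ℝ → ℝ) : NullSingletonClass (densMeasure f) :=
  ⟨fun x => densMeasure_ac f (by simp)⟩

lemma cover_of_null {f : ℝ → ℝ} (hf : IsPrior f) {C : Set ℝ} (hC : IsClosed C) {a b : ℝ}
    (ha : 0 ≤ a) (hab : a < b) (hb : b ≤ 1) (h : ∀ᵐ x ∂(densMeasure f), x ∈ Ioo a b → x ∈ C) :
    Icc a b ⊆ C := by
  have hac : volume.restrict (Icc (0:ℝ) 1) ≪ densMeasure f := by
    apply withDensity_absolutelyContinuous' hf.meas.ennreal_ofReal.aemeasurable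
    filter_upwards [ae_restrict_mem measurableSet_Icc] with x hx
    simpa using hf.pos x hx
  have h0 : densMeasure f (Ioo a b \ C) = 0 := by
    rw [measure_eq_zero_iff_ae_notMem]
    filter_upwards [h] with x hx hx2
    exact hx2.2 (hx hx2.1)
  have hO : IsOpen (Ioo a b \ C) := isOpen_Ioo.sdiff hC
  have h1 := hac h0
  have hsub : Ioo a b \ C ⊆ Icc (0:ℝ) 1 := fun x hx =>
    ⟨ha.trans hx.1.1.le, hx.1.2.le.trans hb⟩
  rw [Measure.restrict_apply hO.measurableSet, inter_eq_left.2 hsub] at h1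
  replace h1 := (hO.measure_eq_zero_iff (μ := volume)).1 h1
  rw [← closure_Ioo hab.ne]
  exact closure_minimal (sdiff_eq_empty.1 h1) hC

/-- a Sender-optimal obedient and IC deterministic representation can be
replaced by an obedient and IC laminar representation with the same masses and
conditional means, hence the same payoff. -/
theorem optimal_representation_laminar
    (f : ℝ → ℝ) (hf : IsPrior f)
    (n : ℕ) (hn : 2 ≤ n)
    (γ : ℕ → ℝ) (hγ0 : γ 0 = 0) (hγn : γ n = 1)
    (hγ : ∀ i < n, γ i < γ (i+1))
    (v : ℕ → ℝ) (hv0 : v 0 = 0) (hv : ∀ i, i + 1 < n → v i < v (i+1))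
    (B : ℕ → Set ℝ)
    (hdet : IsDetRep (densMeasure f) n B)
    (hob : IsObedient (densMeasure f) n γ B)
    (hic : IsIC n γ B)
    (hmax : ∀ B' : ℕ → Set ℝ, IsDetRep (densMeasure f) n B' →
      IsObedient (densMeasure f) n γ B' → IsIC n γ B' →
      payoff (densMeasure f) n v B' ≤ payoff (densMeasure f) n v B) :
    ∃ BL : ℕ → Set ℝ, IsDetRep (densMeasure f) n BL ∧ IsLaminar n BL ∧
      IsObedient (densMeasure f) n γ BL ∧ IsIC n γ BL ∧
      (∀ i < n, densMeasure f (B i) ≠ 0 →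
        densMeasure f (BL i) = densMeasure f (B i) ∧
        condMean (densMeasure f) (BL i) = condMean (densMeasure f) (B i)) ∧
      payoff (densMeasure f) n v BL = payoff (densMeasure f) n v B := by
  set μ := densMeasure f with hμ
  have : IsProbabilityMeasure μ := ⟨hf.prob⟩
  have : NullSingletonClass μ := densMeasure_null f
  have hs : ∀ᵐ x ∂μ, x ∈ Icc (0:ℝ) 1 := densMeasure_mem f
  obtain ⟨hcl, hcov, hdisj⟩ := hdet
  have hγm : ∀ j ≤ n, ∀ i ≤ j, γ i ≤ γ j := by
    intro j
    induction j with
    | zero => intro _ i hi; rw [Nat.le_zero.1 hi]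
    | succ j ih =>
      intro hj i hi
      rcases Nat.lt_or_ge j i with h | h
      · rw [show i = j + 1 by omega]
      · exact (ih (by omega) i h).trans (hγ j (by omega)).le
  have hdj : ∀ᵐ x ∂μ, ∀ i, i < n → ∀ j, j < n → i ≠ j → ¬ (x ∈ B i ∧ x ∈ B j) := by
    simp only [ae_all_iff]
    intro i hi j hj hij
    exact measure_eq_zero_iff_ae_notMem.1 (hdisj i hi j hj hij)
  have hloc : ∀ x i, ∀ m ≤ n, i ≤ m → γ i < x → x ≤ γ m →
      ∃ k, i ≤ k ∧ k < m ∧ x ∈ Icc (γ k) (γ (k+1)) := by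
    intro x i m
    induction m with
    | zero => intro _ hi h1 h2; rw [Nat.le_zero.1 hi] at h1; exact absurd h2 (not_le.2 h1)
    | succ m ih =>
      intro hm hi h1 h2
      rcases Nat.lt_or_ge m i with h | h
      · rw [show i = m + 1 by omega] at h1
        exact absurd h2 (not_le.2 h1)
      rcases le_total x (γ m) with h3 | h3
      · obtain ⟨k, hk1, hk2, hk3⟩ := ih (by omega) h h1 h3
        exact ⟨k, hk1, by omega, hk3⟩
      · exact ⟨m, h, by omega, h3, h2⟩
  classical
  set g : ℕ → ℝ → ℝ := fun i => if i < n then (B i).indicator (fun _ => 1) else fun _ => 0 with hg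
  have hgi : ∀ i < n, g i = (B i).indicator (fun _ => 1) := fun i hi => by simp [hg, hi]
  have hgm : ∀ i, Measurable (g i) := by
    intro i
    by_cases hi : i < n
    · rw [hgi i hi]; exact measurable_const.indicator (hcl i hi).1.measurableSet
    · simp only [hg, hi, if_false]; exact measurable_const
  obtain ⟨I, hI⟩ := main_induction n μ hs (fun i => γ (i+1)) g hgm
    (Filter.Eventually.of_forall fun x i hi => by
      rw [hgi i hi]; exact indicator_nonneg (fun _ _ => zero_le_one) x)
    (by
      filter_upwards [hs, hdj] with x hx hxd i hi hlt
      rw [hgi i hi, indicator_of_notMem]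
      intro hxB
      obtain ⟨k, hk1, hk2, hk3⟩ := hloc x (i+1) n le_rfl (by omega) hlt (by rw [hγn]; exact hx.2)
      have := hic k hk2 hk3
      simp only [mem_iUnion, Finset.mem_Ico, exists_prop] at this
      obtain ⟨j, ⟨hj1, hj2⟩, hj3⟩ := this
      exact hxd i hi j hj2 (by omega) ⟨hxB, hj3⟩)
    (by
      filter_upwards [hs, hdj] with x hx hxd
      rw [← hcov] at hx
      simp only [mem_iUnion, Finset.mem_range, exists_prop] at hx
      obtain ⟨j, hj1, hj2⟩ := hx
      rw [Finset.sum_eq_single j]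
      · rw [hgi j hj1, indicator_of_mem hj2]
      · intro i hi hij
        rw [hgi i (Finset.mem_range.1 hi), indicator_of_notMem]
        intro h
        exact hxd i (Finset.mem_range.1 hi) j hj1 hij ⟨h, hj2⟩
      · intro h; exact absurd (Finset.mem_range.2 hj1) h)
    (fun i j hij hj => hγm (j+1) (by omega) (i+1) (by omega))
  set S : ℕ → Set ℝ := fun i => I i \ ⋃ j ∈ Finset.range i, I j with hS
  have hIc : ∀ i < n, IsClosed (I i) ∧ Convex ℝ (I i) := by
    intro i hi
    obtain ⟨⟨a, b, hab, -⟩, -⟩ := hI i hi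
    rw [hab]; exact ⟨isClosed_Icc, convex_Icc a b⟩
  have hSae : ∀ i < n, closure (S i) =ᵐ[μ] S i := by
    intro i hi
    have hsub : closure (S i) \ S i ⊆ ⋃ j ∈ Finset.range i, (I j \ interior (I j)) := by
      rintro x ⟨hx1, hx2⟩
      have hxI : x ∈ I i := closure_minimal sdiff_subset (hIc i hi).1 hx1
      have hxU : x ∈ ⋃ j ∈ Finset.range i, I j := by
        by_contra h; exact hx2 ⟨hxI, h⟩
      simp only [mem_iUnion, exists_prop] at hxU ⊢
      obtain ⟨j, hj, hxj⟩ := hxU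
      refine ⟨j, hj, hxj, fun hint => ?_⟩
      obtain ⟨y, hy1, hy2⟩ := mem_closure_iff.1 hx1 _ isOpen_interior hint
      apply hy2.2
      simp only [mem_iUnion, exists_prop]
      exact ⟨j, hj, interior_subset hy1⟩
    have hnull : μ (⋃ j ∈ Finset.range i, (I j \ interior (I j))) = 0 := by
      refine (measure_biUnion_null_iff (Finset.countable_toSet (Finset.range i))).2 ?_
      intro j hj
      have hj2 : j < i := by simpa using hj
      obtain ⟨⟨a, b, hab, -⟩, -⟩ := hI j (by omega)
      rw [hab, interior_Icc]
      exact ae_le_set.1 (Ioo_ae_eq_Icc (μ := μ) (a := a) (b := b)).symm.le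
    apply Filter.EventuallyLE.antisymm
    · exact ae_le_set.2 (measure_mono_null hsub hnull)
    · exact (LE.le.eventuallyLE subset_closure)
  have hmassR : ∀ i < n, μ.real (S i) = μ.real (B i) := by
    intro i hi
    obtain ⟨-, h, -, -⟩ := hI i hi
    rw [h, hgi i hi, integral_indicator (hcl i hi).1.measurableSet]
    simp
  have hmass : ∀ i < n, μ (closure (S i)) = μ (B i) := by
    intro i hi
    rw [measure_congr (hSae i hi)]
    exact (measureReal_eq_measureReal_iff).1 (hmassR i hi)
  have hmean : ∀ i < n, condMean μ (closure (S i)) = condMean μ (B i) := by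
    intro i hi
    obtain ⟨-, -, h, -⟩ := hI i hi
    have h2 : ∫ x in closure (S i), x ∂μ = ∫ x in B i, x ∂μ := by
      rw [setIntegral_congr_set (hSae i hi), h, hgi i hi,
        ← integral_indicator (hcl i hi).1.measurableSet]
      congr 1
      funext x
      simp only [indicator_apply]
      split_ifs <;> simp
    unfold condMean
    rw [h2, hmass i hi]
  have hSm : ∀ i < n, MeasurableSet (S i) := by
    intro i hi
    refine MeasurableSet.diff (hIc i hi).1.measurableSet (Finset.measurableSet_biUnion _ fun j hj => ?_)
    have := Finset.mem_range.1 hj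
    exact (hIc j (by omega)).1.measurableSet
  have hSd : ∀ i j, i < j → Disjoint (S i) (S j) := by
    intro i j hij
    rw [Set.disjoint_left]
    intro x hx hx2
    apply hx2.2
    simp only [mem_iUnion, Finset.mem_range, exists_prop]
    exact ⟨i, hij, hx.1⟩
  have hSd' : ∀ i j, i ≠ j → Disjoint (S i) (S j) := by
    intro i j hij
    rcases lt_or_gt_of_ne hij with h | h
    · exact hSd i j h
    · exact (hSd j i h).symm
  have hBsum : ∑ i ∈ Finset.range n, μ (B i) = 1 := by
    have h1 : μ (⋃ i ∈ Finset.range n, B i) = ∑ i ∈ Finset.range n, μ (B i) := by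
      apply measure_biUnion_finset₀
      · intro i hi j hj hij
        exact hdisj i (by simpa using hi) j (by simpa using hj) hij
      · intro i hi
        exact (hcl i (Finset.mem_range.1 hi)).1.measurableSet.nullMeasurableSet
    rw [← h1, hcov]
    exact (prob_compl_eq_zero_iff measurableSet_Icc).1 hs
  have hScov : ∀ᵐ x ∂μ, ∃ i < n, x ∈ S i := by
    have h1 : μ (⋃ i ∈ Finset.range n, S i) = 1 := by
      rw [measure_biUnion_finset (fun i _ j _ hij => hSd' i j hij)
        (fun i hi => hSm i (Finset.mem_range.1 hi)), ← hBsum]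
      apply Finset.sum_congr rfl
      intro i hi
      rw [← hmass i (Finset.mem_range.1 hi), measure_congr (hSae i (Finset.mem_range.1 hi))]
    have h2 := (prob_compl_eq_zero_iff (Finset.measurableSet_biUnion _
      (fun i hi => hSm i (Finset.mem_range.1 hi)))).2 h1
    have h3 := measure_eq_zero_iff_ae_notMem.1 h2
    filter_upwards [h3] with x hx
    simpa using hx
  have hSc : ∀ᵐ x ∂μ, ∀ i, i < n → γ (i+1) < x → x ∉ S i := by
    simp only [ae_all_iff]
    intro i hi
    obtain ⟨-, -, -, h⟩ := hI i hi
    filter_upwards [measure_eq_zero_iff_ae_notMem.1 h] with x hx hlt hxS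
    exact hx ⟨hxS, hlt⟩
  refine ⟨fun i => closure (S i), ⟨?_, ?_, ?_⟩, laminar_of_intervals_s16 n I hIc, ?_, ?_, ?_, ?_⟩
  · intro i hi
    refine ⟨isClosed_closure, ?_⟩
    obtain ⟨⟨a, b, hab, ha, hb⟩, -⟩ := hI i hi
    refine (closure_minimal sdiff_subset (hIc i hi).1).trans ?_
    rw [hab]; exact Icc_subset_Icc ha hb
  · apply Subset.antisymm
    · apply iUnion₂_subset
      intro i hi
      obtain ⟨⟨a, b, hab, ha, hb⟩, -⟩ := hI i (Finset.mem_range.1 hi)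
      refine (closure_minimal sdiff_subset (hIc i (Finset.mem_range.1 hi)).1).trans ?_
      rw [hab]; exact Icc_subset_Icc ha hb
    · refine cover_of_null hf (Set.Finite.isClosed_biUnion (Finset.finite_toSet _)
        (fun i _ => isClosed_closure)) le_rfl zero_lt_one le_rfl ?_
      filter_upwards [hScov] with x hx _
      obtain ⟨i, hi, hxi⟩ := hx
      exact mem_iUnion₂.2 ⟨i, by simpa using hi, subset_closure hxi⟩
  · intro i hi j hj hij
    rw [measure_congr ((hSae i hi).inter (hSae j hj)), (hSd' i j hij).inter_eq, measure_empty]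
  · intro i hi hne
    simp only [hmass i hi] at hne
    simp only [hmean i hi]
    exact hob i hi hne
  · intro i hi
    refine cover_of_null hf (Set.Finite.isClosed_biUnion (Finset.finite_toSet _)
        (fun i _ => isClosed_closure)) (by rw [← hγ0]; exact hγm i hi.le 0 (by omega)) (hγ i hi)
        (by rw [← hγn]; exact hγm n le_rfl (i+1) (by omega)) ?_
    filter_upwards [hScov, hSc] with x hx hxc hxI
    obtain ⟨j, hj, hxj⟩ := hx
    refine mem_iUnion₂.2 ⟨j, Finset.mem_coe.2 (Finset.mem_Ico.2 ⟨?_, hj⟩), subset_closure hxj⟩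
    by_contra hlt
    exact hxc j hj (lt_of_le_of_lt (hγm i hi.le (j+1) (by omega)) hxI.1) hxj
  · intro i hi _
    exact ⟨hmass i hi, hmean i hi⟩
  · unfold payoff
    apply Finset.sum_congr rfl
    intro i hi
    simp only [hmass i (Finset.mem_range.1 hi)]

end VerifiableDisclosure
end
end

section
/- The supremum of the Sender's ex ante payoff ∑_{i=0}^{n−1} v_i μ_F(B_i) over all obedient and incentive compatible deterministic representations {B_i}_{i=0}^{n−1} is attained; i.e., there exists an obedient, incentive compatible deterministic representation achieving this supremum. -/
open MeasureTheory Set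

noncomputable section

namespace VerifiableDisclosure

section aux
open Filter Topology

theorem aux_dual {ι : Type} [Fintype ι] (M : (ι → ℝ) → ι → ℝ) (h : (ι → ℝ) → ℝ)
    (m0 : ι → ℝ) (h0 H : ℝ) (hM : Continuous M)
    (h1 : ∀ a b, h b + ∑ k, a k * M b k ≤ h a + ∑ k, a k * M a k)
    (h2 : ∀ a, h0 + ∑ k, a k * m0 k ≤ h a + ∑ k, a k * M a k)
    (h3 : 0 ≤ h0) (h4 : h 0 ≤ H) (ε : ℝ) (hε : 0 < ε) :
    ∃ a, ∑ k, (M a k - m0 k) ^ 2 ≤ 4 * ε * H := by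
  set W : (ι → ℝ) → ℝ := fun a => h a + ∑ k, a k * M a k with hW
  have hMk : ∀ k, Continuous fun a => M a k := fun k => (continuous_apply k).comp hM
  have hWc : Continuous W := by
    rw [continuous_iff_continuousAt]
    intro a
    have lo : Tendsto (fun b : ι → ℝ => W a + ∑ k, (b k - a k) * M a k) (𝓝 a) (𝓝 (W a)) := by
      have : Continuous (fun b : ι → ℝ => W a + ∑ k, (b k - a k) * M a k) := by fun_prop
      simpa using this.tendsto a
    have hi : Tendsto (fun b : ι → ℝ => W a + ∑ k, (b k - a k) * M b k) (𝓝 a) (𝓝 (W a)) := by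
      have : Continuous (fun b : ι → ℝ => W a + ∑ k, (b k - a k) * M b k) := by fun_prop
      simpa using this.tendsto a
    refine tendsto_of_tendsto_of_tendsto_of_le_of_le lo hi ?_ ?_
    · intro b
      have := h1 b a
      simp only [hW, sub_mul, Finset.sum_sub_distrib]
      linarith
    · intro b
      have := h1 a b
      simp only [hW, sub_mul, Finset.sum_sub_distrib]
      linarith
  set D : (ι → ℝ) → ℝ := fun a => W a - ∑ k, a k * m0 k + ε * ∑ k, a k ^ 2 with hD
  have hDc : Continuous D := by fun_prop
  have hDlow : ∀ a, ε * ∑ k, a k ^ 2 ≤ D a := by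
    intro a
    have := h2 a
    simp only [hD, hW]
    linarith
  have hD0 : D 0 ≤ H := by simpa [hD, hW] using h4
  have hH0 : 0 ≤ H := by
    have := hDlow 0
    simp at this
    linarith
  set R : ℝ := H / ε + 1 with hR
  have hR1 : 1 ≤ R := by
    have : 0 ≤ H / ε := by positivity
    linarith
  obtain ⟨a, haB, ha⟩ := (isCompact_closedBall (0 : ι → ℝ) R).exists_isMinOn
    ⟨0, by simp; linarith⟩ hDc.continuousOn
  have hmin : ∀ b, D a ≤ D b := by
    intro b
    by_cases hb : b ∈ Metric.closedBall (0 : ι → ℝ) R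
    · exact ha hb
    · have h0' : D a ≤ D 0 := ha (by simp; linarith)
      have : ∃ k, R < |b k| := by
        by_contra! hcon
        apply hb
        rw [mem_closedBall_zero_iff, pi_norm_le_iff_of_nonneg (by linarith)]
        exact hcon
      obtain ⟨k, hk⟩ := this
      have h5 : b k ^ 2 ≤ ∑ k, b k ^ 2 :=
        Finset.single_le_sum (f := fun k => b k ^ 2) (fun i _ => sq_nonneg _) (Finset.mem_univ k)
      have h6 : R ≤ b k ^ 2 := by
        rw [← sq_abs]; nlinarith
      have h7 : H ≤ ε * R := by
        rw [hR]; field_simp; linarith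
      have := hDlow b
      nlinarith
  have hsq : ε * ∑ k, a k ^ 2 ≤ H := (hDlow a).trans ((hmin 0).trans hD0)
  have hfo : ∀ d : ι → ℝ, 0 ≤ ∑ k, d k * (M a k - m0 k + 2 * ε * a k) := by
    intro d
    have hc : Continuous fun t : ℝ =>
        ∑ k, d k * (M (a + t • d) k - m0 k + 2 * ε * a k + ε * t * d k) := by
      have : ∀ k, Continuous fun t : ℝ => M (a + t • d) k := fun k =>
        (hMk k).comp (by fun_prop)
      fun_prop
    have ht : Tendsto (fun t : ℝ =>
        ∑ k, d k * (M (a + t • d) k - m0 k + 2 * ε * a k + ε * t * d k)) (𝓝[>] 0)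
        (𝓝 (∑ k, d k * (M a k - m0 k + 2 * ε * a k))) := by
      have := (hc.tendsto 0).mono_left (nhdsWithin_le_nhds (s := Ioi 0))
      simpa using this
    refine ge_of_tendsto ht ?_
    filter_upwards [self_mem_nhdsWithin] with t ht0
    have ht0 : 0 < t := ht0
    have e1 := hmin (a + t • d)
    have e2 := h1 a (a + t • d)
    simp only [hD, hW] at e1
    have e3 : t * ∑ k, d k * (M (a + t • d) k - m0 k + 2 * ε * a k + ε * t * d k)
        = (∑ k, (a + t • d) k * M (a + t • d) k - ∑ k, a k * M (a + t • d) k)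
          - (∑ k, (a + t • d) k * m0 k - ∑ k, a k * m0 k)
          + (ε * ∑ k, (a + t • d) k ^ 2 - ε * ∑ k, a k ^ 2) := by
      simp only [Finset.mul_sum, ← Finset.sum_sub_distrib, ← Finset.sum_add_distrib]
      refine Finset.sum_congr rfl fun k _ => ?_
      simp only [Pi.add_apply, Pi.smul_apply, smul_eq_mul]
      ring
    have e4 : 0 ≤ t * ∑ k, d k * (M (a + t • d) k - m0 k + 2 * ε * a k + ε * t * d k) := by
      rw [e3]; linarith
    exact nonneg_of_mul_nonneg_right e4 ht0
  have hz : ∀ k, M a k - m0 k + 2 * ε * a k = 0 := by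
    have := hfo (fun k => -(M a k - m0 k + 2 * ε * a k))
    have h8 : ∑ k, (M a k - m0 k + 2 * ε * a k) ^ 2 = 0 := by
      apply le_antisymm
      · have e : ∑ k, -(M a k - m0 k + 2 * ε * a k) * (M a k - m0 k + 2 * ε * a k)
          = - ∑ k, (M a k - m0 k + 2 * ε * a k) ^ 2 := by
          rw [← Finset.sum_neg_distrib]
          exact Finset.sum_congr rfl fun k _ => by ring
        rw [e] at this
        linarith
      · positivity
    intro k
    have := (Finset.sum_eq_zero_iff_of_nonneg (fun i _ => sq_nonneg _)).1 h8 k (Finset.mem_univ k)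
    exact pow_eq_zero_iff (two_ne_zero) |>.1 this
  refine ⟨a, ?_⟩
  have : ∑ k, (M a k - m0 k) ^ 2 = 4 * ε * (ε * ∑ k, a k ^ 2) := by
    simp only [Finset.mul_sum]
    refine Finset.sum_congr rfl fun k _ => ?_
    have := hz k
    have e : M a k - m0 k = -(2 * ε * a k) := by linarith
    rw [e]; ring
  rw [this]
  gcongr

variable {μ : Measure ℝ}

theorem aux_tendsto [IsProbabilityMeasure μ] (hμ : ∀ᵐ x ∂μ, x ∈ Icc (0:ℝ) 1)
    {X : Type*} {l : Filter X} [l.IsCountablyGenerated] {A : X → Set ℝ} {A0 : Set ℝ}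
    (hA : ∀ t, MeasurableSet (A t)) (hA0 : MeasurableSet A0) (p : ℕ)
    (h : ∀ᵐ x ∂μ, ∀ᶠ t in l, (x ∈ A t ↔ x ∈ A0)) :
    Tendsto (fun t => ∫ x in A t, x ^ p ∂μ) l (𝓝 (∫ x in A0, x ^ p ∂μ)) := by
  simp_rw [← integral_indicator (hA _), ← integral_indicator hA0]
  refine tendsto_integral_filter_of_dominated_convergence (fun _ => 1) ?_ ?_ (by simp) ?_
  · exact Eventually.of_forall fun t =>
      ((measurable_id.pow_const p).indicator (hA t)).aestronglyMeasurable
  · refine Eventually.of_forall fun t => ?_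
    filter_upwards [hμ] with x hx
    by_cases hxA : x ∈ A t
    · rw [indicator_of_mem hxA, Real.norm_eq_abs, abs_pow, abs_of_nonneg hx.1]
      exact pow_le_one₀ hx.1 hx.2
    · rw [indicator_of_notMem hxA]; simp
  · filter_upwards [h] with x hx
    refine tendsto_const_nhds.congr' ?_
    filter_upwards [hx] with t ht
    by_cases hxA : x ∈ A0
    · rw [indicator_of_mem hxA, indicator_of_mem (ht.2 hxA)]
    · rw [indicator_of_notMem hxA, indicator_of_notMem (fun hh => hxA (ht.1 hh))]

theorem aux_integrable [IsProbabilityMeasure μ] (hμ : ∀ᵐ x ∂μ, x ∈ Icc (0:ℝ) 1) (p : ℕ) :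
    Integrable (fun x : ℝ => x ^ p) μ := by
  refine Integrable.mono' (integrable_const (1:ℝ)) (by fun_prop) ?_
  filter_upwards [hμ] with x hx
  rw [Real.norm_eq_abs, abs_pow, abs_of_nonneg hx.1]
  exact pow_le_one₀ hx.1 hx.2

theorem aux_int_bound [IsProbabilityMeasure μ] (hμ : ∀ᵐ x ∂μ, x ∈ Icc (0:ℝ) 1) (p : ℕ)
    (A : Set ℝ) : 0 ≤ ∫ x in A, x ^ p ∂μ ∧ ∫ x in A, x ^ p ∂μ ≤ 1 := by
  have h0 : 0 ≤ᵐ[μ] fun x : ℝ => x ^ p := by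
    filter_upwards [hμ] with x hx
    exact pow_nonneg hx.1 _
  constructor
  · exact integral_nonneg_of_ae (ae_restrict_of_ae h0)
  · refine (setIntegral_le_integral (aux_integrable hμ p) h0).trans ?_
    calc ∫ x, x ^ p ∂μ ≤ ∫ x, (1:ℝ) ∂μ := by
          refine integral_mono_ae (aux_integrable hμ p) (integrable_const _) ?_
          filter_upwards [hμ] with x hx
          exact pow_le_one₀ hx.1 hx.2
      _ = 1 := by simp

/-- quadratic score -/
def score {n : ℕ} (a : Fin n × Fin 2 → ℝ) (i : Fin n) (x : ℝ) : ℝ :=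
  (i : ℝ) * x ^ 2 + (a (i, 0) * x ^ 0 + a (i, 1) * x ^ 1)

/-- best-score regions -/
def best {n : ℕ} (g : Fin n → ℝ) (a : Fin n × Fin 2 → ℝ) (i : Fin n) : Set ℝ :=
  {x | x ∈ Icc (0:ℝ) 1 ∧ x ≤ g i ∧ ∀ l, x ≤ g l → score a l x ≤ score a i x}

theorem score_measurable {n : ℕ} (a : Fin n × Fin 2 → ℝ) (i : Fin n) : Measurable (score a i) := by
  unfold score; fun_prop

theorem best_measurable {n : ℕ} (g : Fin n → ℝ) (a : Fin n × Fin 2 → ℝ) (i : Fin n) :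
    MeasurableSet (best g a i) := by
  have : best g a i = Icc 0 1 ∩ (Iic (g i) ∩ ⋂ l, ((Iic (g l))ᶜ ∪ {x | score a l x ≤ score a i x})) := by
    ext x
    simp only [best, mem_ofPred_eq, mem_inter_iff, mem_Iic, mem_iInter, mem_union, mem_compl_iff,
      imp_iff_not_or]
  rw [this]
  exact measurableSet_Icc.inter (measurableSet_Iic.inter (MeasurableSet.iInter fun l =>
    measurableSet_Iic.compl.union
      (measurableSet_le (score_measurable a l) (score_measurable a i))))

/-- no ties almost everywhere -/
theorem ae_no_tie [NullSingletonClass μ] {n : ℕ} (a : Fin n × Fin 2 → ℝ) :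
    ∀ᵐ x ∂μ, ∀ i l : Fin n, i ≠ l → score a i x ≠ score a l x := by
  rw [ae_all_iff]; intro i
  rw [ae_all_iff]; intro l
  by_cases hil : i = l
  · simp [hil]
  have hfin : {x : ℝ | score a i x = score a l x}.Finite := by
    set P : Polynomial ℝ := Polynomial.C ((i:ℝ) - l) * Polynomial.X ^ 2 +
      Polynomial.C (a (i,1) - a (l,1)) * Polynomial.X + Polynomial.C (a (i,0) - a (l,0)) with hP
    have hne : P ≠ 0 := by
      apply Polynomial.ne_zero_of_degree_gt (n := 1)
      rw [hP, Polynomial.degree_quadratic]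
      · norm_num
      · rw [sub_ne_zero]
        intro h
        apply hil
        exact Fin.ext (by exact_mod_cast h)
    refine (Polynomial.finite_setOfPred_isRoot hne).subset ?_
    intro x hx
    simp only [mem_ofPred_eq, score] at hx
    simp only [mem_ofPred_eq, Polynomial.IsRoot.def, hP, Polynomial.eval_add, Polynomial.eval_mul,
      Polynomial.eval_C, Polynomial.eval_pow, Polynomial.eval_X]
    linarith
  have := hfin.measure_zero μ
  filter_upwards [measure_eq_zero_iff_ae_notMem.1 this] with x hx _
  exact hx

theorem best_unique {n : ℕ} (g : Fin n → ℝ) (a : Fin n × Fin 2 → ℝ) {x : ℝ}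
    (hx : x ∈ Icc (0:ℝ) 1) (hg : ∃ i, x ≤ g i)
    (ht : ∀ i l : Fin n, i ≠ l → score a i x ≠ score a l x) :
    ∃ i, x ≤ g i ∧ (∀ l, x ∈ best g a l ↔ l = i) ∧
      ∀ l, l ≠ i → x ≤ g l → score a l x < score a i x := by
  classical
  obtain ⟨i, hi, hmax⟩ := Finset.exists_max_image (Finset.univ.filter fun i => x ≤ g i)
    (fun i => score a i x) (by obtain ⟨i, hi⟩ := hg; exact ⟨i, by simpa using hi⟩)
  simp only [Finset.mem_filter, Finset.mem_univ, true_and] at hi hmax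
  refine ⟨i, hi, ?_, ?_⟩
  · intro l
    constructor
    · rintro ⟨_, h1, h2⟩
      by_contra hne
      exact ht l i hne (le_antisymm (hmax l h1) (h2 i hi))
    · rintro rfl
      exact ⟨hx, hi, hmax⟩
  · intro l hl hgl
    exact lt_of_le_of_ne (hmax l hgl) (ht l i hl)

theorem best_eventually {n : ℕ} (g : Fin n → ℝ) (a : Fin n × Fin 2 → ℝ) {x : ℝ}
    (hx : x ∈ Icc (0:ℝ) 1) (hg : ∃ i, x ≤ g i)
    (ht : ∀ i l : Fin n, i ≠ l → score a i x ≠ score a l x) (j : Fin n) :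
    ∀ᶠ b in 𝓝 a, (x ∈ best g b j ↔ x ∈ best g a j) := by
  obtain ⟨i, hi, hiff, hlt⟩ := best_unique g a hx hg ht
  have hc : ∀ l, Continuous fun b : Fin n × Fin 2 → ℝ => score b l x := by
    intro l; unfold score; fun_prop
  have : ∀ᶠ b in 𝓝 a, ∀ l, l ≠ i → x ≤ g l → score b l x < score b i x := by
    rw [eventually_all]; intro l
    by_cases h : l ≠ i ∧ x ≤ g l
    · filter_upwards [(hc l).continuousAt.eventually_lt (hc i).continuousAt (hlt l h.1 h.2)] with
        b hb _ _ using hb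
    · exact Eventually.of_forall fun b h1 h2 => absurd ⟨h1, h2⟩ h
  filter_upwards [this] with b hb
  rw [hiff]
  constructor
  · rintro ⟨_, h1, h2⟩
    by_contra hne
    exact absurd (h2 i hi) (not_le.2 (hb j hne h1))
  · rintro rfl
    refine ⟨hx, hi, fun l hl => ?_⟩
    by_cases h : l = j
    · rw [h]
    · exact (hb l h hl).le

/-- feasible families -/
def Feas (μ : Measure ℝ) {n : ℕ} (g : Fin n → ℝ) (S : Fin n → Set ℝ) : Prop :=
  (∀ i, MeasurableSet (S i)) ∧ ∀ᵐ x ∂μ, ∃ i, x ≤ g i ∧ ∀ l, x ∈ S l ↔ l = i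

/-- moments -/
def mom (μ : Measure ℝ) {n : ℕ} (S : Fin n → Set ℝ) (k : Fin n × Fin 2) : ℝ :=
  ∫ x in S k.1, x ^ (k.2 : ℕ) ∂μ

/-- quadratic term -/
def quad (μ : Measure ℝ) {n : ℕ} (S : Fin n → Set ℝ) : ℝ :=
  ∑ i : Fin n, (i : ℝ) * ∫ x in S i, x ^ 2 ∂μ

theorem lagr_eq [IsProbabilityMeasure μ] (hμ : ∀ᵐ x ∂μ, x ∈ Icc (0:ℝ) 1) {n : ℕ}
    (S : Fin n → Set ℝ) (hS : ∀ i, MeasurableSet (S i)) (a : Fin n × Fin 2 → ℝ) :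
    quad μ S + ∑ k, a k * mom μ S k = ∫ x, ∑ i, (S i).indicator (score a i) x ∂μ := by
  have hi : ∀ i, Integrable (score a i) μ := fun i =>
    ((aux_integrable hμ 2).const_mul _).add
      (((aux_integrable hμ 0).const_mul _).add ((aux_integrable hμ 1).const_mul _))
  rw [integral_finsetSum _ fun i _ => (hi i).indicator (hS i)]
  rw [quad, Fintype.sum_prod_type, ← Finset.sum_add_distrib]
  refine Finset.sum_congr rfl fun i _ => ?_
  rw [integral_indicator (hS i)]
  unfold score
  rw [integral_add, integral_add, integral_const_mul, integral_const_mul, integral_const_mul]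
  · simp [mom]
  · exact ((aux_integrable hμ 0).const_mul _).integrableOn
  · exact ((aux_integrable hμ 1).const_mul _).integrableOn
  · exact ((aux_integrable hμ 2).const_mul _).integrableOn
  · exact (((aux_integrable hμ 0).const_mul _).add ((aux_integrable hμ 1).const_mul _)).integrableOn

theorem sum_ind {n : ℕ} (S : Fin n → Set ℝ) (q : Fin n → ℝ → ℝ) (x : ℝ) (i : Fin n)
    (h : ∀ l, x ∈ S l ↔ l = i) : ∑ l, (S l).indicator (q l) x = q i x := by
  classical
  rw [Finset.sum_eq_single i]
  · exact indicator_of_mem ((h i).2 rfl) _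
  · intro l _ hl
    exact indicator_of_notMem (fun hh => hl ((h l).1 hh)) _
  · simp

theorem lagr_le [IsProbabilityMeasure μ] [NullSingletonClass μ] (hμ : ∀ᵐ x ∂μ, x ∈ Icc (0:ℝ) 1) {n : ℕ}
    (g : Fin n → ℝ) (hg : ∀ x ∈ Icc (0:ℝ) 1, ∃ i, x ≤ g i)
    (S : Fin n → Set ℝ) (hS : Feas μ g S) (a : Fin n × Fin 2 → ℝ) :
    quad μ S + ∑ k, a k * mom μ S k ≤ quad μ (best g a) + ∑ k, a k * mom μ (best g a) k := by
  have hi : ∀ i, Integrable (score a i) μ := fun i =>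
    ((aux_integrable hμ 2).const_mul _).add
      (((aux_integrable hμ 0).const_mul _).add ((aux_integrable hμ 1).const_mul _))
  rw [lagr_eq hμ S hS.1, lagr_eq hμ _ (best_measurable g a)]
  refine integral_mono_ae (integrable_finsetSum _ fun i _ => (hi i).indicator (hS.1 i))
    (integrable_finsetSum _ fun i _ => (hi i).indicator (best_measurable g a i)) ?_
  filter_upwards [hμ, hS.2, ae_no_tie a] with x hx hxS ht
  obtain ⟨j, hj, hjS⟩ := hxS
  obtain ⟨i, hi, hiff, hlt⟩ := best_unique g a hx (hg x hx) ht
  rw [sum_ind _ _ x i hiff, sum_ind _ _ x j hjS]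
  by_cases h : j = i
  · rw [h]
  · exact (hlt j h hj).le

theorem best_feas [NullSingletonClass μ] (hμ : ∀ᵐ x ∂μ, x ∈ Icc (0:ℝ) 1) {n : ℕ}
    (g : Fin n → ℝ) (hg : ∀ x ∈ Icc (0:ℝ) 1, ∃ i, x ≤ g i) (a : Fin n × Fin 2 → ℝ) :
    Feas μ g (best g a) := by
  refine ⟨best_measurable g a, ?_⟩
  filter_upwards [hμ, ae_no_tie a] with x hx ht
  obtain ⟨i, hi, hiff, hlt⟩ := best_unique g a hx (hg x hx) ht
  exact ⟨i, hi, hiff⟩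

theorem best_approx [IsProbabilityMeasure μ] [NullSingletonClass μ] (hμ : ∀ᵐ x ∂μ, x ∈ Icc (0:ℝ) 1) {n : ℕ}
    (g : Fin n → ℝ) (hg : ∀ x ∈ Icc (0:ℝ) 1, ∃ i, x ≤ g i)
    (S : Fin n → Set ℝ) (hS : Feas μ g S) :
    ∃ H : ℝ, ∀ ε > 0, ∃ a, ∑ k, (mom μ (best g a) k - mom μ S k) ^ 2 ≤ 4 * ε * H := by
  refine ⟨quad μ (best g 0), fun ε hε => ?_⟩
  refine aux_dual (fun a => mom μ (best g a)) (fun a => quad μ (best g a)) (mom μ S) (quad μ S) _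
    ?_ ?_ ?_ ?_ le_rfl ε hε
  · refine continuous_pi fun k => ?_
    rw [continuous_iff_continuousAt]
    intro a
    refine aux_tendsto hμ (fun b => best_measurable g b k.1) (best_measurable g a k.1) _ ?_
    filter_upwards [hμ, ae_no_tie a] with x hx ht
    exact best_eventually g a hx (hg x hx) ht k.1
  · intro a b
    exact lagr_le hμ g hg _ (best_feas hμ g hg b) a
  · intro a
    exact lagr_le hμ g hg _ hS a
  · exact Finset.sum_nonneg fun i _ => mul_nonneg (by positivity) (aux_int_bound hμ 2 _).1

/-- laminar family given by intervals -/
def lam {n : ℕ} (θ : Fin n → ℝ × ℝ) (i : Fin n) : Set ℝ :=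
  Icc (θ i).1 (θ i).2 \ ⋃ l, ⋃ (_ : l < i), Ioo (θ l).1 (θ l).2

theorem lam_closed {n : ℕ} (θ : Fin n → ℝ × ℝ) (i : Fin n) : IsClosed (lam θ i) :=
  isClosed_Icc.sdiff (isOpen_iUnion fun _ => isOpen_iUnion fun _ => isOpen_Ioo)

theorem mem_lam {n : ℕ} (θ : Fin n → ℝ × ℝ) (i : Fin n) (x : ℝ) : x ∈ lam θ i ↔
    x ∈ Icc (θ i).1 (θ i).2 ∧ ∀ l < i, x ∉ Ioo (θ l).1 (θ l).2 := by
  simp only [lam, Set.mem_sdiff, mem_iUnion, not_exists]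

theorem ae_endpoint [NullSingletonClass μ] {n : ℕ} (θ : Fin n → ℝ × ℝ) :
    ∀ᵐ x ∂μ, ∀ i, x ≠ (θ i).1 ∧ x ≠ (θ i).2 := by
  rw [ae_all_iff]; intro i
  have h1 : ∀ c : ℝ, ∀ᵐ x ∂μ, x ≠ c := fun c => by
    filter_upwards [measure_eq_zero_iff_ae_notMem.1 (measure_singleton (μ := μ) c)] with x hx
    exact hx
  filter_upwards [h1 (θ i).1, h1 (θ i).2] with x a b using ⟨a, b⟩

theorem lam_cont [IsProbabilityMeasure μ] [NullSingletonClass μ] (hμ : ∀ᵐ x ∂μ, x ∈ Icc (0:ℝ) 1) {n : ℕ}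
    (k : Fin n × Fin 2) : Continuous fun θ : Fin n → ℝ × ℝ => mom μ (lam θ) k := by
  rw [continuous_iff_continuousAt]
  intro θ
  refine aux_tendsto hμ (fun b => (lam_closed b k.1).measurableSet)
    (lam_closed θ k.1).measurableSet _ ?_
  filter_upwards [ae_endpoint θ] with x hx
  have h1 : ∀ i, ∀ᶠ b : Fin n → ℝ × ℝ in 𝓝 θ, ((b i).1 < x ↔ (θ i).1 < x) ∧
      ((b i).1 ≤ x ↔ (θ i).1 < x) ∧ (x < (b i).2 ↔ x < (θ i).2) ∧
      (x ≤ (b i).2 ↔ x < (θ i).2) := by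
    intro i
    have c1 : Continuous fun b : Fin n → ℝ × ℝ => (b i).1 := by fun_prop
    have c2 : Continuous fun b : Fin n → ℝ × ℝ => (b i).2 := by fun_prop
    have d1 : ∀ᶠ b : Fin n → ℝ × ℝ in 𝓝 θ, ((b i).1 < x ↔ (θ i).1 < x) ∧
      ((b i).1 ≤ x ↔ (θ i).1 < x) := by
      rcases lt_or_gt_of_ne (hx i).1 with h | h
      · filter_upwards [c1.continuousAt.eventually_const_lt h] with b hb
        constructor <;> constructor <;> intro <;> linarith
      · filter_upwards [c1.continuousAt.eventually_lt_const h] with b hb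
        constructor <;> constructor <;> intro <;> linarith
    have d2 : ∀ᶠ b : Fin n → ℝ × ℝ in 𝓝 θ, (x < (b i).2 ↔ x < (θ i).2) ∧
      (x ≤ (b i).2 ↔ x < (θ i).2) := by
      rcases lt_or_gt_of_ne (hx i).2 with h | h
      · filter_upwards [c2.continuousAt.eventually_const_lt h] with b hb
        constructor <;> constructor <;> intro <;> linarith
      · filter_upwards [c2.continuousAt.eventually_lt_const h] with b hb
        constructor <;> constructor <;> intro <;> linarith
    filter_upwards [d1, d2] with b e1 e2 using ⟨e1.1, e1.2, e2.1, e2.2⟩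
  have h2 := eventually_all.2 h1
  have h3 := h2.self_of_nhds
  filter_upwards [h2] with b hb
  simp only [mem_lam, mem_Icc, mem_Ioo]
  simp only [fun i => (hb i).1, fun i => (hb i).2.1, fun i => (hb i).2.2.1, fun i => (hb i).2.2.2,
    fun i => (h3 i).2.1, fun i => (h3 i).2.2.2]

/-- parameter set -/
def Par {n : ℕ} (g : Fin n → ℝ) : Set (Fin n → ℝ × ℝ) :=
  Set.pi univ fun i => if (i : ℕ) + 1 = n then {((0:ℝ), (1:ℝ))} else Icc 0 (g i) ×ˢ Icc 0 (g i)

theorem Par_compact {n : ℕ} (g : Fin n → ℝ) : IsCompact (Par g) := by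
  refine isCompact_univ_pi fun i => ?_
  split_ifs
  · exact isCompact_singleton
  · exact isCompact_Icc.prod isCompact_Icc

/-- The best regions are given by intervals. -/
theorem best_eq_lam [NullSingletonClass μ] (hμ : ∀ᵐ x ∂μ, x ∈ Icc (0:ℝ) 1) {n : ℕ}
    (g : Fin n → ℝ) (hg : Monotone g) (hg0 : ∀ i, 0 < g i) (hg1 : ∀ i : Fin n, (i:ℕ) + 1 = n → g i = 1)
    (a : Fin n × Fin 2 → ℝ) :
    ∃ θ ∈ Par g, ∀ i, best g a i =ᵐ[μ] lam θ i := by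
  set J : Fin n → Set ℝ := fun i => {x | x ∈ Icc 0 (g i) ∧ ∀ l, i < l → score a l x ≤ score a i x}
    with hJ
  have hJI : ∀ i : Fin n, ∃ p : ℝ × ℝ, p ∈ (if (i : ℕ) + 1 = n then {((0:ℝ), (1:ℝ))}
      else Icc 0 (g i) ×ˢ Icc 0 (g i)) ∧ J i = Icc p.1 p.2 := by
    intro i
    split_ifs with hi
    · refine ⟨(0,1), rfl, ?_⟩
      ext x
      simp only [hJ, hg1 i hi, mem_ofPred_eq, and_iff_left_iff_imp]
      intro _ l hl
      have := l.2
      have : (i:ℕ) < l := hl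
      omega
    · by_cases hne : (J i).Nonempty
      · have hcont : ∀ l, Continuous (score a l) := by intro l; unfold score; fun_prop
        have hcl : IsClosed (J i) := by
          have : J i = Icc 0 (g i) ∩ ⋂ l : Fin n, ⋂ (_ : i < l), {x | score a l x ≤ score a i x} := by
            ext x; simp [hJ]
          rw [this]
          exact isClosed_Icc.inter (isClosed_iInter fun l => isClosed_iInter fun _ =>
            isClosed_le (hcont l) (hcont i))
        have hcp : IsCompact (J i) := isCompact_Icc.of_isClosed_subset hcl fun x hx => hx.1
        have hconv : Convex ℝ (J i) := by
          rw [convex_iff_forall_pos]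
          intro x hx y hy s t hs ht hst
          refine ⟨convex_Icc _ _ hx.1 hy.1 hs.le ht.le hst, fun l hl => ?_⟩
          have h1 := hx.2 l hl
          have h2 := hy.2 l hl
          have h3 : (0:ℝ) ≤ (l:ℝ) - i := by
            have : (i:ℕ) ≤ l := le_of_lt hl
            have : ((i:ℕ):ℝ) ≤ (l:ℕ) := by exact_mod_cast this
            linarith
          simp only [score, smul_eq_mul] at *
          obtain rfl : s = 1 - t := by linarith
          have h4 := mul_le_mul_of_nonneg_left h1 hs.le
          have h5 := mul_le_mul_of_nonneg_left h2 ht.le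
          have h6 : 0 ≤ ((l:ℝ) - i) * ((1 - t) * t * (x - y) ^ 2) := by positivity
          nlinarith
        have hJe := eq_Icc_of_connected_compact ⟨hne, hconv.isPreconnected⟩ hcp
        refine ⟨(sInf (J i), sSup (J i)), ⟨?_, ?_⟩, hJe⟩
        · exact (hcp.sInf_mem hne).1
        · exact (hcp.sSup_mem hne).1
      · have h := hg0 i
        refine ⟨(g i, 0), ⟨⟨h.le, le_rfl⟩, ⟨le_rfl, h.le⟩⟩, ?_⟩
        rw [not_nonempty_iff_eq_empty.1 hne, Icc_eq_empty (by simpa using h)]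
  choose θ hθ1 hθ2 using hJI
  refine ⟨θ, fun i _ => hθ1 i, fun i => ?_⟩
  filter_upwards [hμ, ae_endpoint θ, ae_no_tie a] with x hx he ht
  have hmem : x ∈ lam θ i ↔ x ∈ J i ∧ ∀ l < i, x ∉ J l := by
    rw [mem_lam]
    simp only [hθ2]
    refine and_congr_right fun _ => forall₂_congr fun l _ => not_congr ?_
    have := he l
    exact ⟨fun h => ⟨h.1.le, h.2.le⟩, fun h => ⟨lt_of_le_of_ne h.1 this.1.symm,
      lt_of_le_of_ne h.2 this.2⟩⟩
  refine propext ?_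
  change x ∈ best g a i ↔ x ∈ lam θ i
  rw [hmem]
  constructor
  · rintro ⟨_, h1, h2⟩
    refine ⟨⟨⟨hx.1, h1⟩, fun l hl => h2 l (h1.trans (hg hl.le))⟩, fun l hl hxl => ?_⟩
    exact ht l i hl.ne (le_antisymm (h2 l hxl.1.2) (hxl.2 i hl))
  · rintro ⟨h1, h2⟩
    refine ⟨hx, h1.1.2, ?_⟩
    have key : ∀ d : ℕ, ∀ l : Fin n, (i:ℕ) - l ≤ d → x ≤ g l → score a l x ≤ score a i x := by
      intro d
      induction d with
      | zero =>
        intro l hl hgl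
        rcases (show i ≤ l by rw [Fin.le_def]; omega).lt_or_eq with h | h
        · exact h1.2 l h
        · rw [h]
      | succ d ih =>
        intro l hl hgl
        rcases lt_trichotomy i l with h | h | h
        · exact h1.2 l h
        · rw [h]
        · have h3 := h2 l h
          have : ∃ k, l < k ∧ score a l x < score a k x := by
            by_contra! hcon
            exact h3 ⟨⟨hx.1, hgl⟩, hcon⟩
          obtain ⟨k, hk, hk2⟩ := this
          refine hk2.le.trans (ih k ?_ (hgl.trans (hg hk.le)))
          have hk' : (l:ℕ) < k := hk
          have h' : (l:ℕ) < i := h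
          omega
    exact fun l hl => key i l (by omega) hl


theorem lam_match [IsProbabilityMeasure μ] [NullSingletonClass μ]
    (hμ : ∀ᵐ x ∂μ, x ∈ Icc (0:ℝ) 1) {n : ℕ}
    (g : Fin n → ℝ) (hg : Monotone g) (hg0 : ∀ i, 0 < g i)
    (hg1 : ∀ i : Fin n, (i:ℕ) + 1 = n → g i = 1)
    (hgc : ∀ x ∈ Icc (0:ℝ) 1, ∃ i, x ≤ g i) (S : Fin n → Set ℝ) (hS : Feas μ g S) :
    ∃ θ ∈ Par g, ∀ k, mom μ (lam θ) k = mom μ S k := by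
  have hap : ∀ a, ∃ θ ∈ Par g, ∀ k, mom μ (lam θ) k = mom μ (best g a) k := by
    intro a
    obtain ⟨θ, h1, h2⟩ := best_eq_lam hμ g hg hg0 hg1 a
    exact ⟨θ, h1, fun k => (setIntegral_congr_set (h2 k.1)).symm⟩
  obtain ⟨H, hH⟩ := best_approx hμ g hgc S hS
  obtain ⟨θ0, hθ0, -⟩ := hap 0
  have hc : Continuous fun θ : Fin n → ℝ × ℝ => ∑ k, (mom μ (lam θ) k - mom μ S k) ^ 2 := by
    have := fun k => lam_cont (n := n) hμ k
    fun_prop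
  obtain ⟨θ, hθ, hmin⟩ := (Par_compact g).exists_isMinOn ⟨θ0, hθ0⟩ hc.continuousOn
  have hle : ∀ ε > 0, ∑ k, (mom μ (lam θ) k - mom μ S k) ^ 2 ≤ 4 * ε * H := by
    intro ε hε
    obtain ⟨a, ha⟩ := hH ε hε
    obtain ⟨θ', h1, h2⟩ := hap a
    have h3 : ∑ k, (mom μ (lam θ) k - mom μ S k) ^ 2
      ≤ ∑ k, (mom μ (lam θ') k - mom μ S k) ^ 2 := hmin h1
    simp only [h2] at h3
    exact h3.trans ha
  have hz : ∑ k, (mom μ (lam θ) k - mom μ S k) ^ 2 ≤ 0 := by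
    have ht : Tendsto (fun ε : ℝ => 4 * ε * H) (𝓝[>] 0) (𝓝 0) := by
      have : Continuous fun ε : ℝ => 4 * ε * H := by fun_prop
      simpa using (this.tendsto 0).mono_left (nhdsWithin_le_nhds (s := Ioi 0))
    refine ge_of_tendsto ht ?_
    filter_upwards [self_mem_nhdsWithin] with ε hε using hle ε hε
  have hz' := le_antisymm hz (by positivity)
  refine ⟨θ, hθ, fun k => ?_⟩
  have := (Finset.sum_eq_zero_iff_of_nonneg (fun i _ => sq_nonneg _)).1 hz' k (Finset.mem_univ k)
  have := pow_eq_zero_iff (two_ne_zero) |>.1 this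
  linarith

theorem gamma_mono {n : ℕ} {γ : ℕ → ℝ} (hγ : ∀ i < n, γ i < γ (i+1)) {i j : ℕ} (hij : i ≤ j)
    (hj : j ≤ n) : γ i ≤ γ j := by
  induction j, hij using Nat.le_induction with
  | base => exact le_rfl
  | succ j hij ih => exact (ih (by omega)).trans (hγ j (by omega)).le

theorem cell_exists {n : ℕ} {γ : ℕ → ℝ} (hn : 0 < n) (h0 : γ 0 = 0) (h1 : γ n = 1) {x : ℝ}
    (hx : x ∈ Icc (0:ℝ) 1) : ∃ j < n, x ∈ Icc (γ j) (γ (j+1)) := by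
  classical
  have hex : ∃ j, x ≤ γ (j+1) := ⟨n - 1, by rw [Nat.sub_add_cancel hn, h1]; exact hx.2⟩
  refine ⟨Nat.find hex, ?_, ?_, Nat.find_spec hex⟩
  · have : Nat.find hex ≤ n - 1 := Nat.find_min' hex (by rw [Nat.sub_add_cancel hn, h1]; exact hx.2)
    omega
  · rcases Nat.eq_zero_or_pos (Nat.find hex) with h | h
    · rw [h, h0]; exact hx.1
    · have := Nat.find_min hex (m := Nat.find hex - 1) (by omega)
      rw [Nat.sub_add_cancel h] at this
      exact (not_le.1 this).le

theorem rep_feas (hμ : ∀ᵐ x ∂μ, x ∈ Icc (0:ℝ) 1) {n : ℕ} {γ : ℕ → ℝ} (hn : 0 < n)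
    (h0 : γ 0 = 0) (h1 : γ n = 1) (hγ : ∀ i < n, γ i < γ (i+1)) (B : ℕ → Set ℝ)
    (hB : IsDetRep μ n B) (hIC : IsIC n γ B) :
    Feas μ (fun i : Fin n => γ (i+1)) (fun i : Fin n => B i) := by
  refine ⟨fun i => (hB.1 i i.2).1.measurableSet, ?_⟩
  have hnull : ∀ᵐ x ∂μ, ∀ i j : Fin n, i ≠ j → x ∉ B i ∩ B j := by
    rw [ae_all_iff]; intro i
    rw [ae_all_iff]; intro j
    by_cases hij : i = j
    · simp [hij]
    · filter_upwards [measure_eq_zero_iff_ae_notMem.1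
        (hB.2.2 i i.2 j j.2 (fun h => hij (Fin.ext h)))] with x hx _ using hx
  filter_upwards [hμ, hnull] with x hx hxn
  obtain ⟨j, hj, hxj⟩ := cell_exists hn h0 h1 hx
  have := hIC j hj hxj
  simp only [mem_iUnion, Finset.mem_Ico, exists_prop] at this
  obtain ⟨i, ⟨hji, hin⟩, hxi⟩ := this
  refine ⟨⟨i, hin⟩, hxj.2.trans (gamma_mono hγ (by simpa using hji) hin), fun l => ⟨?_, ?_⟩⟩
  · intro hl
    by_contra hne
    exact hxn l ⟨i, hin⟩ hne ⟨hl, hxi⟩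
  · rintro rfl
    exact hxi

theorem Par_bounds {n : ℕ} {g : Fin n → ℝ} (hg1 : ∀ i : Fin n, (i:ℕ) + 1 = n → g i = 1)
    {θ : Fin n → ℝ × ℝ} (hθ : θ ∈ Par g) (i : Fin n) : 0 ≤ (θ i).1 ∧ (θ i).2 ≤ g i := by
  have := hθ i (mem_univ i)
  simp only at this
  split_ifs at this with h
  · rw [mem_singleton_iff] at this
    rw [this, hg1 i h]; simp
  · exact ⟨this.1.1, this.2.2⟩

theorem Par_last {n : ℕ} {g : Fin n → ℝ} {θ : Fin n → ℝ × ℝ} (hθ : θ ∈ Par g) (i : Fin n)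
    (hi : (i:ℕ) + 1 = n) : θ i = (0, 1) := by
  have := hθ i (mem_univ i)
  simpa [hi] using this

/-- extension of the laminar family to natural indices -/
def lamN {n : ℕ} (θ : Fin n → ℝ × ℝ) (i : ℕ) : Set ℝ :=
  if h : i < n then lam θ ⟨i, h⟩ else ∅

theorem lamN_eq {n : ℕ} (θ : Fin n → ℝ × ℝ) (i : Fin n) : lamN θ i = lam θ i := by
  simp [lamN]

theorem lamN_IC {n : ℕ} {γ : ℕ → ℝ} (hn : 0 < n)
    (h0 : γ 0 = 0) (h1 : γ n = 1) (hγ : ∀ i < n, γ i < γ (i+1)) {θ : Fin n → ℝ × ℝ}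
    (hθ : θ ∈ Par (fun i : Fin n => γ (i+1))) : IsIC n γ (lamN θ) := by
  classical
  have hg1 : ∀ i : Fin n, (i:ℕ) + 1 = n → γ (i+1) = 1 := fun i hi => by rw [hi, h1]
  intro i hi x hx
  have hx0 : 0 ≤ x := by
    have := gamma_mono hγ (Nat.zero_le i) hi.le
    rw [h0] at this; exact this.trans hx.1
  have hx1 : x ≤ 1 := by
    have := gamma_mono hγ (show i + 1 ≤ n from hi) le_rfl
    rw [h1] at this; exact hx.2.trans this
  have hex : ∃ j, i ≤ j ∧ ∃ h : j < n, x ∈ Icc (θ ⟨j, h⟩).1 (θ ⟨j, h⟩).2 := by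
    refine ⟨n - 1, by omega, by omega, ?_⟩
    rw [Par_last hθ _ (by simp; omega)]
    exact ⟨hx0, hx1⟩
  obtain ⟨hj1, hj2, hj3⟩ := Nat.find_spec hex
  simp only [mem_iUnion, Finset.mem_Ico, exists_prop]
  refine ⟨Nat.find hex, ⟨hj1, hj2⟩, ?_⟩
  have := lamN_eq θ ⟨Nat.find hex, hj2⟩
  simp only at this
  rw [this, mem_lam]
  refine ⟨hj3, fun l hl hxl => ?_⟩
  have hl' : (l:ℕ) < Nat.find hex := hl
  by_cases hli : i ≤ l
  · exact Nat.find_min hex hl' ⟨hli, l.2, hxl.1.le, hxl.2.le⟩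
  · have e1 := (Par_bounds hg1 hθ l).2
    have e2 := gamma_mono hγ (show (l:ℕ) + 1 ≤ i by omega) hi.le
    have := hxl.2
    have := hx.1
    linarith

theorem lamN_rep [NullSingletonClass μ] {n : ℕ} {γ : ℕ → ℝ} (hn : 0 < n)
    (h0 : γ 0 = 0) (h1 : γ n = 1) (hγ : ∀ i < n, γ i < γ (i+1)) {θ : Fin n → ℝ × ℝ}
    (hθ : θ ∈ Par (fun i : Fin n => γ (i+1))) : IsDetRep μ n (lamN θ) := by
  have hg1 : ∀ i : Fin n, (i:ℕ) + 1 = n → γ (i+1) = 1 := fun i hi => by rw [hi, h1]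
  have hsub : ∀ i < n, IsClosed (lamN θ i) ∧ lamN θ i ⊆ Icc (0:ℝ) 1 := by
    intro i hi
    have := lamN_eq θ ⟨i, hi⟩
    simp only at this
    rw [this]
    refine ⟨lam_closed _ _, fun x hx => ?_⟩
    have hx := ((mem_lam _ _ _).1 hx).1
    have hb := Par_bounds hg1 hθ ⟨i, hi⟩
    have := gamma_mono hγ (show i + 1 ≤ n from hi) le_rfl
    rw [h1] at this
    exact ⟨hb.1.trans hx.1, hx.2.trans (hb.2.trans this)⟩
  refine ⟨hsub, ?_, ?_⟩
  · apply Subset.antisymm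
    · intro x hx
      simp only [mem_iUnion, Finset.mem_range, exists_prop] at hx
      obtain ⟨i, hi, hx⟩ := hx
      exact (hsub i hi).2 hx
    · intro x hx
      obtain ⟨j, hj, hxj⟩ := cell_exists hn h0 h1 hx
      have := lamN_IC hn h0 h1 hγ hθ j hj hxj
      simp only [mem_iUnion, Finset.mem_Ico, exists_prop] at this
      obtain ⟨i, ⟨hji, hin⟩, hxi⟩ := this
      simp only [mem_iUnion, Finset.mem_range, exists_prop]
      exact ⟨i, hin, hxi⟩
  · have key : ∀ i j : Fin n, i < j → μ (lam θ i ∩ lam θ j) = 0 := by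
      intro i j hij
      refine measure_mono_null (t := {(θ i).1, (θ i).2}) ?_ ((Set.toFinite _).measure_zero μ)
      rintro x ⟨hx1, hx2⟩
      have a1 := ((mem_lam _ _ _).1 hx1).1
      have a2 := ((mem_lam _ _ _).1 hx2).2 i hij
      by_contra hne
      simp only [mem_insert_iff, mem_singleton_iff, not_or] at hne
      exact a2 ⟨lt_of_le_of_ne a1.1 (Ne.symm hne.1), lt_of_le_of_ne a1.2 hne.2⟩
    intro i hi j hj hij
    have e1 := lamN_eq θ ⟨i, hi⟩
    have e2 := lamN_eq θ ⟨j, hj⟩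
    simp only at e1 e2
    rw [e1, e2]
    rcases lt_or_gt_of_ne hij with h | h
    · exact key _ _ h
    · rw [inter_comm]; exact key _ _ h

theorem mom_zero {n : ℕ} (S : Fin n → Set ℝ) (i : Fin n) :
    mom μ S (i, 0) = (μ (S i)).toReal := by
  simp [mom, Measure.real]

theorem mom_one {n : ℕ} (S : Fin n → Set ℝ) (i : Fin n) :
    mom μ S (i, 1) = ∫ x in S i, x ∂μ := by
  simp [mom]

theorem obey_iff [IsProbabilityMeasure μ] (n : ℕ) (γ : ℕ → ℝ) (B : ℕ → Set ℝ) :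
    IsObedient μ n γ B ↔ ∀ i : Fin n,
      γ i * mom μ (fun i : Fin n => B i) (i, 0) ≤ mom μ (fun i : Fin n => B i) (i, 1) ∧
      mom μ (fun i : Fin n => B i) (i, 1) ≤ γ (i+1) * mom μ (fun i : Fin n => B i) (i, 0) := by
  simp only [mom_zero, mom_one]
  have key : ∀ i, (μ (B i) ≠ 0 → condMean μ (B i) ∈ Icc (γ i) (γ (i+1))) ↔
      (γ i * (μ (B i)).toReal ≤ ∫ x in B i, x ∂μ ∧
        ∫ x in B i, x ∂μ ≤ γ (i+1) * (μ (B i)).toReal) := by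
    intro i
    by_cases h : μ (B i) = 0
    · have : ∫ x in B i, x ∂μ = 0 := by rw [Measure.restrict_eq_zero.2 h]; simp
      simp [h, this]
    · have hp : 0 < (μ (B i)).toReal := ENNReal.toReal_pos h (measure_ne_top _ _)
      simp only [ne_eq, h, not_false_eq_true, forall_const, condMean, mem_Icc]
      rw [le_div_iff₀ hp, div_le_iff₀ hp]
  constructor
  · intro h i
    exact (key i).1 (h i i.2)
  · intro h i hi
    exact (key i).2 (h ⟨i, hi⟩)

theorem payoff_eq (n : ℕ) (v : ℕ → ℝ) (B : ℕ → Set ℝ) :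
    payoff μ n v B = ∑ i : Fin n, v i * mom μ (fun i : Fin n => B i) (i, 0) := by
  simp only [mom_zero]
  rw [payoff, Finset.sum_range]

/-- full disclosure is obedient and incentive compatible -/
theorem full_rep [IsProbabilityMeasure μ] [NullSingletonClass μ] (hμ : ∀ᵐ x ∂μ, x ∈ Icc (0:ℝ) 1)
    {n : ℕ} {γ : ℕ → ℝ} (hn : 0 < n)
    (h0 : γ 0 = 0) (h1 : γ n = 1) (hγ : ∀ i < n, γ i < γ (i+1)) :
    let B : ℕ → Set ℝ := fun i => Icc (γ i) (γ (i+1))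
    IsDetRep μ n B ∧ IsObedient μ n γ B ∧ IsIC n γ B := by
  intro B
  have hsub : ∀ i < n, B i ⊆ Icc (0:ℝ) 1 := by
    intro i hi
    rw [← h0, ← h1]
    exact Icc_subset_Icc (gamma_mono hγ (Nat.zero_le i) hi.le) (gamma_mono hγ hi le_rfl)
  refine ⟨⟨fun i hi => ⟨isClosed_Icc, hsub i hi⟩, ?_, ?_⟩, ?_, ?_⟩
  · apply Subset.antisymm
    · intro x hx
      simp only [mem_iUnion, Finset.mem_range, exists_prop] at hx
      obtain ⟨i, hi, hx⟩ := hx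
      exact hsub i hi hx
    · intro x hx
      obtain ⟨j, hj, hxj⟩ := cell_exists hn h0 h1 hx
      simp only [mem_iUnion, Finset.mem_range, exists_prop]
      exact ⟨j, hj, hxj⟩
  · have key : ∀ i j, i < j → j < n → μ (B i ∩ B j) = 0 := by
      intro i j hij hj
      refine measure_mono_null (t := {γ j}) ?_ (measure_singleton _)
      rintro x ⟨hx1, hx2⟩
      have := gamma_mono hγ (show i + 1 ≤ j from hij) hj.le
      exact le_antisymm (hx1.2.trans this) hx2.1
    intro i hi j hj hij
    rcases lt_or_gt_of_ne hij with h | h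
    · exact key _ _ h hj
    · rw [inter_comm]; exact key _ _ h hi
  · rw [obey_iff]
    intro i
    simp only [mom_zero, mom_one]
    have hx : Integrable (fun x : ℝ => x) μ := by simpa using aux_integrable hμ 1
    have hc : ∀ c : ℝ, c * (μ (B i)).toReal = ∫ x in B i, c ∂μ := by
      intro c; simp [Measure.real, mul_comm]
    rw [hc, hc]
    constructor
    · exact setIntegral_mono_on (integrable_const _).integrableOn hx.integrableOn
        measurableSet_Icc fun x hx => hx.1
    · exact setIntegral_mono_on hx.integrableOn (integrable_const _).integrableOn
        measurableSet_Icc fun x hx => hx.2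
  · intro i hi x hx
    simp only [mem_iUnion, Finset.mem_Ico, exists_prop]
    exact ⟨i, ⟨le_rfl, hi⟩, hx⟩

theorem main_abs [IsProbabilityMeasure μ] [NullSingletonClass μ] (hμ : ∀ᵐ x ∂μ, x ∈ Icc (0:ℝ) 1)
    {n : ℕ} {γ : ℕ → ℝ} (hn : 0 < n)
    (h0 : γ 0 = 0) (h1 : γ n = 1) (hγ : ∀ i < n, γ i < γ (i+1)) (v : ℕ → ℝ) :
    ∃ B : ℕ → Set ℝ, IsDetRep μ n B ∧ IsObedient μ n γ B ∧ IsIC n γ B ∧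
      ∀ B' : ℕ → Set ℝ, IsDetRep μ n B' → IsObedient μ n γ B' → IsIC n γ B' →
        payoff μ n v B' ≤ payoff μ n v B := by
  set g : Fin n → ℝ := fun i => γ (i+1) with hg
  have hg1 : ∀ i : Fin n, (i:ℕ) + 1 = n → g i = 1 := fun i hi => by simp only [hg]; rw [hi, h1]
  have hgm : Monotone g := fun i j hij =>
    gamma_mono hγ (Nat.succ_le_succ (show (i:ℕ) ≤ j from hij)) j.2
  have hg0 : ∀ i, 0 < g i := fun i => by
    have := gamma_mono hγ (Nat.zero_le i) i.2.le
    rw [h0] at this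
    exact this.trans_lt (hγ i i.2)
  have hgc : ∀ x ∈ Icc (0:ℝ) 1, ∃ i, x ≤ g i := fun x hx => by
    obtain ⟨j, hj, hxj⟩ := cell_exists hn h0 h1 hx
    exact ⟨⟨j, hj⟩, hxj.2⟩
  have hlam : ∀ θ : Fin n → ℝ × ℝ, (fun i : Fin n => lamN θ i) = lam θ := fun θ =>
    funext fun i => lamN_eq θ i
  have hmatch : ∀ B' : ℕ → Set ℝ, IsDetRep μ n B' → IsIC n γ B' →
      ∃ θ ∈ Par g, ∀ k, mom μ (lam θ) k = mom μ (fun i : Fin n => B' i) k := fun B' hB hI =>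
    lam_match hμ g hgm hg0 hg1 hgc _ (rep_feas hμ hn h0 h1 hγ B' hB hI)
  set K : Set (Fin n → ℝ × ℝ) := Par g ∩ {θ | ∀ i : Fin n,
      γ i * mom μ (lam θ) (i, 0) ≤ mom μ (lam θ) (i, 1) ∧
      mom μ (lam θ) (i, 1) ≤ γ (i+1) * mom μ (lam θ) (i, 0)} with hK
  have hcont := fun k => lam_cont (n := n) hμ k
  have hKc : IsCompact K := by
    refine (Par_compact g).inter_right ?_
    have : {θ : Fin n → ℝ × ℝ | ∀ i : Fin n,
      γ i * mom μ (lam θ) (i, 0) ≤ mom μ (lam θ) (i, 1) ∧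
      mom μ (lam θ) (i, 1) ≤ γ (i+1) * mom μ (lam θ) (i, 0)} = ⋂ i : Fin n,
      ({θ | γ i * mom μ (lam θ) (i, 0) ≤ mom μ (lam θ) (i, 1)} ∩
        {θ | mom μ (lam θ) (i, 1) ≤ γ (i+1) * mom μ (lam θ) (i, 0)}) := by
      ext θ; simp
    rw [this]
    exact isClosed_iInter fun i => (isClosed_le (continuous_const.mul (hcont _)) (hcont _)).inter
      (isClosed_le (hcont _) (continuous_const.mul (hcont _)))
  have hin : ∀ B' : ℕ → Set ℝ, IsDetRep μ n B' → IsObedient μ n γ B' → IsIC n γ B' →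
      ∃ θ ∈ K, ∀ k, mom μ (lam θ) k = mom μ (fun i : Fin n => B' i) k := by
    intro B' hB hO hI
    obtain ⟨θ, hθ, he⟩ := hmatch B' hB hI
    refine ⟨θ, ⟨hθ, fun i => ?_⟩, he⟩
    rw [he, he]
    exact (obey_iff n γ B').1 hO i
  obtain ⟨f1, f2, f3⟩ := full_rep hμ hn h0 h1 hγ
  obtain ⟨θ0, hθ0, -⟩ := hin _ f1 f2 f3
  have hpc : Continuous fun θ : Fin n → ℝ × ℝ => ∑ i : Fin n, v i * mom μ (lam θ) (i, 0) := by
    fun_prop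
  obtain ⟨θ, hθ, hmax⟩ := hKc.exists_isMaxOn ⟨θ0, hθ0⟩ hpc.continuousOn
  refine ⟨lamN θ, lamN_rep hn h0 h1 hγ hθ.1, ?_, lamN_IC hn h0 h1 hγ hθ.1, ?_⟩
  · rw [obey_iff, hlam]
    exact hθ.2
  · intro B' hB hO hI
    obtain ⟨θ', hθ', he⟩ := hin B' hB hO hI
    rw [payoff_eq, payoff_eq, hlam]
    have : ∑ i : Fin n, v i * mom μ (lam θ') (i, 0) ≤ ∑ i : Fin n, v i * mom μ (lam θ) (i, 0) :=
      hmax hθ'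
    simpa only [he] using this

end aux

/-- the supremum of Sender's ex ante payoff over obedient and IC
deterministic representations is attained. -/
theorem optimal_representation_exists
    (f : ℝ → ℝ) (hf : IsPrior f)
    (n : ℕ) (hn : 2 ≤ n)
    (γ : ℕ → ℝ) (hγ0 : γ 0 = 0) (hγn : γ n = 1)
    (hγ : ∀ i < n, γ i < γ (i+1))
    (v : ℕ → ℝ) (hv0 : v 0 = 0) (hv : ∀ i, i + 1 < n → v i < v (i+1)) :
    ∃ B : ℕ → Set ℝ, IsDetRep (densMeasure f) n B ∧
      IsObedient (densMeasure f) n γ B ∧ IsIC n γ B ∧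
      ∀ B' : ℕ → Set ℝ, IsDetRep (densMeasure f) n B' →
        IsObedient (densMeasure f) n γ B' → IsIC n γ B' →
        payoff (densMeasure f) n v B' ≤ payoff (densMeasure f) n v B := by
  have hp : IsProbabilityMeasure (densMeasure f) := ⟨hf.prob⟩
  have hac : densMeasure f ≪ volume.restrict (Icc (0:ℝ) 1) := withDensity_absolutelyContinuous _ _
  have hns : NullSingletonClass (densMeasure f) :=
    ⟨fun x => hac (by simp)⟩
  have hμ : ∀ᵐ x ∂(densMeasure f), x ∈ Icc (0:ℝ) 1 :=
    hac.ae_le (ae_restrict_mem measurableSet_Icc)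
  exact main_abs hμ (by omega) hγ0 hγn hγ v

end VerifiableDisclosure
end
end
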